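/- Fix even t ≥ 2. If G is a planar graph of maximum degree d ≥ 4 and girth at least 6(t² + t − 2), then χ_t(G) ≤ τ_t(d), where τ_t(d) = (d(d-1)^{t/2} − 2)/(d−2). -/

import Mathlib

open SimpleGraph

/-- `H` is a minor of `G`. -/
def IsMinorOf {W V : Type*} (H : SimpleGraph W) (G : SimpleGraph V) : Prop :=
  ∃ f : V → Option W,
    (∀ w : W, ∃ v, f v = some w) ∧
    (∀ w : W, (G.induce {v | f v = some w}).Connected) ∧
    (∀ w₁ w₂ : W, H.Adj w₁ w₂ →
      ∃ v₁ v₂, f v₁ = some w₁ ∧ f v₂ = some w₂ ∧ G.Adj v₁ v₂)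

/-- Planarity, via Wagner's theorem: no `K₅` minor and no `K_{3,3}` minor. -/
def IsPlanar {V : Type*} (G : SimpleGraph V) : Prop :=
  ¬ IsMinorOf (completeGraph (Fin 5)) G ∧
  ¬ IsMinorOf (completeBipartiteGraph (Fin 3) (Fin 3)) G

/-- A distance-`t` vertex-colouring with `n` colours. -/
def DistVertexColorable {V : Type*} (G : SimpleGraph V) (t n : ℕ) : Prop :=
  ∃ c : V → Fin n, ∀ u v : V, u ≠ v → G.edist u v ≤ (t : ℕ∞) → c u ≠ c v

/-- `τ_t(d)` for even `t`. -/
def taueven (t d : ℕ) : ℕ := (d * (d - 1) ^ (t / 2) - 2) / (d - 2)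

open SimpleGraph

/-- Connected vertex sets, in closure form. -/
def SC {V : Type*} (G : SimpleGraph V) (S : Set V) : Prop :=
  S.Nonempty ∧ ∀ T : Set V, T ⊆ S → T.Nonempty →
    (∀ u ∈ T, ∀ v ∈ S, G.Adj u v → v ∈ T) → S ⊆ T

/-- Two sets joined by an edge. -/
def Touch {V : Type*} (G : SimpleGraph V) (A B : Set V) : Prop :=
  ∃ a ∈ A, ∃ b ∈ B, G.Adj a b

namespace SCx
variable {V : Type*} {G : SimpleGraph V}

lemma Touch.symm {A B : Set V} (h : Touch G A B) : Touch G B A := by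
  obtain ⟨a, ha, b, hb, hab⟩ := h
  exact ⟨b, hb, a, ha, hab.symm⟩

lemma sc_iff (S : Set V) : SC G S ↔ (G.induce S).Connected := by
  constructor
  · rintro ⟨⟨u, hu⟩, h⟩
    have key : S ⊆ {v | ∃ hv : v ∈ S, (G.induce S).Reachable ⟨u, hu⟩ ⟨v, hv⟩} := by
      apply h
      · rintro v ⟨hv, -⟩; exact hv
      · exact ⟨u, hu, Reachable.refl _⟩
      · rintro a ⟨ha, hr⟩ b hb hab
        refine ⟨hb, hr.trans (Adj.reachable ?_)⟩
        simpa using hab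
    haveI : Nonempty S := ⟨⟨u, hu⟩⟩
    refine Connected.mk ?_
    rintro ⟨a, ha⟩ ⟨b, hb⟩
    obtain ⟨_, h1⟩ := key ha
    obtain ⟨_, h2⟩ := key hb
    exact h1.symm.trans h2
  · intro h
    obtain ⟨⟨u, hu⟩⟩ := h.nonempty
    refine ⟨⟨u, hu⟩, ?_⟩
    rintro T hTS ⟨a, ha⟩ hT b hb
    have hr := h.preconnected ⟨a, hTS ha⟩ ⟨b, hb⟩
    obtain ⟨p⟩ := hr
    have : ∀ (x y : S), (G.induce S).Walk x y → x.1 ∈ T → y.1 ∈ T := by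
      intro x y p
      induction p with
      | nil => exact id
      | cons hadj _ ih =>
        intro hx
        exact ih (hT _ hx _ (Subtype.property _) (by simpa using hadj))
    exact this _ _ p ha

lemma sc_singleton (v : V) : SC G {v} := by
  refine ⟨⟨v, rfl⟩, ?_⟩
  rintro T hT ⟨a, ha⟩ - b hb
  have := hT ha
  simp only [Set.mem_singleton_iff] at this hb
  subst this; subst hb; exact ha

lemma sc_union {A B : Set V} (hA : SC G A) (hB : SC G B) (h : Touch G A B) : SC G (A ∪ B) := by
  obtain ⟨a, ha, b, hb, hab⟩ := h
  refine ⟨⟨a, Or.inl ha⟩, ?_⟩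
  intro T hT hne hcl
  have hAT : (∃ x ∈ T, x ∈ A) → A ⊆ T := by
    rintro ⟨x, hx, hxA⟩ y hy
    have := hA.2 (T ∩ A) Set.inter_subset_right ⟨x, hx, hxA⟩
      (fun u hu v hv huv => ⟨hcl u hu.1 v (Or.inl hv) huv, hv⟩)
    exact (this hy).1
  have hBT : (∃ x ∈ T, x ∈ B) → B ⊆ T := by
    rintro ⟨x, hx, hxA⟩ y hy
    have := hB.2 (T ∩ B) Set.inter_subset_right ⟨x, hx, hxA⟩
      (fun u hu v hv huv => ⟨hcl u hu.1 v (Or.inr hv) huv, hv⟩)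
    exact (this hy).1
  obtain ⟨x, hx⟩ := hne
  rcases hT hx with hxA | hxB
  · have h1 := hAT ⟨x, hx, hxA⟩
    have h2 := hBT ⟨b, hcl a (h1 ha) b (Or.inr hb) hab, hb⟩
    exact Set.union_subset h1 h2
  · have h2 := hBT ⟨x, hx, hxB⟩
    have h1 := hAT ⟨a, hcl b (h2 hb) a (Or.inl ha) hab.symm, ha⟩
    exact Set.union_subset h1 h2

lemma sc_insert {A : Set V} (hA : SC G A) {v a : V} (ha : a ∈ A) (h : G.Adj a v) :
    SC G (insert v A) := by
  rw [Set.insert_eq]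
  exact sc_union (sc_singleton v) hA ⟨v, rfl, a, ha, h.symm⟩

/-- Components of a set. -/
lemma exists_comp (T : Set V) (w : V) (hw : w ∈ T) :
    ∃ C ⊆ T, w ∈ C ∧ SC G C ∧ ∀ u ∈ C, ∀ v ∈ T, G.Adj u v → v ∈ C := by
  let P : Set (Set V) := {C | C ⊆ T ∧ w ∈ C ∧ ∀ u ∈ C, ∀ v ∈ T, G.Adj u v → v ∈ C}
  have hTP : T ∈ P := ⟨le_rfl, hw, fun _ _ v hv _ => hv⟩
  have hsub : ⋂₀ P ⊆ T := Set.sInter_subset_of_mem hTP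
  have hwm : w ∈ ⋂₀ P := fun C hC => hC.2.1
  have hcl : ∀ u ∈ ⋂₀ P, ∀ v ∈ T, G.Adj u v → v ∈ ⋂₀ P :=
    fun u hu v hv huv C hC => hC.2.2 u (hu C hC) v hv huv
  refine ⟨⋂₀ P, hsub, hwm, ⟨⟨w, hwm⟩, ?_⟩, hcl⟩
  intro T' hT' hne hcl'
  by_cases hwT : w ∈ T'
  · apply Set.sInter_subset_of_mem
    exact ⟨hT'.trans hsub, hwT, fun u hu v hv huv =>
      hcl' u hu v (hcl u (hT' hu) v hv huv) huv⟩
  · exfalso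
    have : (⋂₀ P \ T') ∈ P := by
      refine ⟨Set.diff_subset.trans hsub, ⟨hwm, hwT⟩, ?_⟩
      intro u hu v hv huv
      refine ⟨hcl u hu.1 v hv huv, fun hvT => hu.2 ?_⟩
      exact hcl' v hvT u hu.1 huv.symm
    obtain ⟨x, hx⟩ := hne
    exact (hT' hx _ this).2 hx

/-- Consecutive segments of a walk-like sequence are connected. -/
lemma sc_seg (p : ℕ → V) (a b : ℕ) (hab : a ≤ b)
    (h : ∀ i, a ≤ i → i < b → G.Adj (p i) (p (i + 1))) :
    SC G (p '' {i | a ≤ i ∧ i ≤ b}) := by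
  induction b, hab using Nat.le_induction with
  | base =>
    have : p '' {i | a ≤ i ∧ i ≤ a} = {p a} := by
      ext x; constructor
      · rintro ⟨i, ⟨h1, h2⟩, rfl⟩
        have : i = a := le_antisymm h2 h1
        simp [this]
      · rintro rfl; exact ⟨a, ⟨le_rfl, le_rfl⟩, rfl⟩
    rw [this]; exact sc_singleton _
  | succ b hab ih =>
    have : p '' {i | a ≤ i ∧ i ≤ b + 1} = insert (p (b + 1)) (p '' {i | a ≤ i ∧ i ≤ b}) := by
      ext x; constructor
      · rintro ⟨i, ⟨h1, h2⟩, rfl⟩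
        rcases Nat.lt_or_ge b i with h3 | h3
        · left; congr 1; omega
        · right; exact ⟨i, ⟨h1, h3⟩, rfl⟩
      · rintro (rfl | ⟨i, ⟨h1, h2⟩, rfl⟩)
        · exact ⟨b + 1, ⟨by omega, le_rfl⟩, rfl⟩
        · exact ⟨i, ⟨h1, by omega⟩, rfl⟩
    rw [this]
    exact sc_insert (ih (fun i h1 h2 => h i h1 (by omega))) (a := p b)
      ⟨b, ⟨hab, le_rfl⟩, rfl⟩ (h b hab (by omega))

/-- Building minors from a family of disjoint connected sets. -/
lemma minor_of {W : Type*} (H : SimpleGraph W) (S : W → Set V)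
    (hS : ∀ w, SC G (S w)) (hd : ∀ w w', w ≠ w' → Disjoint (S w) (S w'))
    (ha : ∀ w w', H.Adj w w' → Touch G (S w) (S w')) : IsMinorOf H G := by
  classical
  let f : V → Option W := fun v => if h : ∃ w, v ∈ S w then some h.choose else none
  have hf : ∀ v w, f v = some w ↔ v ∈ S w := by
    intro v w
    by_cases h : ∃ w, v ∈ S w
    · have h1 : f v = some h.choose := dif_pos h
      rw [h1]
      constructor
      · intro h2
        have := h.choose_spec
        rw [Option.some.inj h2] at this
        exact this
      · intro h2
        congr 1
        by_contra hne
        exact Set.disjoint_left.1 (hd _ _ hne) h.choose_spec h2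
    · have h1 : f v = none := dif_neg h
      rw [h1]
      constructor
      · intro h2; cases h2
      · intro h2; exact absurd ⟨w, h2⟩ h
  refine ⟨f, ?_, ?_, ?_⟩
  · intro w
    obtain ⟨v, hv⟩ := (hS w).1
    exact ⟨v, (hf v w).2 hv⟩
  · intro w
    have : {v | f v = some w} = S w := by ext v; exact hf v w
    rw [this]
    exact (sc_iff _).1 (hS w)
  · intro w w' hww
    obtain ⟨a, ha, b, hb, hab⟩ := ha w w' hww
    exact ⟨a, b, (hf _ _).2 ha, (hf _ _).2 hb, hab⟩

lemma k33 (hP : IsPlanar G) (A B : Fin 3 → Set V)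
    (hA : ∀ i, SC G (A i)) (hB : ∀ i, SC G (B i))
    (dA : ∀ i j, i < j → Disjoint (A i) (A j)) (dB : ∀ i j, i < j → Disjoint (B i) (B j))
    (dAB : ∀ i j, Disjoint (A i) (B j)) (t : ∀ i j, Touch G (A i) (B j)) : False := by
  apply hP.2
  apply minor_of _ (Sum.elim A B)
  · rintro (i | i)
    · exact hA i
    · exact hB i
  · rintro (i | i) (j | j) hij
    · have : i ≠ j := fun h => hij (by rw [h])
      rcases lt_or_gt_of_ne this with h | h
      · exact dA _ _ h
      · exact (dA _ _ h).symm
    · exact dAB i j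
    · exact (dAB j i).symm
    · have : i ≠ j := fun h => hij (by rw [h])
      rcases lt_or_gt_of_ne this with h | h
      · exact dB _ _ h
      · exact (dB _ _ h).symm
  · rintro (i | i) (j | j) hij
    · simp at hij
    · exact t i j
    · exact Touch.symm (t j i)
    · simp at hij

lemma k5 (hP : IsPlanar G) (A : Fin 5 → Set V)
    (hA : ∀ i, SC G (A i))
    (dA : ∀ i j, i < j → Disjoint (A i) (A j)) 
    (t : ∀ i j, i < j → Touch G (A i) (A j)) : False := by
  apply hP.1
  apply minor_of _ A hA
  · intro i j hij
    rcases lt_or_gt_of_ne hij with h | h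
    · exact dA _ _ h
    · exact (dA _ _ h).symm
  · intro i j hij
    rcases lt_or_gt_of_ne hij.ne with h | h
    · exact t _ _ h
    · exact Touch.symm (t _ _ h)

/-- Replacing an edge by a connected set. -/
lemma minor_virtual {W : Type*} (H : SimpleGraph W) (hH : ∀ w, ∃ w', H.Adj w w')
    {G' : SimpleGraph V} (x y : V) (Q : Set V) (hQ : SC G Q)
    (hx : Touch G Q {x}) (hy : Touch G Q {y})
    (hiso : ∀ q ∈ Q, ∀ v, ¬ G'.Adj q v)
    (hadj : ∀ u v, G'.Adj u v → G.Adj u v ∨ (u = x ∧ v = y) ∨ (u = y ∧ v = x))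
    (hm : IsMinorOf H G') : IsMinorOf H G := by
  classical
  obtain ⟨q₁, hq₁, x', hx', hqx⟩ := hx
  obtain ⟨q₂, hq₂, y', hy', hqy⟩ := hy
  simp only [Set.mem_singleton_iff] at hx' hy'
  subst hx' hy'
  obtain ⟨f, f1, f2, f3⟩ := hm
  have hsc : ∀ w, SC G' {v | f v = some w} := fun w => (sc_iff _).2 (f2 w)
  have hQn : ∀ q ∈ Q, f q = none := by
    intro q hq
    by_contra hne
    obtain ⟨w, hw⟩ := Option.ne_none_iff_exists'.1 hne
    obtain ⟨w', hww⟩ := hH w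
    obtain ⟨a, b, ha, hb, hab⟩ := f3 w w' hww
    have := (hsc w).2 {q} (by simpa using hw) ⟨q, rfl⟩ (by
      rintro u hu v hv huv
      rw [Set.mem_singleton_iff] at hu; subst hu
      exact absurd huv (hiso u hq v))
    have haq := this ha
    rw [Set.mem_singleton_iff] at haq; subst haq
    exact hiso a hq b hab
  have hxQ : x' ∉ Q ∨ f x' = none := by
    by_cases h : x' ∈ Q
    · exact Or.inr (hQn _ h)
    · exact Or.inl h
  let S : W → Set V := fun w => {v | f v = some w} ∪ (if f x' = some w then Q else ∅)
  have hSQ : ∀ w, f x' = some w → S w = {v | f v = some w} ∪ Q := by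
    intro w h; simp [S, h]
  have hSn : ∀ w, f x' ≠ some w → S w = {v | f v = some w} := by
    intro w h; simp [S, h]
  apply minor_of H S
  · intro w
    by_cases hw : f x' = some w
    · rw [hSQ w hw]
      obtain ⟨v0, hv0⟩ := f1 w
      refine ⟨⟨v0, Or.inl hv0⟩, ?_⟩
      intro T hT hne hcl
      have hQT : (∃ q ∈ Q, q ∈ T) → Q ⊆ T := by
        rintro ⟨q, hq, hqT⟩ z hz
        exact (hQ.2 (T ∩ Q) Set.inter_subset_right ⟨q, hqT, hq⟩
          (fun u hu v hv huv => ⟨hcl u hu.1 v (Or.inr hv) huv, hv⟩) hz).1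
      have hxT : x' ∈ T → Q ⊆ T := fun h => hQT ⟨q₁, hq₁, hcl x' h q₁ (Or.inr hq₁) hqx.symm⟩
      have hTx : Q ⊆ T → x' ∈ T := fun h => hcl q₁ (h hq₁) x' (Or.inl hw) hqx
      have hne' : (T ∩ {v | f v = some w}).Nonempty := by
        obtain ⟨z, hz⟩ := hne
        rcases hT hz with h | h
        · exact ⟨z, hz, h⟩
        · exact ⟨x', hTx (hQT ⟨z, h, hz⟩), hw⟩
      have hsub := (hsc w).2 (T ∩ {v | f v = some w}) Set.inter_subset_right hne' (by
        intro u hu v hv huv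
        refine ⟨?_, hv⟩
        rcases hadj u v huv with h | ⟨h1, h2⟩ | ⟨h1, h2⟩
        · exact hcl u hu.1 v (Or.inl hv) h
        · subst h1 h2
          exact hcl q₂ (hxT hu.1 hq₂) _ (Or.inl hv) hqy
        · subst h1 h2
          exact hTx (hQT ⟨q₂, hq₂, hcl _ hu.1 q₂ (Or.inr hq₂) hqy.symm⟩))
      have h1 : {v | f v = some w} ⊆ T := fun z hz => (hsub hz).1
      exact Set.union_subset h1 (hxT (h1 hw))
    · rw [hSn w hw]
      refine ⟨(hsc w).1, ?_⟩
      intro T hT hne hcl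
      apply (hsc w).2 T hT hne
      intro u hu v hv huv
      rcases hadj u v huv with h | ⟨h1, h2⟩ | ⟨h1, h2⟩
      · exact hcl u hu v hv h
      · subst h1; exact absurd (hT hu) hw
      · subst h2; exact absurd hv hw
  · intro w w' hww
    rw [Set.disjoint_left]
    intro z hz hz'
    have a1 : z ∈ S w → f z = some w ∨ (z ∈ Q ∧ f x' = some w) := by
      intro h
      by_cases hw : f x' = some w
      · rw [hSQ w hw] at h; rcases h with h | h
        · exact Or.inl h
        · exact Or.inr ⟨h, hw⟩
      · rw [hSn w hw] at h; exact Or.inl h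
    have a2 : z ∈ S w' → f z = some w' ∨ (z ∈ Q ∧ f x' = some w') := by
      intro h
      by_cases hw : f x' = some w'
      · rw [hSQ w' hw] at h; rcases h with h | h
        · exact Or.inl h
        · exact Or.inr ⟨h, hw⟩
      · rw [hSn w' hw] at h; exact Or.inl h
    rcases a1 hz with h | ⟨h, h'⟩ <;> rcases a2 hz' with k | ⟨k, k'⟩
    · exact hww (Option.some.inj (h.symm.trans k))
    · rw [hQn z k] at h; cases h
    · rw [hQn z h] at k; cases k
    · exact hww (Option.some.inj (h'.symm.trans k'))
  · intro w w' hww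
    have hsub : ∀ w, {v | f v = some w} ⊆ S w := fun w => Set.subset_union_left
    obtain ⟨a, b, ha, hb, hab⟩ := f3 w w' hww
    rcases hadj a b hab with h | ⟨h1, h2⟩ | ⟨h1, h2⟩
    · exact ⟨a, hsub w ha, b, hsub w' hb, h⟩
    · subst h1 h2
      refine ⟨q₂, ?_, _, hsub w' hb, hqy⟩
      rw [hSQ w ha]; exact Or.inr hq₂
    · subst h1 h2
      refine ⟨_, hsub w ha, q₂, ?_, hqy.symm⟩
      rw [hSQ w' hb]; exact Or.inr hq₂

lemma planar_virtual {G' : SimpleGraph V} (x y : V) (Q : Set V) (hQ : SC G Q)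
    (hx : Touch G Q {x}) (hy : Touch G Q {y})
    (hiso : ∀ q ∈ Q, ∀ v, ¬ G'.Adj q v)
    (hadj : ∀ u v, G'.Adj u v → G.Adj u v ∨ (u = x ∧ v = y) ∨ (u = y ∧ v = x))
    (hP : IsPlanar G) : IsPlanar G' := by
  refine ⟨fun h => hP.1 (minor_virtual _ ?_ x y Q hQ hx hy hiso hadj h),
    fun h => hP.2 (minor_virtual _ ?_ x y Q hQ hx hy hiso hadj h)⟩
  · intro w; exact ⟨w + 1, by fin_cases w <;> simp⟩
  · rintro (w | w)
    · exact ⟨Sum.inr 0, by simp⟩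
    · exact ⟨Sum.inl 0, by simp⟩

lemma sc_mono {G' : SimpleGraph V} (h : G' ≤ G) {S : Set V} (hS : SC G' S) : SC G S :=
  ⟨hS.1, fun T hT hne hcl => hS.2 T hT hne (fun u hu v hv huv => hcl u hu v hv (h huv))⟩

lemma planar_mono {G' : SimpleGraph V} (h : G' ≤ G) (hP : IsPlanar G) : IsPlanar G' := by
  have key : ∀ {W : Type} (H : SimpleGraph W), IsMinorOf H G' → IsMinorOf H G := by
    rintro W H ⟨f, f1, f2, f3⟩
    refine ⟨f, f1, fun w => (sc_iff _).1 (sc_mono h ((sc_iff _).2 (f2 w))), ?_⟩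
    intro w w' hw
    obtain ⟨a, b, ha, hb, hab⟩ := f3 w w' hw
    exact ⟨a, b, ha, hb, h hab⟩
  exact ⟨fun h => hP.1 (key _ h), fun h => hP.2 (key _ h)⟩

end SCx

open SimpleGraph

/-- `G` lives on `W` and is 3-connected there. -/
structure TC {V : Type*} (G : SimpleGraph V) (W : Set V) : Prop where
  sub : ∀ u v, G.Adj u v → u ∈ W
  sep : ∀ X ⊆ W, X.Nonempty → (∃ y ∈ W, y ∉ X ∧ ∀ x ∈ X, ¬ G.Adj x y) →
    ∀ s t : V, ∃ n ∈ W, n ∉ X ∧ n ≠ s ∧ n ≠ t ∧ ∃ x ∈ X, G.Adj x n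
  deg : ∀ v ∈ W, ∀ s t : V, ∃ n, G.Adj v n ∧ n ≠ s ∧ n ≠ t

/-- Balanced sets for a signing. -/
def Bal {V : Type*} (G : SimpleGraph V) (φ : Sym2 V → ZMod 2) (M : Set V) : Prop :=
  ∃ f : V → ZMod 2, ∀ u ∈ M, ∀ v ∈ M, G.Adj u v → φ s(u, v) = f u + f v

/-- Induced cycle with enumeration. -/
structure ICyc {V : Type*} (G : SimpleGraph V) (U : Set V) (N : ℕ) (c : ℕ → V) : Prop where
  three : 3 ≤ N
  wrap : c N = c 0
  inj : ∀ i j, i < j → j < N → c i ≠ c j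
  mem : ∀ v, v ∈ U ↔ ∃ i < N, c i = v
  adj : ∀ i j, i < j → j < N → (G.Adj (c i) (c j) ↔ (j = i + 1 ∨ (i = 0 ∧ j + 1 = N)))

/-- Peripheral cycles. -/
def Per {V : Type*} (G : SimpleGraph V) (W U : Set V) : Prop :=
  U ⊆ W ∧ (∃ N c, ICyc G U N c) ∧ SC G (W \ U)

namespace SCx
variable {V : Type*} {G : SimpleGraph V}

lemma Bal.mono {φ : Sym2 V → ZMod 2} {M M' : Set V} (h : M' ⊆ M) (hM : Bal G φ M) : Bal G φ M' := by
  obtain ⟨f, hf⟩ := hM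
  exact ⟨f, fun u hu v hv => hf u (h hu) v (h hv)⟩

lemma z2 (a b : ZMod 2) (h : a + b = 0) : a = b := by
  revert a b; decide

/-- a function locally constant on a connected set is constant -/
lemma sc_const {α : Type*} {S : Set V} (hS : SC G S) (h : V → α)
    (hl : ∀ u ∈ S, ∀ v ∈ S, G.Adj u v → h u = h v) (x y : V) (hx : x ∈ S) (hy : y ∈ S) :
    h x = h y := by
  have := hS.2 {z | z ∈ S ∧ h x = h z} (fun z hz => hz.1) ⟨x, hx, rfl⟩
    (fun u hu v hv huv => ⟨hv, hu.2.trans (hl u hu.1 v hv huv)⟩)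
  exact (this hy).2

lemma bal_norm {φ : Sym2 V → ZMod 2} {M : Set V} (hM : Bal G φ M) (x : V) :
    ∃ f : V → ZMod 2, f x = 0 ∧ ∀ u ∈ M, ∀ v ∈ M, G.Adj u v → φ s(u, v) = f u + f v := by
  obtain ⟨f, hf⟩ := hM
  refine ⟨fun v => f v + f x, ?_, ?_⟩
  · have : ∀ a : ZMod 2, a + a = 0 := by decide
    exact this _
  · intro u hu v hv huv
    rw [hf u hu v hv huv]
    show _ = (f u + f x) + (f v + f x)
    generalize f u = a; generalize f v = b; generalize f x = c
    revert a b c; decide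

lemma glue {φ : Sym2 V → ZMod 2} {M X : Set V} (hX : SC G X) (hXM : X ⊆ M)
    {a b c : V} (ha : a ∈ M) (hb : b ∈ M) (hc : c ∈ M) (haX : a ∉ X) (hbX : b ∉ X) (hcX : c ∉ X)
    (hab : a ≠ b) (hac : a ≠ c) (hbc : b ≠ c)
    (na : ∃ x ∈ X, G.Adj x a) (nb : ∃ x ∈ X, G.Adj x b) (nc : ∃ x ∈ X, G.Adj x c)
    (Ba : Bal G φ (M \ {a})) (Bb : Bal G φ (M \ {b})) (Bc : Bal G φ (M \ {c})) : Bal G φ M := by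
  classical
  obtain ⟨x0, hx0⟩ := hX.1
  obtain ⟨fa, fa0, hfa⟩ := bal_norm Ba x0
  obtain ⟨fb, fb0, hfb⟩ := bal_norm Bb x0
  obtain ⟨fc, fc0, hfc⟩ := bal_norm Bc x0
  have agree : ∀ (p q r : V) (f g : V → ZMod 2), p ∉ X → q ∉ X → r ∈ M → r ≠ p → r ≠ q →
      f x0 = 0 → g x0 = 0 → 
      (∀ u ∈ M \ {p}, ∀ v ∈ M \ {p}, G.Adj u v → φ s(u, v) = f u + f v) →
      (∀ u ∈ M \ {q}, ∀ v ∈ M \ {q}, G.Adj u v → φ s(u, v) = g u + g v) →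
      (∃ x ∈ X, G.Adj x r) → (∀ x ∈ X, f x = g x) ∧ f r = g r := by
    intro p q r f g hp hq hr hrp hrq f0 g0 hf hg ⟨x, hx, hxr⟩
    have h1 : ∀ x ∈ X, f x = g x := by
      intro x hx
      have := sc_const hX (fun v => f v + g v) (by
        intro u hu v hv huv
        have e1 := hf u ⟨hXM hu, fun h => hp (h ▸ hu)⟩ v ⟨hXM hv, fun h => hp (h ▸ hv)⟩ huv
        have e2 := hg u ⟨hXM hu, fun h => hq (h ▸ hu)⟩ v ⟨hXM hv, fun h => hq (h ▸ hv)⟩ huv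
        rw [e1] at e2
        revert e2
        show _ → f u + g u = f v + g v
        generalize f u = a; generalize f v = b; generalize g u = c; generalize g v = d
        revert a b c d; decide) x x0 hx hx0
      simp only [f0, g0, add_zero] at this
      exact z2 _ _ this
    refine ⟨h1, ?_⟩
    have e1 := hf x ⟨hXM hx, fun h => hp (h ▸ hx)⟩ r ⟨hr, hrp⟩ hxr
    have e2 := hg x ⟨hXM hx, fun h => hq (h ▸ hx)⟩ r ⟨hr, hrq⟩ hxr
    rw [e1, h1 x hx] at e2
    exact add_left_cancel e2
  have hac' := (agree a b c fa fb haX hbX hc hac.symm hbc.symm fa0 fb0 hfa hfb nc).2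
  have hbb := (agree a c b fa fc haX hcX hb hab.symm hbc fa0 fc0 hfa hfc nb).2
  have haa := (agree b c a fb fc hbX hcX ha hab hac fb0 fc0 hfb hfc na).2
  let P : Set V := {w | w ∈ M ∧ w ≠ a ∧ w ≠ b ∧ fa w ≠ fb w}
  have hP : ∀ u ∈ P, ∀ v ∈ M, G.Adj u v → v ≠ a → v ≠ b → v ∈ P := by
    rintro u ⟨h1, h2, h3, h4⟩ v hv huv hva hvb
    refine ⟨hv, hva, hvb, fun h => h4 ?_⟩
    have e1 := hfa u ⟨h1, h2⟩ v ⟨hv, hva⟩ huv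
    have e2 := hfb u ⟨h1, h3⟩ v ⟨hv, hvb⟩ huv
    rw [e1, h] at e2
    exact add_right_cancel e2
  have hcP : c ∉ P := fun h => h.2.2.2 hac'
  let g : V → ZMod 2 := fun w => if w ∈ P then fc w else if w = a then fb a else fa w
  have gP : ∀ w, w ∈ P → g w = fc w := fun w h => by simp [g, h]
  have ga : g a = fb a := by
    have : a ∉ P := fun h => h.2.1 rfl
    simp [g, this]
  have gn : ∀ w, w ∉ P → w ≠ a → g w = fa w := fun w h h' => by simp [g, h, h']
  have gb : g b = fc b := by
    rw [gn b (fun h => h.2.2.1 rfl) hab.symm, hbb]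
  have wlog1 : ∀ u ∈ M, ∀ v ∈ M, G.Adj u v → u ∈ P → φ s(u, v) = g u + g v := by
    intro u hu v hv huv huP
    have huc : u ≠ c := fun h => hcP (h ▸ huP)
    rw [gP u huP]
    by_cases hva : v = a
    · subst hva; rw [ga, haa]; exact hfc u ⟨hu, huc⟩ v ⟨hv, hac⟩ huv
    by_cases hvb : v = b
    · subst hvb; rw [gb]; exact hfc u ⟨hu, huc⟩ v ⟨hv, hbc⟩ huv
    have hvP := hP u huP v hv huv hva hvb
    rw [gP v hvP]
    exact hfc u ⟨hu, huc⟩ v ⟨hv, fun h => hcP (h ▸ hvP)⟩ huv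
  have wlog2 : ∀ v ∈ M, G.Adj a v → v ∉ P → φ s(a, v) = g a + g v := by
    intro v hv huv hvP
    by_cases hvb : v = b
    · subst hvb; rw [ga, gb, haa]; exact hfc a ⟨ha, hac⟩ v ⟨hv, hbc⟩ huv
    have : fa v = fb v := by
      by_contra h; exact hvP ⟨hv, huv.ne.symm, hvb, h⟩
    rw [ga, gn v hvP huv.ne.symm, this]
    exact hfb a ⟨ha, hab⟩ v ⟨hv, hvb⟩ huv
  refine ⟨g, ?_⟩
  intro u hu v hv huv
  by_cases huP : u ∈ P
  · exact wlog1 u hu v hv huv huP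
  by_cases hvP : v ∈ P
  · rw [Sym2.eq_swap, add_comm]; exact wlog1 v hv u hu huv.symm hvP
  by_cases hua : u = a
  · subst hua; exact wlog2 v hv huv hvP
  by_cases hva : v = a
  · subst hva; rw [Sym2.eq_swap, add_comm]; exact wlog2 u hu huv.symm huP
  rw [gn u huP hua, gn v hvP hva]
  exact hfa u ⟨hu, hua⟩ v ⟨hv, hva⟩ huv

/-- In an unbalanced set whose one-vertex-deleted set is balanced there is an induced
unbalanced cycle. -/
lemma odd_cycle [Finite V] {φ : Sym2 V → ZMod 2} {M : Set V} {a : V} (haM : a ∈ M)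
    (hM : ¬ Bal G φ M) (hMa : Bal G φ (M \ {a})) :
    ∃ U ⊆ M, ∃ N c, ICyc G U N c ∧ ¬ Bal G φ U := by
  classical
  obtain ⟨f, hf⟩ := hMa
  let Q : ℕ → (ℕ → V) → Prop := fun L p =>
    (∀ i ≤ L, p i ∈ M \ {a}) ∧ (∀ i < L, G.Adj (p i) (p (i + 1))) ∧
    G.Adj a (p 0) ∧ G.Adj a (p L) ∧ f (p 0) + φ s(a, p 0) ≠ f (p L) + φ s(a, p L)
  have hex : ∃ L p, Q L p := by
    by_contra hno
    apply hM
    let R : V → V → Prop := fun w w' => ∃ (L : ℕ) (p : ℕ → V), p 0 = w ∧ p L = w' ∧ (∀ i ≤ L, p i ∈ M \ {a}) ∧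
      (∀ i < L, G.Adj (p i) (p (i + 1)))
    have Rrefl : ∀ w ∈ M \ {a}, R w w := fun w hw =>
      ⟨0, fun _ => w, rfl, rfl, fun _ _ => hw, fun i hi => absurd hi (by omega)⟩
    have Rsymm : ∀ w w', R w w' → R w' w := by
      rintro w w' ⟨L, p, rfl, rfl, h1, h2⟩
      refine ⟨L, fun i => p (L - i), by simp, by simp, fun i hi => h1 _ (by omega), ?_⟩
      intro i hi
      have := h2 (L - (i + 1)) (by omega)
      have e : L - (i + 1) + 1 = L - i := by omega
      rw [e] at this
      exact this.symm
    have Rtrans : ∀ w w' w'', R w w' → R w' w'' → R w w'' := by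
      rintro w w' w'' ⟨L, p, rfl, rfl, h1, h2⟩ ⟨L', p', h0, rfl, h1', h2'⟩
      refine ⟨L + L', fun i => if i ≤ L then p i else p' (i - L), by simp, ?_, ?_, ?_⟩
      · by_cases h : L' = 0
        · subst h; simp [h0]
        · have : ¬ (L + L' ≤ L) := by omega
          simp [h]
      · intro i hi
        by_cases h : i ≤ L
        · simp only [h, if_true]; exact h1 i h
        · simp only [h, if_false]; exact h1' _ (by omega)
      · intro i hi
        by_cases h : i + 1 ≤ L
        · have : i ≤ L := by omega
          simp only [h, this, if_true]; exact h2 i (by omega)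
        · simp only [h, if_false]
          by_cases h' : i ≤ L
          · have e : i = L := by omega
            subst e
            simp only [le_refl, if_true]
            rw [← h0]
            have := h2' 0 (by omega)
            simpa using this
          · simp only [h', if_false]
            have := h2' (i - L) (by omega)
            have e : i + 1 - L = i - L + 1 := by omega
            rw [e]; exact this
    have Radj : ∀ u v, u ∈ M \ {a} → v ∈ M \ {a} → G.Adj u v → R u v := by
      intro u v hu hv huv
      refine ⟨1, fun i => if i = 0 then u else v, by simp, by simp, ?_, ?_⟩
      · intro i hi; by_cases h : i = 0 <;> simp only [h, if_true, if_false] <;> assumption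
      · intro i hi
        have : i = 0 := by omega
        subst this; simpa using huv
    let g : V → ZMod 2 := fun w => if w = a then 0 else
      if h : ∃ z, G.Adj a z ∧ R w z then f w + f h.choose + φ s(a, h.choose) else f w
    have key : ∀ w ∈ M \ {a}, ∀ z, G.Adj a z → R w z → g w = f w + f z + φ s(a, z) := by
      intro w hw z hz hR
      have hwa : w ≠ a := hw.2
      have h : ∃ z, G.Adj a z ∧ R w z := ⟨z, hz, hR⟩
      have e : g w = f w + f h.choose + φ s(a, h.choose) := by
        simp only [g, hwa, if_false, dif_pos h]
      rw [e]
      obtain ⟨h1, h2⟩ := h.choose_spec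
      obtain ⟨L, p, hp0, hpL, h3, h4⟩ := Rtrans _ _ _ (Rsymm _ _ hR) h2
      by_contra hne
      apply hno
      refine ⟨L, p, h3, h4, by rw [hp0]; exact hz, by rw [hpL]; exact h1, ?_⟩
      rw [hp0, hpL]
      intro h'
      apply hne
      rw [add_assoc, ← h', add_assoc]
    have ga : g a = 0 := by simp [g]
    have w1 : ∀ v ∈ M, G.Adj a v → φ s(a, v) = g a + g v := by
      intro v hv hav
      have hv' : v ∈ M \ {a} := ⟨hv, hav.ne.symm⟩
      rw [ga, key v hv' v hav (Rrefl v hv')]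
      generalize f v = x; generalize φ s(a, v) = y
      revert x y; decide
    refine ⟨g, fun u hu v hv huv => ?_⟩
    by_cases hua : u = a
    · subst hua; exact w1 v hv huv
    by_cases hva : v = a
    · subst hva; rw [Sym2.eq_swap, add_comm]; exact w1 u hu huv.symm
    have hu' : u ∈ M \ {a} := ⟨hu, hua⟩
    have hv' : v ∈ M \ {a} := ⟨hv, hva⟩
    rw [hf u hu' v hv' huv]
    by_cases h : ∃ z, G.Adj a z ∧ R u z
    · obtain ⟨z, hz, hR⟩ := h
      rw [key u hu' z hz hR, key v hv' z hz (Rtrans _ _ _ (Rsymm _ _ (Radj u v hu' hv' huv)) hR)]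
      generalize f u = x; generalize f v = y; generalize f z = z'; generalize φ s(a, z) = t
      revert x y z' t; decide
    · have h' : ¬ ∃ z, G.Adj a z ∧ R v z := by
        rintro ⟨z, hz, hR⟩
        exact h ⟨z, hz, Rtrans _ _ _ (Radj u v hu' hv' huv) hR⟩
      simp only [g, hua, hva, if_false, dif_neg h, dif_neg h']
  have hmin := Nat.find_spec hex
  obtain ⟨p, hp⟩ := hmin
  set L := Nat.find hex with hL
  have hlt : ∀ L' < L, ∀ p, ¬ Q L' p := fun L' h p hq => Nat.find_min hex h ⟨p, hq⟩
  obtain ⟨q1, q2, q3, q4, q5⟩ := hp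
  have hL1 : 1 ≤ L := by
    by_contra h
    have : L = 0 := by omega
    rw [this] at q5; exact q5 rfl
  have short : ∀ i j, i < j → j ≤ L → (p i = p j ∨ (i + 1 < j ∧ G.Adj (p i) (p j))) → False := by
    intro i j hij hjL hc
    rcases hc with h | ⟨h, hA⟩
    · skip
      refine hlt (L - (j - i)) (by omega) (fun s => if s ≤ i then p s else p (s + (j - i))) ?_
      have e0 : (if 0 ≤ i then p 0 else p (0 + (j - i))) = p 0 := by simp
      have eL : (if L - (j - i) ≤ i then p (L - (j - i)) else p (L - (j - i) + (j - i))) = p L := by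
        split_ifs with h'
        · have : j = L := by omega
          have h3 : L - (j - i) = i := by omega
          rw [h3, h, this]
        · congr 1; omega
      refine ⟨?_, ?_, ?_, ?_, ?_⟩
      · intro s hs; dsimp only; split_ifs
        · exact q1 s (by omega)
        · exact q1 _ (by omega)
      · intro s hs; dsimp only
        by_cases h1 : s + 1 ≤ i
        · have : s ≤ i := by omega
          simp only [h1, this, if_true]; exact q2 s (by omega)
        · by_cases h2 : s ≤ i
          · have : s = i := by omega
            subst this
            simp only [h1, le_refl, if_true, if_false]
            rw [h]
            have e : s + 1 + (j - s) = j + 1 := by omega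
            rw [e]; exact q2 j (by omega)
          · simp only [h1, h2, if_false]
            have e : s + 1 + (j - i) = s + (j - i) + 1 := by omega
            rw [e]; exact q2 _ (by omega)
      · simp only [e0]; exact q3
      · simp only [eL]; exact q4
      · simp only [e0, eL]; exact q5
    · refine hlt (L - (j - i - 1)) (by omega) (fun s => if s ≤ i then p s else p (s + (j - i - 1))) ?_
      have e0 : (if 0 ≤ i then p 0 else p (0 + (j - i - 1))) = p 0 := by simp
      have eL : (if L - (j - i - 1) ≤ i then p (L - (j - i - 1))
          else p (L - (j - i - 1) + (j - i - 1))) = p L := by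
        split_ifs with h'
        · exfalso; omega
        · congr 1; omega
      refine ⟨?_, ?_, ?_, ?_, ?_⟩
      · intro s hs; dsimp only; split_ifs
        · exact q1 s (by omega)
        · exact q1 _ (by omega)
      · intro s hs; dsimp only
        by_cases h1 : s + 1 ≤ i
        · have : s ≤ i := by omega
          simp only [h1, this, if_true]; exact q2 s (by omega)
        · by_cases h2 : s ≤ i
          · have : s = i := by omega
            subst this
            simp only [h1, le_refl, if_true, if_false]
            have e : s + 1 + (j - s - 1) = j := by omega
            rw [e]; exact hA
          · simp only [h1, h2, if_false]
            have e : s + 1 + (j - i - 1) = s + (j - i - 1) + 1 := by omega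
            rw [e]; exact q2 _ (by omega)
      · simp only [e0]; exact q3
      · simp only [eL]; exact q4
      · simp only [e0, eL]; exact q5
  have noa : ∀ i, 0 < i → i < L → ¬ G.Adj a (p i) := by
    intro i hi hiL hA
    by_cases h : f (p 0) + φ s(a, p 0) = f (p i) + φ s(a, p i)
    · refine hlt (L - i) (by omega) (fun s => p (s + i)) ⟨fun s hs => q1 _ (by omega), ?_, ?_, ?_, ?_⟩
      · intro s hs
        have e : s + 1 + i = s + i + 1 := by omega
        simp only [e]; exact q2 _ (by omega)
      · simpa using hA
      · have e : L - i + i = L := by omega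
        simp only [e]; exact q4
      · have e : L - i + i = L := by omega
        simp only [e, zero_add]; rw [← h]; exact q5
    · exact hlt i hiL p ⟨fun s hs => q1 _ (by omega), fun s hs => q2 _ (by omega), q3, hA, h⟩
  let c : ℕ → V := fun i => if i = 0 ∨ i = L + 2 then a else p (i - 1)
  have c0 : c 0 = a := by simp [c]
  have cs : ∀ i, i ≤ L → c (i + 1) = p i := by
    intro i hi
    have : ¬ (i + 1 = 0 ∨ i + 1 = L + 2) := by omega
    simp only [c, this, if_false]; congr 1
  refine ⟨{v | ∃ i < L + 2, c i = v}, ?_, L + 2, c, ⟨by omega, ?_, ?_, fun v => Iff.rfl, ?_⟩, ?_⟩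
  · rintro v ⟨i, hi, rfl⟩
    rcases i with _ | i
    · rw [c0]; exact haM
    · rw [cs i (by omega)]; exact (q1 i (by omega)).1
  · simp [c]
  · intro i j hij hj
    obtain ⟨j, rfl⟩ : ∃ j', j = j' + 1 := ⟨j - 1, by omega⟩
    rw [cs j (by omega)]
    rcases i with _ | i
    · rw [c0]; exact fun h => (q1 j (by omega)).2 h.symm
    · rw [cs i (by omega)]; exact fun h => short i j (by omega) (by omega) (Or.inl h)
  · intro i j hij hj
    obtain ⟨j, rfl⟩ : ∃ j', j = j' + 1 := ⟨j - 1, by omega⟩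
    rw [cs j (by omega)]
    rcases i with _ | i
    · rw [c0]
      constructor
      · intro hA
        by_contra h
        exact noa j (by omega) (by omega) hA
      · rintro (h | ⟨-, h⟩)
        · have : j = 0 := by omega
          rw [this]; exact q3
        · have : j = L := by omega
          rw [this]; exact q4
    · rw [cs i (by omega)]
      constructor
      · intro hA
        by_contra h
        exact short i j (by omega) (by omega) (Or.inr ⟨by omega, hA⟩)
      · rintro (h | ⟨h, -⟩)
        · have : j = i + 1 := by omega
          rw [this]; exact q2 i (by omega)
        · omega
  · rintro ⟨g, hg⟩
    apply q5
    have mp : ∀ i ≤ L, p i ∈ {v | ∃ i < L + 2, c i = v} := fun i hi => ⟨i + 1, by omega, cs i hi⟩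
    have ma : a ∈ {v | ∃ i < L + 2, c i = v} := ⟨0, by omega, c0⟩
    have hconst : ∀ i ≤ L, g (p 0) + f (p 0) = g (p i) + f (p i) := by
      intro i
      induction i with
      | zero => intro _; rfl
      | succ i ih =>
        intro hi
        rw [ih (by omega)]
        have e1 := hg _ (mp i (by omega)) _ (mp (i + 1) hi) (q2 i (by omega))
        have e2 := hf _ (q1 i (by omega)) _ (q1 (i + 1) hi) (q2 i (by omega))
        rw [e1] at e2
        revert e2
        generalize g (p i) = x; generalize g (p (i+1)) = y; generalize f (p i) = z
        generalize f (p (i+1)) = t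
        revert x y z t; decide
    have e := hconst L le_rfl
    rw [hg _ ma _ (mp 0 (by omega)) q3, hg _ ma _ (mp L le_rfl) q4]
    revert e
    generalize g (p 0) = x; generalize g (p L) = y; generalize f (p 0) = z
    generalize f (p L) = t; generalize g a = s
    revert x y z t s; decide

/-- E1: an unbalanced signing is detected by a peripheral cycle. -/
theorem exists_per [Finite V] {W : Set V} (h : TC G W) {φ : Sym2 V → ZMod 2} (hW : ¬ Bal G φ W) :
    ∃ U, Per G W U ∧ ¬ Bal G φ U := by
  classical
  have hne : ∀ M : Set V, ¬ Bal G φ M → M.Nonempty := by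
    intro M hM
    by_contra h
    rw [Set.not_nonempty_iff_eq_empty] at h
    subst h
    exact hM ⟨fun _ => 0, fun u hu => absurd hu (Set.notMem_empty u)⟩
  have h0 : ∃ v ∈ W, ¬ Bal G φ (W \ {v}) := by
    by_contra hno
    push Not at hno
    obtain ⟨v, hv⟩ := hne W hW
    obtain ⟨a, ha, -, -⟩ := h.deg v hv v v
    obtain ⟨b, hb, hba, -⟩ := h.deg v hv a a
    obtain ⟨c, hc, hca, hcb⟩ := h.deg v hv a b
    have m : ∀ x, G.Adj v x → x ∈ W := fun x hx => h.sub _ _ hx.symm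
    have nX : ∀ x, G.Adj v x → x ∉ ({v} : Set V) := fun x hx h => hx.ne (Set.mem_singleton_iff.1 h).symm
    exact hW (glue (sc_singleton v) (Set.singleton_subset_iff.2 hv) (m a ha) (m b hb) (m c hc)
      (nX a ha) (nX b hb) (nX c hc) hba.symm hca.symm hcb.symm ⟨v, rfl, ha⟩ ⟨v, rfl, hb⟩ ⟨v, rfl, hc⟩
      (hno a (m a ha)) (hno b (m b hb)) (hno c (m c hc)))
  obtain ⟨v, hv, hvb⟩ := h0
  obtain ⟨D, ⟨hD1, hD2, hD3⟩, hDmax⟩ := Set.exists_max_image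
    {D : Set V | SC G D ∧ D ⊆ W ∧ ¬ Bal G φ (W \ D)} Set.ncard (Set.toFinite _)
    ⟨{v}, sc_singleton v, Set.singleton_subset_iff.2 hv, hvb⟩
  have hbal : ∀ a ∈ W \ D, (∃ x ∈ D, G.Adj x a) → Bal G φ ((W \ D) \ {a}) := by
    rintro a ⟨haW, haD⟩ ⟨x, hx, hxa⟩
    by_contra hb
    have e : (W \ D) \ {a} = W \ insert a D := by
      ext z; simp only [Set.mem_sdiff, Set.mem_insert_iff, Set.mem_singleton_iff]; tauto
    rw [e] at hb
    have := hDmax (insert a D) ⟨sc_insert hD1 hx hxa, Set.insert_subset haW hD2, hb⟩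
    rw [Set.ncard_insert_of_notMem haD (Set.toFinite _)] at this
    omega
  have hall : ∀ w ∈ W \ D, ∃ x ∈ D, G.Adj x w := by
    intro w hw
    by_contra hwN
    obtain ⟨X, hX1, hX2, hX3, hX4⟩ := exists_comp (G := G) {z | z ∈ W \ D ∧ ¬ ∃ x ∈ D, G.Adj x z} w ⟨hw, hwN⟩
    obtain ⟨y, hy⟩ := hD1.1
    have hXW : X ⊆ W := fun z hz => (hX1 hz).1.1
    have hyX : ∃ y ∈ W, y ∉ X ∧ ∀ x ∈ X, ¬ G.Adj x y :=
      ⟨y, hD2 hy, fun h => (hX1 h).1.2 hy, fun x hx hxy => (hX1 hx).2 ⟨y, hy, hxy.symm⟩⟩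
    have key : ∀ n ∈ W, n ∉ X → (∃ x ∈ X, G.Adj x n) → n ∈ W \ D ∧ ∃ x ∈ D, G.Adj x n := by
      rintro n hn hnX ⟨x, hx, hxn⟩
      have hnD : n ∉ D := fun h => (hX1 hx).2 ⟨n, h, hxn.symm⟩
      refine ⟨⟨hn, hnD⟩, ?_⟩
      by_contra hno
      exact hnX (hX4 x hx n ⟨⟨hn, hnD⟩, hno⟩ hxn)
    obtain ⟨a, ha1, ha2, -, -, ha⟩ := h.sep X hXW ⟨w, hX2⟩ hyX w w
    obtain ⟨b, hb1, hb2, hba, -, hb⟩ := h.sep X hXW ⟨w, hX2⟩ hyX a a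
    obtain ⟨c, hc1, hc2, hca, hcb, hc⟩ := h.sep X hXW ⟨w, hX2⟩ hyX a b
    obtain ⟨ka, ka'⟩ := key a ha1 ha2 ha
    obtain ⟨kb, kb'⟩ := key b hb1 hb2 hb
    obtain ⟨kc, kc'⟩ := key c hc1 hc2 hc
    exact hD3 (glue hX3 (fun z hz => (hX1 hz).1) ka kb kc ha2 hb2 hc2 hba.symm hca.symm hcb.symm
      ha hb hc (hbal a ka ka') (hbal b kb kb') (hbal c kc kc'))
  obtain ⟨a, ha⟩ := hne _ hD3
  obtain ⟨U, hU, N, c, hc, hUb⟩ := odd_cycle ha hD3 (hbal a ha (hall a ha))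
  have hUe : U = W \ D := by
    apply Set.Subset.antisymm hU
    intro b hb
    by_contra hbU
    refine hUb (Bal.mono ?_ (hbal b hb (hall b hb)))
    intro z hz
    exact ⟨hU hz, fun h => hbU (by rw [Set.mem_singleton_iff] at h; exact h ▸ hz)⟩
  refine ⟨U, ⟨fun z hz => (hU hz).1, ⟨N, c, hc⟩, ?_⟩, hUb⟩
  have : W \ U = D := by
    rw [hUe]; ext z
    simp only [Set.mem_sdiff]
    constructor
    · rintro ⟨h1, h2⟩; by_contra h3; exact h2 ⟨h1, h3⟩
    · intro hz; exact ⟨hD2 hz, fun h => h.2 hz⟩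
  rw [this]; exact hD1

end SCx

open SimpleGraph

namespace SCx
variable {V : Type*} {G : SimpleGraph V}

lemma _root_.ICyc.rot {U : Set V} {N : ℕ} {c : ℕ → V} (h : ICyc G U N c) :
    ICyc G U N (fun i => if i = 0 then c (N - 1) else c (i - 1)) := by
  obtain ⟨h3, hw, hi, hm, ha⟩ := h
  refine ⟨h3, ?_, ?_, ?_, ?_⟩
  · have : N ≠ 0 := by omega
    simp [this]
  · intro i j hij hj
    have hj0 : j ≠ 0 := by omega
    by_cases h0 : i = 0
    · simp only [h0, hj0, if_true, if_false]
      exact (hi (j - 1) (N - 1) (by omega) (by omega)).symm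
    · simp only [h0, hj0, if_false]
      exact hi (i - 1) (j - 1) (by omega) (by omega)
  · intro v
    rw [hm]
    constructor
    · rintro ⟨i, hi, rfl⟩
      by_cases h : i = N - 1
      · exact ⟨0, by omega, by simp [h]⟩
      · exact ⟨i + 1, by omega, by simp⟩
    · rintro ⟨i, hi, rfl⟩
      by_cases h : i = 0
      · exact ⟨N - 1, by omega, by simp [h]⟩
      · exact ⟨i - 1, by omega, by simp [h]⟩
  · intro i j hij hj
    have hj0 : j ≠ 0 := by omega
    by_cases h0 : i = 0
    · simp only [h0, hj0, if_true, if_false]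
      rw [G.adj_comm, ha (j - 1) (N - 1) (by omega) (by omega)]
      constructor <;> rintro (h | ⟨h, h'⟩) <;>
        first | (exfalso; omega) | (left; omega) | (right; constructor <;> first | trivial | omega)
    · simp only [h0, hj0, if_false]
      rw [ha (i - 1) (j - 1) (by omega) (by omega)]
      constructor <;> rintro (h | ⟨h, h'⟩) <;>
        first | (exfalso; omega) | (left; omega) | (right; constructor <;> first | trivial | omega)

lemma _root_.ICyc.refl {U : Set V} {N : ℕ} {c : ℕ → V} (h : ICyc G U N c) :
    ICyc G U N (fun i => c (N - i)) := by
  obtain ⟨h3, hw, hi, hm, ha⟩ := h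
  refine ⟨h3, ?_, ?_, ?_, ?_⟩
  · simp [hw]
  · intro i j hij hj
    by_cases h0 : i = 0
    · subst h0; simp only [Nat.sub_zero, hw]
      exact hi 0 (N - j) (by omega) (by omega)
    · exact (hi (N - j) (N - i) (by omega) (by omega)).symm
  · intro v
    rw [hm]
    constructor
    · rintro ⟨i, hi, rfl⟩
      by_cases h : i = 0
      · exact ⟨0, by omega, by simp [h, hw]⟩
      · exact ⟨N - i, by omega, by congr 1; omega⟩
    · rintro ⟨i, hi, rfl⟩
      by_cases h : i = 0
      · exact ⟨0, by omega, by simp [h, hw]⟩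
      · exact ⟨N - i, by omega, rfl⟩
  · intro i j hij hj
    by_cases h0 : i = 0
    · subst h0; simp only [Nat.sub_zero, hw]
      rw [ha 0 (N - j) (by omega) (by omega)]
      constructor <;> rintro (h | ⟨h, h'⟩) <;>
        first | (exfalso; omega) | (left; omega) | (right; constructor <;> first | trivial | omega)
    · rw [G.adj_comm, ha (N - j) (N - i) (by omega) (by omega)]
      constructor <;> rintro (h | ⟨h, h'⟩) <;>
        first | (exfalso; omega) | (left; omega) | (right; constructor <;> first | trivial | omega)

lemma _root_.ICyc.start {U : Set V} {N : ℕ} {x : V} (hx : x ∈ U) :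
    ∀ {c : ℕ → V}, ICyc G U N c → ∃ c', ICyc G U N c' ∧ c' 0 = x := by
  have key : ∀ m, ∀ c : ℕ → V, ICyc G U N c → ∀ i < N, N - i = m → c i = x →
      ∃ c', ICyc G U N c' ∧ c' 0 = x := by
    intro m
    induction m with
    | zero => intro c _ i hi h; omega
    | succ m ih =>
      intro c hc i hi hm hcx
      by_cases h : i = N - 1
      · exact ⟨_, hc.rot, by simp [← h, hcx]⟩
      · exact ih _ hc.rot (i + 1) (by omega) (by omega) (by simpa using hcx)
  intro c hc
  obtain ⟨i, hi, hcx⟩ := (hc.mem x).1 hx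
  exact key _ c hc i hi rfl hcx

lemma _root_.ICyc.start2 {U : Set V} {N : ℕ} {x y : V} (hx : x ∈ U) (hy : y ∈ U) (hxy : G.Adj x y)
    {c : ℕ → V} (hc : ICyc G U N c) : ∃ c', ICyc G U N c' ∧ c' 0 = x ∧ c' 1 = y := by
  obtain ⟨c, hc, h0⟩ := ICyc.start hx hc
  obtain ⟨j, hj, hcj⟩ := (hc.mem y).1 hy
  have hj0 : j ≠ 0 := by
    rintro rfl; rw [h0] at hcj; exact hxy.ne hcj
  have := (hc.adj 0 j (by omega) hj).1 (by rw [h0, hcj]; exact hxy)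
  rcases this with h | ⟨-, h⟩
  · subst h; exact ⟨c, hc, h0, hcj⟩
  · refine ⟨_, hc.refl, ?_, ?_⟩
    · simp [hc.wrap, h0]
    · show c (N - 1) = y
      rw [← hcj]; congr 1; omega

/-- adjacency of consecutive vertices -/
lemma _root_.ICyc.step {U : Set V} {N : ℕ} {c : ℕ → V} (h : ICyc G U N c) (i : ℕ) (hi : i + 1 < N) :
    G.Adj (c i) (c (i + 1)) := (h.adj i (i + 1) (by omega) hi).2 (Or.inl rfl)

lemma _root_.ICyc.last {U : Set V} {N : ℕ} {c : ℕ → V} (h : ICyc G U N c) :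
    G.Adj (c 0) (c (N - 1)) := by
  have := h.three
  exact (h.adj 0 (N - 1) (by omega) (by omega)).2 (Or.inr ⟨rfl, by omega⟩)

lemma _root_.ICyc.eq {U : Set V} {N : ℕ} {c : ℕ → V} (h : ICyc G U N c) {i j : ℕ} (hi : i < N) (hj : j < N)
    (hij : c i = c j) : i = j := by
  rcases lt_trichotomy i j with h' | h' | h'
  · exact absurd hij (h.inj i j h' hj)
  · exact h'
  · have hinj := h.inj j i h' hi
    exact absurd hij.symm hinj

/-- symmetric adjacency characterization -/
lemma _root_.ICyc.adj' {U : Set V} {N : ℕ} {c : ℕ → V} (h : ICyc G U N c) {i j : ℕ} (hi : i < N) (hj : j < N)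
    (hij : G.Adj (c i) (c j)) : j = i + 1 ∨ i = j + 1 ∨ (i = 0 ∧ j + 1 = N) ∨ (j = 0 ∧ i + 1 = N) := by
  rcases lt_trichotomy i j with h' | h' | h'
  · rcases (h.adj i j h' hj).1 hij with h | h <;> tauto
  · subst h'; exact absurd hij (G.loopless.irrefl _)
  · rcases (h.adj j i h' hi).1 hij.symm with h | h <;> tauto

lemma link {R A1 A2 T : Set V} (hR : SC G R) (hsub : R ⊆ A1 ∪ A2 ∪ T)
    (h1 : (R ∩ A1).Nonempty) (h2 : (R ∩ A2).Nonempty) (d12 : Disjoint A1 A2)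
    (_d1 : Disjoint A1 T) (d2 : Disjoint A2 T) :
    Touch G A1 A2 ∨ ∃ C ⊆ T, SC G C ∧ Touch G C A1 ∧ Touch G C A2 ∧
      ∀ u ∈ C, ∀ v ∈ T, G.Adj u v → v ∈ C := by
  by_contra hno
  push Not at hno
  obtain ⟨hno1, hno2⟩ := hno
  obtain ⟨a1, ha1R, ha1⟩ := h1
  obtain ⟨a2, ha2R, ha2⟩ := h2
  have := hR.2 {v | v ∈ R ∧ (v ∈ A1 ∨ ∃ C ⊆ T, SC G C ∧ Touch G C A1 ∧
      (∀ u ∈ C, ∀ v ∈ T, G.Adj u v → v ∈ C) ∧ v ∈ C)} (fun v hv => hv.1) ⟨a1, ha1R, Or.inl ha1⟩ ?_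
  · rcases (this ha2R).2 with h | ⟨C, hC, -, -, -, h⟩
    · exact Set.disjoint_left.1 d12 h ha2
    · exact Set.disjoint_left.1 d2 ha2 (hC h)
  · rintro u ⟨huR, hu⟩ v hv huv
    refine ⟨hv, ?_⟩
    rcases hu with hu | ⟨C, hCT, hC, hCA, hcl, huC⟩
    · rcases hsub hv with (h | h) | h
      · exact Or.inl h
      · exact absurd ⟨u, hu, v, h, huv⟩ hno1
      · right
        obtain ⟨C, hCT, hvC, hC, hcl⟩ := exists_comp (G := G) T v h
        exact ⟨C, hCT, hC, ⟨v, hvC, u, hu, huv.symm⟩, hcl, hvC⟩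
    · rcases hsub hv with (h | h) | h
      · exact Or.inl h
      · obtain ⟨a, ha, b, hb, hab, hh⟩ := hno2 C hCT hC hCA ⟨u, huC, v, h, huv⟩
        exact absurd (hcl a ha b hb hab) hh
      · exact Or.inr ⟨C, hCT, hC, hCA, hcl, hcl u huC v h huv⟩

lemma comp_touch {R A C : Set V} (hR : SC G R) (hC : C.Nonempty) (hCR : C ⊆ R)
    (hA : ∃ a ∈ R, a ∉ C) (hcl : ∀ u ∈ C, ∀ v ∈ R, G.Adj u v → v ∈ C ∨ v ∈ A) : Touch G C A := by
  by_contra hno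
  obtain ⟨a, ha, haC⟩ := hA
  apply haC
  refine hR.2 C hCR hC ?_ ha
  intro u hu v hv huv
  rcases hcl u hu v hv huv with h | h
  · exact h
  · exact absurd ⟨u, hu, v, h, huv⟩ hno

lemma _root_.ICyc.sc_arc {U : Set V} {N : ℕ} {c : ℕ → V} (h : ICyc G U N c) (a b : ℕ) (hab : a ≤ b) (hb : b < N) :
    SC G (c '' {i | a ≤ i ∧ i ≤ b}) :=
  sc_seg c a b hab (fun i _ h2 => h.step i (by omega))

lemma _root_.ICyc.arc_disj {U : Set V} {N : ℕ} {c : ℕ → V} (h : ICyc G U N c) {a b a' b' : ℕ}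
    (hb : b < N) (hb' : b' < N) (hd : b < a') :
    Disjoint (c '' {i | a ≤ i ∧ i ≤ b}) (c '' {i | a' ≤ i ∧ i ≤ b'}) := by
  rw [Set.disjoint_left]
  rintro v ⟨i, ⟨_, hi⟩, rfl⟩ ⟨j, ⟨hj, hj'⟩, hij⟩
  have := h.eq (by omega) (by omega) hij
  omega

/-- Two peripheral cycles through an edge, aligned on a maximal common path. -/
lemma align {U1 U2 : Set V} {N1 N2 : ℕ} {x y : V} (hne : U1 ≠ U2)
    (h1 : ∃ c, ICyc G U1 N1 c) (h2 : ∃ c, ICyc G U2 N2 c) (hxy : G.Adj x y)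
    (hx1 : x ∈ U1) (hy1 : y ∈ U1) (hx2 : x ∈ U2) (hy2 : y ∈ U2) :
    ∃ p q e, ICyc G U1 N1 p ∧ ICyc G U2 N2 q ∧ 1 ≤ e ∧ e + 1 < N1 ∧ e + 1 < N2 ∧
      (∀ i ≤ e, p i = q i) ∧ p (e + 1) ∉ U2 ∧ q (e + 1) ∉ U1 ∧ p (N1 - 1) ∉ U2 ∧ q (N2 - 1) ∉ U1 ∧
      (∃ i ≤ e, p i = x) ∧ (∃ i ≤ e, p i = y) := by
  classical
  let Q : ℕ → Prop := fun e => ∃ p q, ICyc G U1 N1 p ∧ ICyc G U2 N2 q ∧ 1 ≤ e ∧ (∀ i ≤ e, p i = q i) ∧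
    e < N1 ∧ e < N2 ∧ (∃ i ≤ e, p i = x) ∧ (∃ i ≤ e, p i = y)
  obtain ⟨c1, hc1⟩ := h1
  obtain ⟨c2, hc2⟩ := h2
  have hN1 := hc1.three
  have hN2 := hc2.three
  have hQ1 : Q 1 := by
    obtain ⟨p, hp, p0, p1⟩ := hc1.start2 hx1 hy1 hxy
    obtain ⟨q, hq, q0, q1⟩ := hc2.start2 hx2 hy2 hxy
    refine ⟨p, q, hp, hq, le_rfl, ?_, by omega, by omega, ⟨0, by omega, p0⟩, ⟨1, le_rfl, p1⟩⟩
    intro i hi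
    have : i = 0 ∨ i = 1 := by omega
    rcases this with rfl | rfl
    · rw [p0, q0]
    · rw [p1, q1]
  have hbd : ∀ e, Q e → e ≤ N1 := by
    rintro e ⟨p, q, -, -, -, -, h, -⟩; omega
  set e := Nat.findGreatest Q N1 with he
  have hQe : Q e := Nat.findGreatest_spec (P := Q) (m := 1) (by omega) hQ1
  have hmax : ∀ e', Q e' → e' ≤ e := fun e' h => Nat.le_findGreatest (hbd e' h) h
  obtain ⟨p, q, hp, hq, he1, hpq, heN1, heN2, hex, hey⟩ := hQe
  have full : e + 1 < N1 ∧ e + 1 < N2 := by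
    by_contra hcon
    apply hne
    have h12 : N1 = N2 ∧ e + 1 = N1 := by
      rcases (by omega : e + 1 = N1 ∨ e + 1 = N2) with h | h
      · have := hp.last
        rw [hpq 0 (by omega), hpq (N1 - 1) (by omega)] at this
        have := hq.adj' (by omega) (by omega) this
        omega
      · have := hq.last
        rw [← hpq 0 (by omega), ← hpq (N2 - 1) (by omega)] at this
        have := hp.adj' (by omega) (by omega) this
        omega
    ext v
    rw [hp.mem, hq.mem]
    constructor
    · rintro ⟨i, hi, rfl⟩; exact ⟨i, by omega, (hpq i (by omega)).symm⟩
    · rintro ⟨i, hi, rfl⟩; exact ⟨i, by omega, (hpq i (by omega))⟩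
  have ne1 : p (e + 1) ≠ q (e + 1) := by
    intro h
    have := hmax (e + 1) ⟨p, q, hp, hq, by omega, by
      intro i hi
      rcases Nat.lt_or_ge e i with h' | h'
      · have : i = e + 1 := by omega
        rw [this, h]
      · exact hpq i h', full.1, full.2, ?_, ?_⟩
    · omega
    · obtain ⟨i, hi, h⟩ := hex; exact ⟨i, by omega, h⟩
    · obtain ⟨i, hi, h⟩ := hey; exact ⟨i, by omega, h⟩
  have ne2 : p (N1 - 1) ≠ q (N2 - 1) := by
    intro h
    have := hmax (e + 1) ⟨_, _, hp.rot, hq.rot, by omega, by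
      intro i hi
      by_cases h0 : i = 0
      · simp [h0, h]
      · simp only [h0, if_false]; exact hpq _ (by omega), full.1, full.2, ?_, ?_⟩
    · omega
    · obtain ⟨i, hi, h⟩ := hex; exact ⟨i + 1, by omega, by simpa using h⟩
    · obtain ⟨i, hi, h⟩ := hey; exact ⟨i + 1, by omega, by simpa using h⟩
  refine ⟨p, q, e, hp, hq, he1, full.1, full.2, hpq, ?_, ?_, ?_, ?_, hex, hey⟩
  · intro hm
    obtain ⟨j, hj, hqj⟩ := (hq.mem _).1 hm
    have a := hp.step e full.1
    rw [hpq e le_rfl, ← hqj] at a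
    rcases hq.adj' (by omega) hj a with h | h | h | h
    · subst h; exact ne1 hqj.symm
    · have : j = e - 1 := by omega
      rw [this, ← hpq _ (by omega)] at hqj
      have := hp.eq (by omega) (by omega) hqj
      omega
    · omega
    · omega
  · intro hm
    obtain ⟨j, hj, hqj⟩ := (hp.mem _).1 hm
    have a := hq.step e full.2
    rw [← hpq e le_rfl, ← hqj] at a
    rcases hp.adj' (by omega) hj a with h | h | h | h
    · subst h; exact ne1 hqj
    · have : j = e - 1 := by omega
      rw [this, hpq _ (by omega)] at hqj
      have := hq.eq (by omega) (by omega) hqj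
      omega
    · omega
    · omega
  · intro hm
    obtain ⟨j, hj, hqj⟩ := (hq.mem _).1 hm
    have a := hp.last
    rw [hpq 0 (by omega), ← hqj] at a
    rcases hq.adj' (by omega) hj a with h | h | h | h
    · have : j = 1 := by omega
      rw [this, ← hpq _ (by omega)] at hqj
      have := hp.eq (by omega) (by omega) hqj
      omega
    · omega
    · have : j = N2 - 1 := by omega
      subst this; exact ne2 hqj.symm
    · omega
  · intro hm
    obtain ⟨j, hj, hqj⟩ := (hp.mem _).1 hm
    have a := hq.last
    rw [← hpq 0 (by omega), ← hqj] at a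
    rcases hp.adj' (by omega) hj a with h | h | h | h
    · have : j = 1 := by omega
      rw [this, hpq _ (by omega)] at hqj
      have := hq.eq (by omega) (by omega) hqj
      omega
    · omega
    · have : j = N1 - 1 := by omega
      subst this; exact ne2 hqj
    · omega

lemma touch_of {A B : Set V} {a b : V} (h : G.Adj a b) (ha : a ∈ A) (hb : b ∈ B) : Touch G A B :=
  ⟨a, ha, b, hb, h⟩

/-- The intersection of two peripheral cycles sharing an edge is that edge. -/
theorem per_inter {W : Set V} (hT : TC G W) (hP : IsPlanar G) {U1 U2 : Set V} (h1 : Per G W U1)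
    (h2 : Per G W U2) (hne : U1 ≠ U2) {x y : V} (hxy : G.Adj x y)
    (hx1 : x ∈ U1) (hy1 : y ∈ U1) (hx2 : x ∈ U2) (hy2 : y ∈ U2) :
    ∀ v, v ∈ U1 → v ∈ U2 → v = x ∨ v = y := by
  classical
  obtain ⟨hU1W, ⟨N1, hc1⟩, hS1⟩ := h1
  obtain ⟨hU2W, ⟨N2, hc2⟩, hS2⟩ := h2
  obtain ⟨p, q, e, hp, hq, he1, heN1, heN2, hpq, p1, q1, p2, q2, hex, hey⟩ :=
    align hne hc1 hc2 hxy hx1 hy1 hx2 hy2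
  have mp : ∀ i < N1, p i ∈ U1 := fun i hi => (hp.mem _).2 ⟨i, hi, rfl⟩
  have mq : ∀ i < N2, q i ∈ U2 := fun i hi => (hq.mem _).2 ⟨i, hi, rfl⟩
  have step1 : ∀ j, e < j → j < N2 → q j ∉ U1 := by
    by_contra hcon
    push Not at hcon
    have hcon' : ∃ j, e < j ∧ j < N2 ∧ q j ∈ U1 := hcon
    obtain ⟨j, ⟨hj1, hj2, hj3⟩, hjmin⟩ : ∃ j, (e < j ∧ j < N2 ∧ q j ∈ U1) ∧
        ∀ m < j, ¬ (e < m ∧ m < N2 ∧ q m ∈ U1) :=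
      ⟨Nat.find hcon', Nat.find_spec hcon', fun m hm => Nat.find_min hcon' hm⟩
    have hj4 : e + 1 < j := by
      by_contra h
      have : j = e + 1 := by omega
      subst this; exact q1 hj3
    obtain ⟨l, hl, hpl⟩ := (hp.mem _).1 hj3
    have hl1 : e + 1 < l := by
      by_contra h
      rcases (by omega : l ≤ e ∨ l = e + 1) with h | h
      · rw [hpq l h] at hpl
        have := hq.eq (by omega) (by omega) hpl
        omega
      · subst h; rw [← hpl] at hj3; exact p1 (hpl ▸ mq j hj2)
    have hl2 : l < N1 - 1 := by
      by_contra h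
      have : l = N1 - 1 := by omega
      subst this; exact p2 (hpl ▸ mq j hj2)
    set A := p '' {i | 0 ≤ i ∧ i ≤ e} with hA
    set s := p '' {i | l ≤ i ∧ i ≤ l} with hs
    set α1 := p '' {i | e + 1 ≤ i ∧ i ≤ l - 1} with hα1
    set α2 := p '' {i | l + 1 ≤ i ∧ i ≤ N1 - 1} with hα2
    set E := q '' {i | e + 1 ≤ i ∧ i ≤ j - 1} with hE
    have hEU : ∀ v ∈ E, v ∉ U1 := by
      rintro v ⟨i, ⟨hi1, hi2⟩, rfl⟩ hv
      exact hjmin i (by omega) ⟨by omega, by omega, hv⟩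
    have subU : ∀ a b, b < N1 → p '' {i | a ≤ i ∧ i ≤ b} ⊆ U1 := by
      rintro a b hb v ⟨i, ⟨h1, h2⟩, rfl⟩; exact mp i (by omega)
    have dE : ∀ a b, b < N1 → Disjoint (p '' {i | a ≤ i ∧ i ≤ b}) E := by
      intro a b hb
      rw [Set.disjoint_left]; intro v hv hvE; exact hEU v hvE (subU a b hb hv)
    have U1cov : ∀ v ∈ U1, v ∈ A ∨ v ∈ α1 ∨ v ∈ s ∨ v ∈ α2 := by
      intro v hv
      obtain ⟨i, hi, rfl⟩ := (hp.mem v).1 hv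
      rcases (by omega : i ≤ e ∨ (e + 1 ≤ i ∧ i ≤ l - 1) ∨ i = l ∨ (l + 1 ≤ i)) with h | h | h | h
      · exact Or.inl ⟨i, ⟨by omega, h⟩, rfl⟩
      · exact Or.inr (Or.inl ⟨i, h, rfl⟩)
      · exact Or.inr (Or.inr (Or.inl ⟨i, ⟨by omega, by omega⟩, rfl⟩))
      · exact Or.inr (Or.inr (Or.inr ⟨i, ⟨h, by omega⟩, rfl⟩))
    have hEU2 : E ⊆ U2 := by rintro v ⟨i, ⟨h1, h2⟩, rfl⟩; exact mq i (by omega)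
    have hAU2 : A ⊆ U2 := by
      rintro v ⟨i, ⟨h1, h2⟩, rfl⟩; rw [hpq i h2]; exact mq i (by omega)
    have hsU2 : s ⊆ U2 := by
      rintro v ⟨i, ⟨h1, h2⟩, rfl⟩
      have : i = l := by omega
      rw [this, hpl]; exact mq j hj2
    have dT : ∀ B ⊆ U1, Disjoint B ((W \ U1) \ E) := by
      intro B hB; rw [Set.disjoint_left]; intro v hv hv'; exact hv'.1.2 (hB hv)
    have hL := link (G := G) (R := W \ U2) (A1 := α1) (A2 := α2) (T := (W \ U1) \ E) hS2 (by
        rintro v ⟨hvW, hv2⟩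
        by_cases hv1 : v ∈ U1
        · rcases U1cov v hv1 with h | h | h | h
          · exact absurd (hAU2 h) hv2
          · exact Or.inl (Or.inl h)
          · exact absurd (hsU2 h) hv2
          · exact Or.inl (Or.inr h)
        · exact Or.inr ⟨⟨hvW, hv1⟩, fun h => hv2 (hEU2 h)⟩)
      ⟨p (e + 1), ⟨hU1W (mp _ heN1), p1⟩, e + 1, ⟨le_rfl, by omega⟩, rfl⟩
      ⟨p (N1 - 1), ⟨hU1W (mp _ (by omega)), p2⟩, N1 - 1, ⟨by omega, by omega⟩, rfl⟩
      (hp.arc_disj (by omega) (by omega) (by omega))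
      (dT _ (subU _ _ (by omega))) (dT _ (subU _ _ (by omega)))
    rcases hL with ⟨a, ⟨i, ⟨hi1, hi2⟩, rfl⟩, b, ⟨i', ⟨hi1', hi2'⟩, rfl⟩, hab⟩ | ⟨C, hCT, hC, hCα1, hCα2, hcl⟩
    · have := hp.adj' (by omega) (by omega) hab
      omega
    have hCE : Touch G C E := by
      apply comp_touch hS1 hC.1 (fun v hv => (hCT hv).1)
      · exact ⟨q (e + 1), ⟨hU2W (mq _ heN2), q1⟩, fun h => (hCT h).2 ⟨e + 1, ⟨le_rfl, by omega⟩, rfl⟩⟩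
      · intro u hu v hv huv
        by_cases hvE : v ∈ E
        · exact Or.inr hvE
        · exact Or.inl (hcl u hu v ⟨hv, hvE⟩ huv)
    have dC : ∀ a b, b < N1 → Disjoint (p '' {i | a ≤ i ∧ i ≤ b}) C := by
      intro a b hb
      rw [Set.disjoint_left]; intro v hv hvC; exact (hCT hvC).1.2 (subU a b hb hv)
    have dCE : Disjoint C E := by
      rw [Set.disjoint_left]; intro v hv hvE; exact (hCT hv).2 hvE
    refine k33 hP ![A, s, C] ![α1, α2, E] ?_ ?_ ?_ ?_ ?_ ?_
    · intro i; fin_cases i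
      · exact hp.sc_arc _ _ (by omega) (by omega)
      · exact hp.sc_arc _ _ (by omega) (by omega)
      · exact hC
    · intro i; fin_cases i
      · exact hp.sc_arc _ _ (by omega) (by omega)
      · exact hp.sc_arc _ _ (by omega) (by omega)
      · exact hq.sc_arc _ _ (by omega) (by omega)
    · intro i j hij; fin_cases i <;> fin_cases j <;> first | exact absurd hij (by decide) | skip
      · exact hp.arc_disj (by omega) (by omega) (by omega)
      · exact dC _ _ (by omega)
      · exact dC _ _ (by omega)
    · intro i j hij; fin_cases i <;> fin_cases j <;> first | exact absurd hij (by decide) | skip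
      · exact hp.arc_disj (by omega) (by omega) (by omega)
      · exact dE _ _ (by omega)
      · exact dE _ _ (by omega)
    · intro i j; fin_cases i <;> fin_cases j
      · exact hp.arc_disj (by omega) (by omega) (by omega)
      · exact hp.arc_disj (by omega) (by omega) (by omega)
      · exact dE _ _ (by omega)
      · exact (hp.arc_disj (by omega) (by omega) (by omega)).symm
      · exact hp.arc_disj (by omega) (by omega) (by omega)
      · exact dE _ _ (by omega)
      · exact (dC _ _ (by omega)).symm
      · exact (dC _ _ (by omega)).symm
      · exact dCE
    · intro i j'; fin_cases i <;> fin_cases j'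
      · exact touch_of (hp.step e heN1) ⟨e, ⟨by omega, le_rfl⟩, rfl⟩ ⟨e + 1, ⟨le_rfl, by omega⟩, rfl⟩
      · exact touch_of hp.last ⟨0, ⟨by omega, by omega⟩, rfl⟩ ⟨N1 - 1, ⟨by omega, by omega⟩, rfl⟩
      · exact touch_of (hq.step e heN2) ⟨e, ⟨by omega, le_rfl⟩, hpq e le_rfl⟩ ⟨e + 1, ⟨le_rfl, by omega⟩, rfl⟩
      · have := hp.step (l - 1) (by omega)
        rw [show l - 1 + 1 = l by omega] at this
        exact touch_of this.symm ⟨l, ⟨le_rfl, le_rfl⟩, rfl⟩ ⟨l - 1, ⟨by omega, by omega⟩, rfl⟩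
      · exact touch_of (hp.step l (by omega)) ⟨l, ⟨le_rfl, le_rfl⟩, rfl⟩ ⟨l + 1, ⟨by omega, by omega⟩, rfl⟩
      · have := hq.step (j - 1) (by omega)
        rw [show j - 1 + 1 = j by omega] at this
        exact touch_of this.symm ⟨l, ⟨le_rfl, le_rfl⟩, hpl⟩ ⟨j - 1, ⟨by omega, by omega⟩, rfl⟩
      · exact hCα1
      · exact hCα2
      · exact hCE
  have inter : ∀ v, v ∈ U1 → v ∈ U2 → ∃ i ≤ e, p i = v := by
    intro v hv1 hv2
    obtain ⟨j, hj, rfl⟩ := (hq.mem v).1 hv2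
    by_cases h : j ≤ e
    · exact ⟨j, h, hpq j h⟩
    · exact absurd hv1 (step1 j (by omega) hj)
  have step2 : e = 1 := by
    by_contra hne1
    have he2 : 2 ≤ e := by omega
    obtain ⟨w, hw, hw0, hw2⟩ := hT.deg (p 1) (hU1W (mp 1 (by omega))) (p 0) (p 2)
    have hwU1 : w ∉ U1 := by
      intro h
      obtain ⟨i, hi, rfl⟩ := (hp.mem w).1 h
      rcases hp.adj' (by omega) hi hw with h | h | h | h
      · subst h; exact hw2 rfl
      · have : i = 0 := by omega
        subst this; exact hw0 rfl
      · omega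
      · omega
    have hwU2 : w ∉ U2 := by
      intro h
      obtain ⟨i, hi, rfl⟩ := (hq.mem w).1 h
      rw [hpq 1 (by omega)] at hw
      rw [hpq 0 (by omega)] at hw0
      rw [hpq 2 (by omega)] at hw2
      rcases hq.adj' (by omega) hi hw with h | h | h | h
      · subst h; exact hw2 rfl
      · have : i = 0 := by omega
        subst this; exact hw0 rfl
      · omega
      · omega
    have hwW : w ∈ W := hT.sub _ _ hw.symm
    obtain ⟨C, hCT, hwC, hC, hcl⟩ := exists_comp (G := G) (W \ (U1 ∪ U2)) w ⟨hwW, by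
      rintro (h | h)
      · exact hwU1 h
      · exact hwU2 h⟩
    set α := p '' {i | e + 1 ≤ i ∧ i ≤ N1 - 1} with hα
    set β := q '' {i | e + 1 ≤ i ∧ i ≤ N2 - 1} with hβ
    have hU1 : ∀ v ∈ U1, v ∈ U2 ∨ v ∈ α := by
      intro v hv
      obtain ⟨i, hi, rfl⟩ := (hp.mem v).1 hv
      by_cases h : i ≤ e
      · left; rw [hpq i h]; exact mq i (by omega)
      · right; exact ⟨i, ⟨by omega, by omega⟩, rfl⟩
    have hU2 : ∀ v ∈ U2, v ∈ U1 ∨ v ∈ β := by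
      intro v hv
      obtain ⟨i, hi, rfl⟩ := (hq.mem v).1 hv
      by_cases h : i ≤ e
      · left; rw [← hpq i h]; exact mp i (by omega)
      · right; exact ⟨i, ⟨by omega, by omega⟩, rfl⟩
    have hCα : Touch G C α := by
      apply comp_touch hS2 hC.1 (fun v hv => ⟨(hCT hv).1, fun h => (hCT hv).2 (Or.inr h)⟩)
      · exact ⟨p (e + 1), ⟨hU1W (mp _ heN1), p1⟩, fun h => (hCT h).2 (Or.inl (mp _ heN1))⟩
      · intro u hu v hv huv
        by_cases hv1 : v ∈ U1
        · rcases hU1 v hv1 with h | h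
          · exact absurd h hv.2
          · exact Or.inr h
        · exact Or.inl (hcl u hu v ⟨hv.1, by rintro (h | h); exacts [hv1 h, hv.2 h]⟩ huv)
    have hCβ : Touch G C β := by
      apply comp_touch hS1 hC.1 (fun v hv => ⟨(hCT hv).1, fun h => (hCT hv).2 (Or.inl h)⟩)
      · exact ⟨q (e + 1), ⟨hU2W (mq _ heN2), q1⟩, fun h => (hCT h).2 (Or.inr (mq _ heN2))⟩
      · intro u hu v hv huv
        by_cases hv1 : v ∈ U2
        · rcases hU2 v hv1 with h | h
          · exact absurd h hv.2
          · exact Or.inr h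
        · exact Or.inl (hcl u hu v ⟨hv.1, by rintro (h | h); exacts [hv.2 h, hv1 h]⟩ huv)
    have subU : ∀ a b, b < N1 → p '' {i | a ≤ i ∧ i ≤ b} ⊆ U1 := by
      rintro a b hb v ⟨i, ⟨h1, h2⟩, rfl⟩; exact mp i (by omega)
    have dC : ∀ a b, b < N1 → Disjoint (p '' {i | a ≤ i ∧ i ≤ b}) C := by
      intro a b hb
      rw [Set.disjoint_left]; intro v hv hvC; exact (hCT hvC).2 (Or.inl (subU a b hb hv))
    have dβ : ∀ a b, b < N1 → Disjoint (p '' {i | a ≤ i ∧ i ≤ b}) β := by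
      intro a b hb
      rw [Set.disjoint_left]; rintro v hv ⟨i, ⟨h1, h2⟩, rfl⟩
      exact step1 i (by omega) (by omega) (subU a b hb hv)
    have dCβ : Disjoint C β := by
      rw [Set.disjoint_left]; rintro v hv ⟨i, ⟨h1, h2⟩, rfl⟩
      exact (hCT hv).2 (Or.inr (mq i (by omega)))
    have m0 : ∀ i, p i ∈ p '' {j | i ≤ j ∧ j ≤ i} := fun i => ⟨i, ⟨le_rfl, le_rfl⟩, rfl⟩
    refine k33 hP ![p '' {i | 0 ≤ i ∧ i ≤ 0}, p '' {i | e ≤ i ∧ i ≤ e}, C]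
      ![p '' {i | 1 ≤ i ∧ i ≤ e - 1}, α, β] ?_ ?_ ?_ ?_ ?_ ?_
    · intro i; fin_cases i
      · exact hp.sc_arc _ _ (by omega) (by omega)
      · exact hp.sc_arc _ _ (by omega) (by omega)
      · exact hC
    · intro i; fin_cases i
      · exact hp.sc_arc _ _ (by omega) (by omega)
      · exact hp.sc_arc _ _ (by omega) (by omega)
      · exact hq.sc_arc _ _ (by omega) (by omega)
    · intro i j hij; fin_cases i <;> fin_cases j <;> first | exact absurd hij (by decide) | skip
      · exact hp.arc_disj (by omega) (by omega) (by omega)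
      · exact dC _ _ (by omega)
      · exact dC _ _ (by omega)
    · intro i j hij; fin_cases i <;> fin_cases j <;> first | exact absurd hij (by decide) | skip
      · exact hp.arc_disj (by omega) (by omega) (by omega)
      · exact dβ _ _ (by omega)
      · exact dβ _ _ (by omega)
    · intro i j; fin_cases i <;> fin_cases j
      · exact hp.arc_disj (by omega) (by omega) (by omega)
      · exact hp.arc_disj (by omega) (by omega) (by omega)
      · exact dβ _ _ (by omega)
      · exact (hp.arc_disj (by omega) (by omega) (by omega)).symm
      · exact hp.arc_disj (by omega) (by omega) (by omega)
      · exact dβ _ _ (by omega)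
      · exact (dC _ _ (by omega)).symm
      · exact (dC _ _ (by omega)).symm
      · exact dCβ
    · intro i j'; fin_cases i <;> fin_cases j'
      · exact touch_of (hp.step 0 (by omega)) (m0 0) ⟨1, ⟨le_rfl, by omega⟩, rfl⟩
      · exact touch_of hp.last (m0 0) ⟨N1 - 1, ⟨by omega, by omega⟩, rfl⟩
      · have := hq.last
        rw [← hpq 0 (by omega)] at this
        exact touch_of this (m0 0) ⟨N2 - 1, ⟨by omega, by omega⟩, rfl⟩
      · have := hp.step (e - 1) (by omega)
        rw [show e - 1 + 1 = e by omega] at this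
        exact touch_of this.symm (m0 e) ⟨e - 1, ⟨by omega, by omega⟩, rfl⟩
      · exact touch_of (hp.step e (by omega)) (m0 e) ⟨e + 1, ⟨by omega, by omega⟩, rfl⟩
      · have := hq.step e (by omega)
        rw [← hpq e le_rfl] at this
        exact touch_of this (m0 e) ⟨e + 1, ⟨by omega, by omega⟩, rfl⟩
      · exact touch_of hw.symm hwC ⟨1, ⟨by omega, by omega⟩, rfl⟩
      · exact hCα
      · exact hCβ
  subst step2
  intro v hv1 hv2
  obtain ⟨i, hi, rfl⟩ := inter v hv1 hv2
  obtain ⟨ix, hix, rfl⟩ := hex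
  obtain ⟨iy, hiy, rfl⟩ := hey
  have : ix ≠ iy := by rintro rfl; exact hxy.ne rfl
  rcases (by omega : i = ix ∨ i = iy) with rfl | rfl
  · exact Or.inl rfl
  · exact Or.inr rfl

lemma per_rest {W U : Set V} (h : Per G W U) {x y : V} (hxy : G.Adj x y) (hx : x ∈ U) (hy : y ∈ U) :
    SC G (U \ {x, y}) ∧ Touch G {x} (U \ {x, y}) ∧ Touch G {y} (U \ {x, y}) := by
  obtain ⟨-, ⟨N, c, hc⟩, -⟩ := h
  obtain ⟨c, hc, h0, h1⟩ := hc.start2 hx hy hxy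
  have h3 := hc.three
  have e : U \ {x, y} = c '' {i | 2 ≤ i ∧ i ≤ N - 1} := by
    ext v
    constructor
    · rintro ⟨hv, hn⟩
      obtain ⟨i, hi, rfl⟩ := (hc.mem v).1 hv
      refine ⟨i, ⟨?_, by omega⟩, rfl⟩
      by_contra h
      rcases (by omega : i = 0 ∨ i = 1) with rfl | rfl
      · exact hn (Or.inl h0)
      · exact hn (Or.inr h1)
    · rintro ⟨i, ⟨hi1, hi2⟩, rfl⟩
      refine ⟨(hc.mem _).2 ⟨i, by omega, rfl⟩, ?_⟩
      rintro (h | h)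
      · rw [← h0] at h; have := hc.eq (by omega) (by omega) h; omega
      · rw [Set.mem_singleton_iff, ← h1] at h; have := hc.eq (by omega) (by omega) h; omega
  rw [e]
  refine ⟨hc.sc_arc _ _ (by omega) (by omega), ?_, ?_⟩
  · exact touch_of hc.last h0 ⟨N - 1, ⟨by omega, le_rfl⟩, rfl⟩
  · exact touch_of (hc.step 1 (by omega)) h1 ⟨2, ⟨le_rfl, by omega⟩, rfl⟩

/-- E2: no edge lies in three peripheral cycles. -/
theorem no_three {W : Set V} (hT : TC G W) (hP : IsPlanar G) {U : Fin 3 → Set V}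
    (h : ∀ i, Per G W (U i)) (hne : ∀ i j, i ≠ j → U i ≠ U j) {x y : V} (hxy : G.Adj x y)
    (hx : ∀ i, x ∈ U i) (hy : ∀ i, y ∈ U i) : False := by
  classical
  let R : Fin 3 → Set V := fun i => U i \ {x, y}
  have hR : ∀ i, SC G (R i) := fun i => (per_rest (h i) hxy (hx i) (hy i)).1
  have hRx : ∀ i, Touch G {x} (R i) := fun i => (per_rest (h i) hxy (hx i) (hy i)).2.1
  have hRy : ∀ i, Touch G {y} (R i) := fun i => (per_rest (h i) hxy (hx i) (hy i)).2.2
  have hinter : ∀ i j, i ≠ j → ∀ v, v ∈ U i → v ∈ U j → v = x ∨ v = y := fun i j hij =>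
    per_inter hT hP (h i) (h j) (hne i j hij) hxy (hx i) (hy i) (hx j) (hy j)
  have dR : ∀ i j, i ≠ j → Disjoint (R i) (R j) := by
    intro i j hij; rw [Set.disjoint_left]; rintro v ⟨h1, h2⟩ ⟨h3, -⟩
    exact h2 (hinter i j hij v h1 h3)
  set T : Set V := W \ (U 0 ∪ U 1 ∪ U 2) with hTd
  have hTU : ∀ v ∈ T, ∀ i, v ∉ U i := by
    intro v hv i hvi
    apply hv.2
    fin_cases i
    · exact Or.inl (Or.inl hvi)
    · exact Or.inl (Or.inr hvi)
    · exact Or.inr hvi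
  have hTd : ∀ i, Disjoint (R i) T := by
    intro i; rw [Set.disjoint_left]; intro v hv hvT; exact hTU v hvT i hv.1
  have hxR : ∀ i, x ∉ R i := fun i h => h.2 (Or.inl rfl)
  have hyR : ∀ i, y ∉ R i := fun i h => h.2 (Or.inr rfl)
  have hxT : x ∉ T := fun h => hTU x h 0 (hx 0)
  have hyT : y ∉ T := fun h => hTU y h 0 (hy 0)
  have dsx : ∀ (S : Set V) z, z ∉ S → Disjoint {z} S := fun S z hz => Set.disjoint_singleton_left.2 hz
  by_cases hC : ∃ C ⊆ T, SC G C ∧ ∀ i, Touch G C (R i)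
  · obtain ⟨C, hCT, hC, hCR⟩ := hC
    have dCR : ∀ i, Disjoint C (R i) := fun i => (Disjoint.mono_right hCT (hTd i)).symm
    refine k33 hP ![{x}, {y}, C] R ?_ hR ?_ (fun i j hij => dR i j (ne_of_lt hij)) ?_ ?_
    · intro i; fin_cases i
      · exact sc_singleton x
      · exact sc_singleton y
      · exact hC
    · intro i j hij; fin_cases i <;> fin_cases j <;> first | exact absurd hij (by decide) | skip
      · exact dsx _ _ hxy.ne
      · exact dsx _ _ (fun h => hxT (hCT h))
      · exact dsx _ _ (fun h => hyT (hCT h))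
    · intro i j; fin_cases i
      · exact dsx _ _ (hxR j)
      · exact dsx _ _ (hyR j)
      · exact dCR j
    · intro i j; fin_cases i
      · exact hRx j
      · exact hRy j
      · exact hCR j
  · have hlink : ∀ i j k : Fin 3, i ≠ j → i ≠ k → j ≠ k → (∀ m, m = i ∨ m = j ∨ m = k) →
        ∃ L ⊆ T, SC G (R i ∪ L) ∧ Touch G (R i ∪ L) (R j) ∧
        (∀ u ∈ L, ∀ v ∈ T, G.Adj u v → v ∈ L) ∧ (L.Nonempty → SC G L ∧ Touch G L (R i) ∧ Touch G L (R j)) := by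
      intro i j k hij hik hjk hall
      have hsub : ∀ m, m ≠ k → R m ⊆ W \ U k := by
        rintro m hm v ⟨h1, h2⟩
        refine ⟨(h m).1 h1, fun h3 => h2 (hinter m k hm v h1 h3)⟩
      have hL := link (G := G) (R := W \ U k) (A1 := R i) (A2 := R j) (T := T) (h k).2.2 (by
        rintro v ⟨hvW, hvk⟩
        have hv' : v ∉ ({x, y} : Set V) := by
          rintro (rfl | hh)
          · exact hvk (hx k)
          · rw [Set.mem_singleton_iff] at hh; subst hh; exact hvk (hy k)
        by_cases hi : v ∈ U i
        · exact Or.inl (Or.inl ⟨hi, hv'⟩)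
        by_cases hj : v ∈ U j
        · exact Or.inl (Or.inr ⟨hj, hv'⟩)
        right
        refine ⟨hvW, ?_⟩
        have hno : ∀ m, v ∉ U m := by
          intro m; rcases hall m with rfl | rfl | rfl <;> assumption
        rintro ((hh | hh) | hh) <;> exact hno _ hh)
        (by obtain ⟨a, ha⟩ := (hR i).1; exact ⟨a, hsub i hik ha, ha⟩)
        (by obtain ⟨a, ha⟩ := (hR j).1; exact ⟨a, hsub j hjk ha, ha⟩)
        (dR i j hij) (hTd i) (hTd j)
      rcases hL with hL | ⟨C, hCT, hC, hC1, hC2, hcl⟩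
      · refine ⟨∅, Set.empty_subset _, ?_, ?_, ?_, ?_⟩
        · rw [Set.union_empty]; exact hR i
        · rw [Set.union_empty]; exact hL
        · intro u hu; exact absurd hu (Set.notMem_empty u)
        · intro hh; exact absurd hh Set.not_nonempty_empty
      · refine ⟨C, hCT, sc_union (hR i) hC (Touch.symm hC1), ?_, hcl, fun _ => ⟨hC, hC1, hC2⟩⟩
        obtain ⟨a, ha, b, hb, hab⟩ := hC2
        exact ⟨a, Or.inr ha, b, hb, hab⟩
    obtain ⟨L0, l0T, l0, l0t, l0c, l0n⟩ := hlink 0 1 2 (by decide) (by decide) (by decide) (by decide)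
    obtain ⟨L1, l1T, l1, l1t, l1c, l1n⟩ := hlink 1 2 0 (by decide) (by decide) (by decide) (by decide)
    obtain ⟨L2, l2T, l2, l2t, l2c, l2n⟩ := hlink 2 0 1 (by decide) (by decide) (by decide) (by decide)
    have dL : ∀ (L L' : Set V) (i j k : Fin 3), L ⊆ T → L' ⊆ T → (∀ u ∈ L, ∀ v ∈ T, G.Adj u v → v ∈ L) →
        (∀ u ∈ L', ∀ v ∈ T, G.Adj u v → v ∈ L') →
        (L.Nonempty → SC G L ∧ Touch G L (R i) ∧ Touch G L (R j)) →
        (L'.Nonempty → SC G L' ∧ Touch G L' (R j) ∧ Touch G L' (R k)) →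
        (∀ m, m = i ∨ m = j ∨ m = k) → Disjoint L L' := by
      intro L L' i j k hLT hLT' hc hc' hn hn' hall
      rw [Set.disjoint_left]
      intro v hv hv'
      obtain ⟨s1, t1, t2⟩ := hn ⟨v, hv⟩
      obtain ⟨s2, t3, t4⟩ := hn' ⟨v, hv'⟩
      have e1 : L ⊆ L' := by
        intro z hz
        exact (s1.2 (L ∩ L') Set.inter_subset_left ⟨v, hv, hv'⟩ (fun u hu w hw huw =>
          ⟨hw, hc' u hu.2 w (hLT hw) huw⟩) hz).2
      apply hC
      refine ⟨L', hLT', s2, ?_⟩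
      intro m
      rcases hall m with rfl | rfl | rfl
      · obtain ⟨a, ha, b, hb, hab⟩ := t1; exact ⟨a, e1 ha, b, hb, hab⟩
      · exact t3
      · exact t4
    have d01 := dL L0 L1 0 1 2 l0T l1T l0c l1c l0n l1n (by decide)
    have d12 := dL L1 L2 1 2 0 l1T l2T l1c l2c l1n l2n (by decide)
    have d20 := dL L2 L0 2 0 1 l2T l0T l2c l0c l2n l0n (by decide)
    have dU : ∀ (L L' : Set V) i j, i ≠ j → L ⊆ T → L' ⊆ T → Disjoint L L' → Disjoint (R i ∪ L) (R j ∪ L') := by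
      intro L L' i j hij hL hL' hd
      rw [Set.disjoint_union_left, Set.disjoint_union_right, Set.disjoint_union_right]
      exact ⟨⟨dR i j hij, Disjoint.mono_right hL' (hTd i)⟩, (Disjoint.mono_right hL (hTd j)).symm, hd⟩
    have nx : ∀ (L : Set V) i, L ⊆ T → Disjoint {x} (R i ∪ L) := fun L i hL => dsx _ _ (by
      rintro (h | h)
      · exact hxR i h
      · exact hxT (hL h))
    have ny : ∀ (L : Set V) i, L ⊆ T → Disjoint {y} (R i ∪ L) := fun L i hL => dsx _ _ (by
      rintro (h | h)
      · exact hyR i h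
      · exact hyT (hL h))
    have tr : ∀ (A B : Set V) (L : Set V), Touch G A B → Touch G A (B ∪ L) := by
      rintro A B L ⟨a, ha, b, hb, hab⟩; exact ⟨a, ha, b, Or.inl hb, hab⟩
    refine k5 hP ![{x}, {y}, R 0 ∪ L0, R 1 ∪ L1, R 2 ∪ L2] ?_ ?_ ?_
    · intro i; fin_cases i
      · exact sc_singleton x
      · exact sc_singleton y
      · exact l0
      · exact l1
      · exact l2
    · intro i j hij; fin_cases i <;> fin_cases j <;> first | exact absurd hij (by decide) | skip
      · exact dsx _ _ hxy.ne
      · exact nx _ _ l0T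
      · exact nx _ _ l1T
      · exact nx _ _ l2T
      · exact ny _ _ l0T
      · exact ny _ _ l1T
      · exact ny _ _ l2T
      · exact dU _ _ _ _ (by decide) l0T l1T d01
      · exact dU _ _ _ _ (by decide) l0T l2T d20.symm
      · exact dU _ _ _ _ (by decide) l1T l2T d12
    · intro i j hij; fin_cases i <;> fin_cases j <;> first | exact absurd hij (by decide) | skip
      · exact touch_of hxy rfl rfl
      · exact tr _ _ _ (hRx 0)
      · exact tr _ _ _ (hRx 1)
      · exact tr _ _ _ (hRx 2)
      · exact tr _ _ _ (hRy 0)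
      · exact tr _ _ _ (hRy 1)
      · exact tr _ _ _ (hRy 2)
      · exact tr _ _ _ l0t
      · exact Touch.symm (tr _ _ _ l2t)
      · exact tr _ _ _ l1t

end SCx

open SimpleGraph

/-- No edge of `F` has an end of degree one in `F`. -/
def NL {V : Type*} (F : Finset (Sym2 V)) : Prop :=
  ∀ e ∈ F, ∀ v ∈ e, ∃ e' ∈ F, e' ≠ e ∧ v ∈ e'

namespace SCx
variable {V : Type*} {G : SimpleGraph V}

open Classical in
/-- Edges inside `U`. -/
noncomputable def eU (E : Finset (Sym2 V)) (U : Set V) : Finset (Sym2 V) :=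
  E.filter (fun e => ∀ v ∈ e, v ∈ U)

lemma mem_eU {E : Finset (Sym2 V)} {U : Set V} {e : Sym2 V} :
    e ∈ eU E U ↔ e ∈ E ∧ ∀ v ∈ e, v ∈ U := by simp [eU]

lemma sum_eU {R : Type*} [AddCommMonoid R] (E : Finset (Sym2 V)) (U : Set V) (φ : Sym2 V → R)
    (D : ∀ e : Sym2 V, Decidable (∀ v ∈ e, v ∈ U)) :
    ∑ e ∈ eU E U, φ e = ∑ e ∈ E, if (∀ v ∈ e, v ∈ U) then φ e else 0 := by
  rw [← Finset.sum_filter]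
  apply Finset.sum_congr _ (fun _ _ => rfl)
  ext e; simp [mem_eU]

lemma cyc_sum {E : Finset (Sym2 V)} (hE : ∀ e, e ∈ E ↔ e ∈ G.edgeSet) {U : Set V} {N : ℕ}
    {c : ℕ → V} (hc : ICyc G U N c) (φ : Sym2 V → ZMod 2) :
    ∑ e ∈ eU E U, φ e = ∑ i ∈ Finset.range N, φ s(c i, c (i + 1)) := by
  classical
  have h3 := hc.three
  have himg : eU E U = (Finset.range N).image (fun i => s(c i, c (i + 1))) := by
    ext e
    simp only [eU, Finset.mem_filter, Finset.mem_image, Finset.mem_range, hE]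
    constructor
    · induction e with
      | _ u v =>
      rintro ⟨huv, hU⟩
      rw [mem_edgeSet] at huv
      obtain ⟨i, hi, rfl⟩ := (hc.mem u).1 (hU u (by simp))
      obtain ⟨j, hj, rfl⟩ := (hc.mem v).1 (hU v (by simp))
      rcases hc.adj' hi hj huv with h | h | ⟨h, h'⟩ | ⟨h, h'⟩
      · exact ⟨i, hi, by rw [h]⟩
      · exact ⟨j, hj, by rw [h, Sym2.eq_swap]⟩
      · refine ⟨j, hj, ?_⟩
        rw [h', hc.wrap, h, Sym2.eq_swap]
      · refine ⟨i, hi, ?_⟩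
        rw [h', hc.wrap, h]
    · rintro ⟨i, hi, rfl⟩
      constructor
      · rw [mem_edgeSet]
        by_cases h : i + 1 < N
        · exact hc.step i h
        · have e1 : i + 1 = N := by omega
          have e2 : i = N - 1 := by omega
          rw [e1, hc.wrap, e2]; exact hc.last.symm
      · intro v hv
        rw [Sym2.mem_iff] at hv
        rcases hv with rfl | rfl
        · exact (hc.mem _).2 ⟨i, hi, rfl⟩
        · by_cases h : i + 1 < N
          · exact (hc.mem _).2 ⟨i + 1, h, rfl⟩
          · have e1 : i + 1 = N := by omega
            rw [e1, hc.wrap]; exact (hc.mem _).2 ⟨0, by omega, rfl⟩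
  rw [himg, Finset.sum_image]
  intro i hi j hj hij
  simp only [Finset.coe_range, Set.mem_Iio] at hi hj
  have hij' : s(c i, c (i + 1)) = s(c j, c (j + 1)) := hij
  rw [Sym2.eq_iff] at hij'
  rcases hij' with ⟨h, -⟩ | ⟨h1, h2⟩
  · exact hc.eq hi hj h
  · exfalso
    by_cases h : j + 1 < N
    · have := hc.eq hi h h1
      subst this
      by_cases h' : j + 1 + 1 < N
      · have := hc.eq h' hj h2; omega
      · have e1 : j + 1 + 1 = N := by omega
        rw [e1, hc.wrap] at h2
        have := hc.eq (by omega) hj h2; omega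
    · have e1 : j + 1 = N := by omega
      rw [e1, hc.wrap] at h1
      have := hc.eq hi (by omega) h1
      subst this
      have := hc.eq (by omega) hj h2
      omega

lemma cyc_bal {E : Finset (Sym2 V)} (hE : ∀ e, e ∈ E ↔ e ∈ G.edgeSet) {U : Set V} {N : ℕ}
    {c : ℕ → V} (hc : ICyc G U N c) (φ : Sym2 V → ZMod 2) :
    ∑ e ∈ eU E U, φ e = 0 ↔ Bal G φ U := by
  classical
  rw [cyc_sum hE hc]
  have h3 := hc.three
  have dbl : ∀ a b c : ZMod 2, a + b = c → b = a + c := by decide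
  have adjn : ∀ i < N, G.Adj (c i) (c (i + 1)) ∧ c (i + 1) ∈ U := by
    intro i hi
    by_cases h : i + 1 < N
    · exact ⟨hc.step i h, (hc.mem _).2 ⟨i + 1, h, rfl⟩⟩
    · have e1 : i + 1 = N := by omega
      have e2 : i = N - 1 := by omega
      rw [e1, hc.wrap]
      refine ⟨?_, (hc.mem _).2 ⟨0, by omega, rfl⟩⟩
      rw [e2]; exact hc.last.symm
  constructor
  · intro hs
    let F : ℕ → ZMod 2 := fun k => ∑ i ∈ Finset.range k, φ s(c i, c (i + 1))
    let f : V → ZMod 2 := fun v => if h : ∃ i < N, c i = v then F h.choose else 0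
    have hf : ∀ i < N, f (c i) = F i := by
      intro i hi
      have h : ∃ i' < N, c i' = c i := ⟨i, hi, rfl⟩
      have e : f (c i) = F h.choose := dif_pos h
      rw [e, hc.eq h.choose_spec.1 hi h.choose_spec.2]
    have hf' : ∀ i ≤ N, f (c i) = F i := by
      intro i hi
      rcases Nat.lt_or_ge i N with h | h
      · exact hf i h
      · have : i = N := by omega
        rw [this, hc.wrap, hf 0 (by omega)]
        show _ = ∑ i ∈ Finset.range N, φ s(c i, c (i + 1))
        rw [hs]; simp [F]
    have hstep : ∀ i < N, φ s(c i, c (i + 1)) = f (c i) + f (c (i + 1)) := by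
      intro i hi
      rw [hf' i (by omega), hf' (i + 1) (by omega)]
      exact dbl _ _ _ (Finset.sum_range_succ _ _).symm
    refine ⟨f, ?_⟩
    intro u hu v hv huv
    obtain ⟨i, hi, rfl⟩ := (hc.mem u).1 hu
    obtain ⟨j, hj, rfl⟩ := (hc.mem v).1 hv
    rcases hc.adj' hi hj huv with h | h | ⟨h, h'⟩ | ⟨h, h'⟩
    · rw [h]; exact hstep i hi
    · rw [Sym2.eq_swap, add_comm, h]; exact hstep j hj
    · have := hstep j hj
      rw [h', hc.wrap, ← h] at this
      rw [Sym2.eq_swap, add_comm]; exact this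
    · have := hstep i hi
      rw [h', hc.wrap, ← h] at this
      exact this
  · rintro ⟨f, hf⟩
    have : ∀ k ≤ N, ∑ i ∈ Finset.range k, φ s(c i, c (i + 1)) = f (c 0) + f (c k) := by
      intro k
      induction k with
      | zero =>
        intro _
        have : ∀ a : ZMod 2, 0 = a + a := by decide
        simpa using this _
      | succ k ih =>
        intro hk
        rw [Finset.sum_range_succ, ih (by omega),
          hf _ ((hc.mem _).2 ⟨k, by omega, rfl⟩) _ (adjn k (by omega)).2 (adjn k (by omega)).1]
        generalize f (c 0) = a; generalize f (c k) = b; generalize f (c (k + 1)) = d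
        revert a b d; decide
    rw [this N le_rfl, hc.wrap]
    generalize f (c 0) = a
    revert a; decide

open Classical in
lemma nl_of_even {F : Finset (Sym2 V)}
    (h : ∀ v, ∑ e ∈ F, (if v ∈ e then (1 : ZMod 2) else 0) = 0) : NL F := by
  intro e he v hv
  by_contra hno
  push Not at hno
  have := h v
  rw [Finset.sum_eq_single e] at this
  · rw [if_pos hv] at this; exact absurd this (by decide)
  · intro e' he' hne
    rw [if_neg (hno e' he' hne)]
  · intro hh; exact absurd he hh

open Classical in
lemma bal_delta (v : V) (U : Set V) :
    Bal G (fun e => if v ∈ e then (1 : ZMod 2) else 0) U := by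
  refine ⟨fun u => if u = v then 1 else 0, ?_⟩
  intro u _ w _ huw
  have := huw.ne
  by_cases h1 : u = v
  · subst h1
    simp [this.symm]
  · by_cases h2 : w = v
    · subst h2; simp [h1]
    · have : ¬ (v = u ∨ v = w) := by
        rintro (h | h)
        · exact h1 h.symm
        · exact h2 h.symm
      simp [Sym2.mem_iff, h1, h2, this]

/-- rank bound -/
lemma rank_bound [Fintype V] {E : Finset (Sym2 V)} (hE : ∀ e, e ∈ E ↔ e ∈ G.edgeSet)
    {W : Set V} (hWne : W.Nonempty)
    (hW : ∀ u v, G.Adj u v → u ∈ W) (P : Finset (Set V))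
    (hP : ∀ φ : Sym2 V → ZMod 2, (∀ U ∈ P, ∑ e ∈ eU E U, φ e = 0) → Bal G φ W) :
    E.card + 1 ≤ W.ncard + P.card ∧
    ((∀ φ : Sym2 V → ZMod 2, ∑ U ∈ P, ∑ e ∈ eU E U, φ e = 0) → P.Nonempty →
      E.card + 2 ≤ W.ncard + P.card) := by
  classical
  haveI : Fintype W := Fintype.ofFinite W
  have h2 : Fact (Nat.Prime 2) := ⟨Nat.prime_two⟩
  let ext : (E → ZMod 2) → Sym2 V → ZMod 2 := fun φ e => if h : e ∈ E then φ ⟨e, h⟩ else 0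
  have ext_add : ∀ φ ψ e, ext (φ + ψ) e = ext φ e + ext ψ e := by
    intro φ ψ e; by_cases h : e ∈ E <;> simp [ext, h]
  have ext_smul : ∀ (a : ZMod 2) φ e, ext (a • φ) e = a * ext φ e := by
    intro a φ e; by_cases h : e ∈ E <;> simp [ext, h]
  let Φ : (E → ZMod 2) →ₗ[ZMod 2] (P → ZMod 2) :=
    { toFun := fun φ U => ∑ e ∈ eU E U.1, ext φ e
      map_add' := by
        intro φ ψ; funext U
        simp only [ext_add, Finset.sum_add_distrib, Pi.add_apply]
      map_smul' := by
        intro a φ; funext U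
        simp only [ext_smul, ← Finset.mul_sum, Pi.smul_apply, RingHom.id_apply, smul_eq_mul] }
  let lift : (V → ZMod 2) → Sym2 V → ZMod 2 := fun f e =>
    Sym2.lift ⟨fun u v => f u + f v, fun u v => add_comm _ _⟩ e
  let fext : (W → ZMod 2) → V → ZMod 2 := fun f v => if h : v ∈ W then f ⟨v, h⟩ else 0
  have lift_add : ∀ f g : W → ZMod 2, ∀ e, lift (fext (f + g)) e = lift (fext f) e + lift (fext g) e := by
    intro f g e
    induction e with
    | _ u v =>
    show fext (f + g) u + fext (f + g) v = (fext f u + fext f v) + (fext g u + fext g v)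
    by_cases h1 : u ∈ W <;> by_cases h2 : v ∈ W <;> simp [fext, h1, h2] <;> ring
  have lift_smul : ∀ (a : ZMod 2) (f : W → ZMod 2), ∀ e, lift (fext (a • f)) e = a * lift (fext f) e := by
    intro a f e
    induction e with
    | _ u v =>
    show fext (a • f) u + fext (a • f) v = a * (fext f u + fext f v)
    by_cases h1 : u ∈ W <;> by_cases h2 : v ∈ W <;> simp [fext, h1, h2] <;> ring
  let δ : (W → ZMod 2) →ₗ[ZMod 2] (E → ZMod 2) :=
    { toFun := fun f e => lift (fext f) e.1
      map_add' := by intro f g; funext e; exact lift_add f g e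
      map_smul' := by intro a f; funext e; exact lift_smul a f e }
  have hker : LinearMap.ker Φ ≤ LinearMap.range δ := by
    intro φ hφ
    rw [LinearMap.mem_ker] at hφ
    obtain ⟨f, hf⟩ := hP (ext φ) (fun U hU => congrFun hφ ⟨U, hU⟩)
    refine ⟨fun w => f w.1, ?_⟩
    funext ⟨e, he⟩
    show lift (fext fun w => f w.1) e = φ ⟨e, he⟩
    induction e with
    | _ u v =>
    have huv : G.Adj u v := (hE _).1 he
    have hu := hW u v huv
    have hv := hW v u huv.symm
    have := hf u hu v hv huv
    simp only [ext, he, dif_pos] at this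
    rw [this]
    show fext (fun w => f w.1) u + fext (fun w => f w.1) v = f u + f v
    simp [fext, hu, hv]
  have hδ : Module.finrank (ZMod 2) (LinearMap.range δ) + 1 ≤ W.ncard := by
    have h1 := LinearMap.finrank_range_add_finrank_ker δ
    rw [Module.finrank_fintype_fun_eq_card] at h1
    have h3 : 0 < Module.finrank (ZMod 2) (LinearMap.ker δ) := by
      rw [Module.finrank_pos_iff]
      refine ⟨⟨⟨fun _ => 1, ?_⟩, 0, ?_⟩⟩
      · rw [LinearMap.mem_ker]
        funext ⟨e, he⟩
        show lift (fext fun _ => 1) e = 0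
        induction e with
        | _ u v =>
        have huv : G.Adj u v := (hE _).1 he
        have hu := hW u v huv
        have hv := hW v u huv.symm
        show fext (fun _ => 1) u + fext (fun _ => 1) v = 0
        simp only [fext, hu, hv, dif_pos]; exact CharTwo.add_self_eq_zero _
      · intro h
        have := congrFun (congrArg Subtype.val h) ⟨hWne.some, hWne.some_mem⟩
        exact absurd this (by simp)
    have : W.ncard = Fintype.card W := by
      rw [← Nat.card_coe_set_eq, Nat.card_eq_fintype_card]
    omega
  have hrk := LinearMap.finrank_range_add_finrank_ker Φ
  rw [Module.finrank_fintype_fun_eq_card, Fintype.card_coe] at hrk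
  have hle := Submodule.finrank_mono hker
  have hPle := Submodule.finrank_le (LinearMap.range Φ)
  rw [Module.finrank_fintype_fun_eq_card, Fintype.card_coe] at hPle
  refine ⟨by omega, ?_⟩
  intro hT hne
  let σ : (P → ZMod 2) →ₗ[ZMod 2] ZMod 2 :=
    { toFun := fun x => ∑ U, x U
      map_add' := by intro x y; simp [Finset.sum_add_distrib]
      map_smul' := by intro a x; simp [Finset.mul_sum] }
  have hσ : LinearMap.range Φ ≤ LinearMap.ker σ := by
    rintro _ ⟨φ, rfl⟩
    rw [LinearMap.mem_ker]
    show ∑ U : P, ∑ e ∈ eU E U.1, ext φ e = 0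
    rw [← hT (ext φ)]
    exact Finset.sum_coe_sort P (fun U => ∑ e ∈ eU E U, ext φ e)
  have h4 := Submodule.finrank_mono hσ
  have h5 := LinearMap.finrank_range_add_finrank_ker σ
  rw [Module.finrank_fintype_fun_eq_card, Fintype.card_coe] at h5
  have h6 : 0 < Module.finrank (ZMod 2) (LinearMap.range σ) := by
    obtain ⟨U, hU⟩ := hne
    rw [Module.finrank_pos_iff]
    refine ⟨⟨⟨σ (Pi.single ⟨U, hU⟩ 1), ⟨_, rfl⟩⟩, 0, ?_⟩⟩
    intro h
    have := congrArg Subtype.val h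
    simp [σ] at this
  omega

/-- E3: Euler's inequality in the 3-connected case. -/
theorem euler3 [Fintype V] {E : Finset (Sym2 V)} (hE : ∀ e, e ∈ E ↔ e ∈ G.edgeSet)
    {W : Set V} (hT : TC G W) (hP : IsPlanar G) (hWne : W.Nonempty) (hmn : W.ncard ≤ E.card)
    (ℓ : Sym2 V → ℤ) (hℓ : ∀ e, 0 ≤ ℓ e) (g : ℤ) (hg : 0 ≤ g)
    (hmet : ∀ F ⊆ E, F.Nonempty → NL F → g ≤ ∑ e ∈ F, ℓ e) :
    g * ((E.card : ℤ) - W.ncard + 2) ≤ 2 * ∑ e ∈ E, ℓ e := by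
  classical
  let P : Finset (Set V) := Finset.univ.filter (fun U => Per G W U)
  have hmemP : ∀ U, U ∈ P ↔ Per G W U := fun U => by simp [P]
  have hbal : ∀ φ : Sym2 V → ZMod 2, (∀ U ∈ P, ∑ e ∈ eU E U, φ e = 0) → Bal G φ W := by
    intro φ h
    by_contra hno
    obtain ⟨U, hU, hUb⟩ := exists_per hT hno
    obtain ⟨-, ⟨N, c, hc⟩, -⟩ := id hU
    exact hUb ((cyc_bal hE hc φ).1 (h U ((hmemP U).2 hU)))
  obtain ⟨rb1, rb2⟩ := rank_bound hE hWne hT.sub P hbal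
  have hPne : P.Nonempty := by
    rw [← Finset.card_pos]; omega
  have heven : ∀ U ∈ P, ∀ v, ∑ e ∈ eU E U, (if v ∈ e then (1 : ZMod 2) else 0) = 0 := by
    intro U hU v
    obtain ⟨-, ⟨N, c, hc⟩, -⟩ := (hmemP U).1 hU
    exact (cyc_bal hE hc _).2 (bal_delta v U)
  have hlong : ∀ U ∈ P, g ≤ ∑ e ∈ eU E U, ℓ e := by
    intro U hU
    apply hmet _ (fun e he => (mem_eU.1 he).1) _ (nl_of_even (heven U hU))
    obtain ⟨-, ⟨N, c, hc⟩, -⟩ := (hmemP U).1 hU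
    have h3 := hc.three
    refine ⟨s(c 0, c 1), ?_⟩
    rw [mem_eU, hE, mem_edgeSet]
    refine ⟨hc.step 0 (by omega), ?_⟩
    intro v hv
    rw [Sym2.mem_iff] at hv
    rcases hv with rfl | rfl
    · exact (hc.mem _).2 ⟨0, by omega, rfl⟩
    · exact (hc.mem _).2 ⟨1, by omega, rfl⟩
  let cnt : Sym2 V → ℕ := fun e => (P.filter (fun U => ∀ v ∈ e, v ∈ U)).card
  have hcnt : ∀ e ∈ E, cnt e ≤ 2 := by
    intro e he
    by_contra hgt
    have h3 : 2 < (P.filter (fun U => ∀ v ∈ e, v ∈ U)).card := by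
      simpa [cnt] using hgt
    rw [Finset.two_lt_card] at h3
    obtain ⟨A, hA, B, hB, C, hC, hAB, hAC, hBC⟩ := h3
    induction e with
    | _ x y =>
    simp only [Finset.mem_filter, hmemP] at hA hB hC
    have hxy : G.Adj x y := (hE _).1 he
    refine no_three hT hP (U := ![A, B, C]) ?_ ?_ hxy ?_ ?_
    · intro i; fin_cases i
      exacts [hA.1, hB.1, hC.1]
    · intro i j hij; fin_cases i <;> fin_cases j <;> first | exact absurd rfl hij | skip
      exacts [hAB, hAC, hAB.symm, hBC, hAC.symm, hBC.symm]
    · intro i; fin_cases i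
      exacts [hA.2 x (by simp), hB.2 x (by simp), hC.2 x (by simp)]
    · intro i; fin_cases i
      exacts [hA.2 y (by simp), hB.2 y (by simp), hC.2 y (by simp)]
  have dc : ∀ {R : Type} [CommRing R] (φ : Sym2 V → R), ∑ U ∈ P, ∑ e ∈ eU E U, φ e = ∑ e ∈ E, (cnt e : R) * φ e := by
    intro R _ φ
    have e1 : ∀ U ∈ P, ∑ e ∈ eU E U, φ e = ∑ e ∈ E, if (∀ v ∈ e, v ∈ U) then φ e else 0 :=
      fun U _ => sum_eU E U φ _
    rw [Finset.sum_congr rfl e1, Finset.sum_comm]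
    apply Finset.sum_congr rfl
    intro e _
    rw [Finset.sum_ite, Finset.sum_const, Finset.sum_const_zero, add_zero, nsmul_eq_mul]
  let T := E.filter (fun e => cnt e = 1)
  have hcz : ∀ e ∈ E, (cnt e : ZMod 2) = if cnt e = 1 then 1 else 0 := by
    intro e he
    have := hcnt e he
    rcases (by omega : cnt e = 0 ∨ cnt e = 1 ∨ cnt e = 2) with h | h | h <;> rw [h] <;> decide
  have dcT : ∀ φ : Sym2 V → ZMod 2, ∑ U ∈ P, ∑ e ∈ eU E U, φ e = ∑ e ∈ T, φ e := by
    intro φ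
    rw [dc, Finset.sum_filter]
    apply Finset.sum_congr rfl
    intro e he
    rw [hcz e he]; split_ifs <;> simp
  have hTnl : NL T := by
    apply nl_of_even
    intro v
    rw [← dcT]
    exact Finset.sum_eq_zero (fun U hU => heven U hU v)
  have hsum : (P.card : ℤ) * g ≤ ∑ e ∈ E, (cnt e : ℤ) * ℓ e := by
    rw [← dc, ← nsmul_eq_mul]
    exact Finset.card_nsmul_le_sum P _ g hlong
  have hTsum : ∑ e ∈ E, (cnt e : ℤ) * ℓ e + ∑ e ∈ T, ℓ e ≤ 2 * ∑ e ∈ E, ℓ e := by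
    rw [Finset.sum_filter, ← Finset.sum_add_distrib, Finset.mul_sum]
    apply Finset.sum_le_sum
    intro e he
    have h1 := hcnt e he
    have h2 := hℓ e
    rcases (by omega : cnt e = 0 ∨ cnt e = 1 ∨ cnt e = 2) with h | h | h <;> rw [h] <;> simp <;> linarith
  have hTnn : 0 ≤ ∑ e ∈ T, ℓ e := Finset.sum_nonneg (fun e _ => hℓ e)
  by_cases hTe : T.Nonempty
  · have h1 := hmet T (Finset.filter_subset _ _) hTe hTnl
    have h2 : ((E.card : ℤ) - W.ncard + 2) ≤ P.card + 1 := by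
      have : ((E.card + 1 : ℕ) : ℤ) ≤ ((W.ncard + P.card : ℕ) : ℤ) := by exact_mod_cast rb1
      push_cast at this; linarith
    nlinarith
  · have hT0 : T = ∅ := Finset.not_nonempty_iff_eq_empty.1 hTe
    have rb := rb2 (fun φ => by rw [dcT, hT0, Finset.sum_empty]) hPne
    have h2 : ((E.card : ℤ) - W.ncard + 2) ≤ P.card := by
      have : ((E.card + 2 : ℕ) : ℤ) ≤ ((W.ncard + P.card : ℕ) : ℤ) := by exact_mod_cast rb
      push_cast at this; linarith
    nlinarith

end SCx

open SimpleGraph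

namespace SCx
variable {V : Type*} [Fintype V]

open Classical in
/-- vertices covered by `E` -/
noncomputable def sp (E : Finset (Sym2 V)) : Finset V :=
  Finset.univ.filter (fun v => ∃ e ∈ E, v ∈ e)

lemma mem_sp {E : Finset (Sym2 V)} {v : V} : v ∈ sp E ↔ ∃ e ∈ E, v ∈ e := by
  simp [sp]

/-- hypotheses of the weighted Euler inequality -/
structure Good (E : Finset (Sym2 V)) (ℓ : Sym2 V → ℤ) (g : ℤ) : Prop where
  nd : ∀ e ∈ E, ¬ e.IsDiag
  pl : IsPlanar (fromEdgeSet (E : Set (Sym2 V)))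
  nn : ∀ e, 0 ≤ ℓ e
  met : ∀ F ⊆ E, F.Nonempty → NL F → g ≤ ∑ e ∈ F, ℓ e

/-- conclusion -/
def EUL (E : Finset (Sym2 V)) (ℓ : Sym2 V → ℤ) (g : ℤ) : Prop :=
  g * ((E.card : ℤ) - (sp E).card + 2) ≤ 2 * ∑ e ∈ E, ℓ e

lemma sp_mono {E E' : Finset (Sym2 V)} (h : E ⊆ E') : sp E ⊆ sp E' := by
  intro v hv
  obtain ⟨e, he, hve⟩ := mem_sp.1 hv
  exact mem_sp.2 ⟨e, h he, hve⟩

lemma Good.sub {E E' : Finset (Sym2 V)} {ℓ : Sym2 V → ℤ} {g : ℤ} (h : Good E ℓ g) (hs : E' ⊆ E) :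
    Good E' ℓ g where
  nd := fun e he => h.nd e (hs he)
  pl := planar_mono (fromEdgeSet_mono (by exact_mod_cast hs)) h.pl
  nn := h.nn
  met := fun F hF => h.met F (hF.trans hs)

/-- induction hypothesis -/
def IHyp (V : Type*) [Fintype V] (g : ℤ) (m : ℕ) : Prop :=
  ∀ (E : Finset (Sym2 V)) (ℓ : Sym2 V → ℤ), E.card < m → Good E ℓ g →
    (sp E).card ≤ E.card → 0 < E.card → EUL E ℓ g

/-- use a subset with at least as much cyclomatic excess -/
lemma use_sub {E E' : Finset (Sym2 V)} {ℓ : Sym2 V → ℤ} {g : ℤ} (hg : 0 ≤ g) (h : Good E ℓ g)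
    (hs : E' ⊆ E) (hlt : E'.card < E.card) (ih : IHyp V g E.card) (hne : 0 < E'.card)
    (hmn : (sp E).card ≤ E.card)
    (hc : E.card + (sp E').card ≤ E'.card + (sp E).card) : EUL E ℓ g := by
  have h1 := ih E' ℓ hlt (h.sub hs) (by omega) hne
  unfold EUL at *
  have h2 : ∑ e ∈ E', ℓ e ≤ ∑ e ∈ E, ℓ e :=
    Finset.sum_le_sum_of_subset_of_nonneg hs (fun e _ _ => h.nn e)
  have h3 : ((E.card : ℤ) - (sp E).card + 2) ≤ ((E'.card : ℤ) - (sp E').card + 2) := by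
    have : ((E.card + (sp E').card : ℕ) : ℤ) ≤ ((E'.card + (sp E).card : ℕ) : ℤ) := by
      exact_mod_cast hc
    push_cast at this; linarith
  nlinarith [mul_le_mul_of_nonneg_left h3 hg]

lemma other_end {e : Sym2 V} (hd : ¬ e.IsDiag) {v : V} (hv : v ∈ e) : ∃ w, w ≠ v ∧ e = s(v, w) := by
  obtain ⟨w, rfl⟩ := Sym2.mem_iff_exists.1 hv
  refine ⟨w, ?_, rfl⟩
  rintro rfl
  exact hd (by simp)

/-- reduction to minimum degree two -/
lemma red_leaf {E : Finset (Sym2 V)} {ℓ : Sym2 V → ℤ} {g : ℤ} (hg : 0 ≤ g) (h : Good E ℓ g)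
    (ih : IHyp V g E.card) (hmn : (sp E).card ≤ E.card) (hpos : 0 < E.card) (hnl : ¬ NL E) :
    EUL E ℓ g := by
  classical
  unfold NL at hnl
  push Not at hnl
  obtain ⟨e, he, v, hv, hno⟩ := hnl
  have hc1 : (E.erase e).card + 1 = E.card := Finset.card_erase_add_one he
  have hv1 : v ∈ sp E := mem_sp.2 ⟨e, he, hv⟩
  have hsub : sp (E.erase e) ⊆ (sp E).erase v := by
    intro u hu
    rw [Finset.mem_erase]
    refine ⟨?_, sp_mono (Finset.erase_subset _ _) hu⟩
    rintro rfl
    obtain ⟨e', he', hu'⟩ := mem_sp.1 hu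
    rw [Finset.mem_erase] at he'
    exact hno e' he'.2 he'.1 hu'
  have hc2 := Finset.card_le_card hsub
  have hc3 := Finset.card_erase_add_one hv1
  obtain ⟨w, hwv, hew⟩ := other_end (h.nd e he) hv
  have hw1 : w ∈ sp E := mem_sp.2 ⟨e, he, by rw [hew]; simp⟩
  have : 2 ≤ (sp E).card := Finset.one_lt_card.2 ⟨v, hv1, w, hw1, hwv.symm⟩
  exact use_sub hg h (Finset.erase_subset e E) (by omega) ih (by omega) hmn (by omega)

lemma red_heavy {E : Finset (Sym2 V)} {ℓ : Sym2 V → ℤ} {g : ℤ} (hg : 0 ≤ g) (h : Good E ℓ g)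
    (ih : IHyp V g E.card) (hmn : (sp E).card < E.card) (e : Sym2 V) (he : e ∈ E)
    (hh : g ≤ 2 * ℓ e) : EUL E ℓ g := by
  classical
  have hc1 : (E.erase e).card + 1 = E.card := Finset.card_erase_add_one he
  have hc2 := Finset.card_le_card (sp_mono (Finset.erase_subset e E))
  have : 0 < (sp E).card := by
    obtain ⟨w, hwv, hew⟩ := other_end (h.nd e he) (Sym2.out_fst_mem e)
    exact Finset.card_pos.2 ⟨_, mem_sp.2 ⟨e, he, Sym2.out_fst_mem e⟩⟩
  have h1 := ih _ ℓ (by omega) (h.sub (Finset.erase_subset e E)) (by omega) (by omega)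
  unfold EUL at *
  have h2 := Finset.add_sum_erase E ℓ he
  have h3 : ((E.card : ℤ) - (sp E).card + 1) ≤ (((E.erase e).card : ℤ) - (sp (E.erase e)).card + 2) := by
    have : ((E.erase e).card : ℤ) + 1 = E.card := by exact_mod_cast hc1
    have h5 : ((sp (E.erase e)).card : ℤ) ≤ (sp E).card := by exact_mod_cast hc2
    linarith
  nlinarith [mul_le_mul_of_nonneg_left h3 hg]

/-- `E` is split in two nonempty parts -/
structure Spl (E E1 E2 : Finset (Sym2 V)) : Prop where
  mem : ∀ e, e ∈ E ↔ e ∈ E1 ∨ e ∈ E2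
  disj : ∀ e ∈ E1, e ∉ E2
  ne1 : E1.Nonempty
  ne2 : E2.Nonempty

lemma Spl.symm {E E1 E2 : Finset (Sym2 V)} (h : Spl E E1 E2) : Spl E E2 E1 :=
  ⟨fun e => by rw [h.mem, or_comm], fun e h1 h2 => h.disj e h2 h1, h.ne2, h.ne1⟩

open Classical in
lemma Spl.eq {E E1 E2 : Finset (Sym2 V)} (h : Spl E E1 E2) : E = E1 ∪ E2 := by
  ext e; simp [h.mem]

open Classical in
lemma Spl.dj {E E1 E2 : Finset (Sym2 V)} (h : Spl E E1 E2) : Disjoint E1 E2 :=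
  Finset.disjoint_left.2 h.disj

lemma Spl.sub1 {E E1 E2 : Finset (Sym2 V)} (h : Spl E E1 E2) : E1 ⊆ E :=
  fun e he => (h.mem e).2 (Or.inl he)

lemma Spl.card {E E1 E2 : Finset (Sym2 V)} (h : Spl E E1 E2) : E.card = E1.card + E2.card := by
  classical
  rw [h.eq, Finset.card_union_of_disjoint h.dj]

lemma Spl.sum {E E1 E2 : Finset (Sym2 V)} (h : Spl E E1 E2) (ℓ : Sym2 V → ℤ) :
    ∑ e ∈ E, ℓ e = ∑ e ∈ E1, ℓ e + ∑ e ∈ E2, ℓ e := by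
  classical
  rw [h.eq, Finset.sum_union h.dj]

open Classical in
lemma Spl.spcard {E E1 E2 : Finset (Sym2 V)} (h : Spl E E1 E2) :
    (sp E).card + (sp E1 ∩ sp E2).card = (sp E1).card + (sp E2).card := by
  have : sp E = sp E1 ∪ sp E2 := by
    ext v
    simp only [mem_sp, Finset.mem_union, h.mem]
    constructor
    · rintro ⟨e, h1 | h1, h2⟩
      · exact Or.inl ⟨e, h1, h2⟩
      · exact Or.inr ⟨e, h1, h2⟩
    · rintro (⟨e, h1, h2⟩ | ⟨e, h1, h2⟩)
      · exact ⟨e, Or.inl h1, h2⟩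
      · exact ⟨e, Or.inr h1, h2⟩
  rw [this, Finset.card_union_add_card_inter]

open Classical in
lemma red_sep1 {E E1 E2 : Finset (Sym2 V)} {ℓ : Sym2 V → ℤ} {g : ℤ} (hg : 0 ≤ g) (h : Good E ℓ g)
    (ih : IHyp V g E.card) (hmn : (sp E).card ≤ E.card) (hs : Spl E E1 E2)
    (hC : (sp E1 ∩ sp E2).card ≤ 1) : EUL E ℓ g := by
  have c1 := hs.card
  have c2 := hs.spcard
  have p1 := hs.ne1.card_pos
  have p2 := hs.ne2.card_pos
  by_cases h1 : (sp E1).card ≤ E1.card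
  · by_cases h2 : (sp E2).card ≤ E2.card
    · have i1 := ih E1 ℓ (by omega) (h.sub hs.sub1) h1 p1
      have i2 := ih E2 ℓ (by omega) (h.sub hs.symm.sub1) h2 p2
      unfold EUL at *
      rw [hs.sum ℓ]
      have h3 : ((E.card : ℤ) - (sp E).card + 2) ≤ ((E1.card : ℤ) - (sp E1).card + 2) +
          ((E2.card : ℤ) - (sp E2).card + 2) := by omega
      nlinarith [mul_le_mul_of_nonneg_left h3 hg]
    · exact use_sub hg h hs.sub1 (by omega) ih p1 hmn (by omega)
  · exact use_sub hg h hs.symm.sub1 (by omega) ih p2 hmn (by omega)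

lemma mem_or_other {E : Finset (Sym2 V)} (u v : V) :
    (fromEdgeSet (E : Set (Sym2 V))).Adj u v ↔ s(u, v) ∈ E ∧ u ≠ v := by
  simp [fromEdgeSet_adj]

open Classical in
lemma virt_planar {E E1 E2 : Finset (Sym2 V)} (hnd : ∀ e ∈ E, ¬ e.IsDiag)
    (hpl : IsPlanar (fromEdgeSet (E : Set (Sym2 V))))
    (hs : Spl E E1 E2) (x y : V) (hxy : x ≠ y)
    (hC : sp E1 ∩ sp E2 = {x, y}) (q : V) (hq : q ∈ sp E2) (hq' : q ∉ sp E1)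
    (hno : ∀ A B, Spl E A B → 2 ≤ (sp A ∩ sp B).card) :
    IsPlanar (fromEdgeSet ((insert s(x, y) E1 : Finset (Sym2 V)) : Set (Sym2 V))) := by
  obtain ⟨Q, hQ1, hqQ, hQ2, hQ3⟩ := exists_comp (G := fromEdgeSet (E : Set (Sym2 V)))
    {v | v ∈ sp E2 ∧ v ∉ sp E1} q ⟨hq, hq'⟩
  have hxC : x ∈ sp E1 ∩ sp E2 := by rw [hC]; simp
  have hyC : y ∈ sp E1 ∩ sp E2 := by rw [hC]; simp
  rw [Finset.mem_inter] at hxC hyC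
  have hspl : Spl E (E.filter (fun e => ∃ v ∈ e, v ∈ Q)) (E.filter (fun e => ¬ ∃ v ∈ e, v ∈ Q)) := by
    refine ⟨?_, ?_, ?_, ?_⟩
    · intro e
      rw [Finset.mem_filter, Finset.mem_filter, ← and_or_left, and_iff_left (Classical.em _)]
    · intro e h1 h2
      exact (Finset.mem_filter.1 h2).2 (Finset.mem_filter.1 h1).2
    · obtain ⟨e, he, hqe⟩ := mem_sp.1 hq
      exact ⟨e, Finset.mem_filter.2 ⟨(hs.mem e).2 (Or.inr he), q, hqe, hqQ⟩⟩
    · obtain ⟨e, he⟩ := hs.ne1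
      refine ⟨e, Finset.mem_filter.2 ⟨(hs.mem e).2 (Or.inl he), ?_⟩⟩
      rintro ⟨v, hv, hvQ⟩
      exact (hQ1 hvQ).2 (mem_sp.2 ⟨e, he, hv⟩)
  have hsubC : sp (E.filter (fun e => ∃ v ∈ e, v ∈ Q)) ∩ sp (E.filter (fun e => ¬ ∃ v ∈ e, v ∈ Q))
      ⊆ {x, y} := by
    intro v hv
    rw [Finset.mem_inter, mem_sp, mem_sp] at hv
    obtain ⟨⟨e1, he1, hv1⟩, ⟨e2, he2, hv2⟩⟩ := hv
    rw [Finset.mem_filter] at he1 he2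
    have hvQ : v ∉ Q := fun hvQ => he2.2 ⟨v, hv2, hvQ⟩
    obtain ⟨he1, w, hw, hwQ⟩ := he1
    have he1E2 : e1 ∈ E2 := by
      rcases (hs.mem e1).1 he1 with h | h
      · exact absurd (mem_sp.2 ⟨e1, h, hw⟩) (hQ1 hwQ).2
      · exact h
    rw [← hC, Finset.mem_inter]
    refine ⟨?_, mem_sp.2 ⟨e1, he1E2, hv1⟩⟩
    by_contra hv3
    apply hvQ
    refine hQ3 w hwQ v ⟨mem_sp.2 ⟨e1, he1E2, hv1⟩, hv3⟩ ?_
    have hwv : w ≠ v := by rintro rfl; exact hvQ hwQ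
    rw [mem_or_other]
    refine ⟨?_, hwv⟩
    rw [← (Sym2.mem_and_mem_iff hwv).1 ⟨hw, hv1⟩]; exact he1
  have hge := hno _ _ hspl
  have heq := Finset.eq_of_subset_of_card_le hsubC (by rw [Finset.card_pair hxy]; exact hge)
  have htouch : ∀ z, z ∈ ({x, y} : Finset V) → z ∈ sp E1 →
      Touch (fromEdgeSet (E : Set (Sym2 V))) Q {z} := by
    intro z hz hz1
    rw [← heq, Finset.mem_inter, mem_sp] at hz
    obtain ⟨e, he, hze⟩ := hz.1
    rw [Finset.mem_filter] at he
    obtain ⟨he, w, hw, hwQ⟩ := he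
    have hwz : w ≠ z := by rintro rfl; exact (hQ1 hwQ).2 hz1
    refine ⟨w, hwQ, z, rfl, ?_⟩
    rw [mem_or_other]
    refine ⟨?_, hwz⟩
    rw [← (Sym2.mem_and_mem_iff hwz).1 ⟨hw, hze⟩]; exact he
  refine planar_virtual x y Q hQ2 (htouch x (by simp) hxC.1) (htouch y (by simp) hyC.1) ?_ ?_ hpl
  · intro p hp v hadj
    rw [mem_or_other, Finset.mem_insert] at hadj
    have hp1 := (hQ1 hp).2
    rcases hadj.1 with h | h
    · have : p ∈ s(x, y) := by rw [← h]; simp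
      rw [Sym2.mem_iff] at this
      rcases this with rfl | rfl
      · exact hp1 hxC.1
      · exact hp1 hyC.1
    · exact hp1 (mem_sp.2 ⟨_, h, by simp⟩)
  · intro u v hadj
    rw [mem_or_other, Finset.mem_insert] at hadj
    rcases hadj with ⟨h | h, hne⟩
    · right
      rw [Sym2.eq_iff] at h
      exact h
    · left; rw [mem_or_other]; exact ⟨hs.sub1 h, hne⟩

/-- joins -/
def Join (x y : V) (F : Finset (Sym2 V)) : Prop :=
  x ∈ sp F ∧ y ∈ sp F ∧ ∀ e ∈ F, ∀ v ∈ e, v ≠ x → v ≠ y → ∃ e' ∈ F, e' ≠ e ∧ v ∈ e'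

open Classical in
lemma join_union {E1 E2 F1 F2 : Finset (Sym2 V)} {x y : V} (hd : ∀ e ∈ E1, e ∉ E2) (h1 : F1 ⊆ E1)
    (h2 : F2 ⊆ E2) (j1 : Join x y F1) (j2 : Join x y F2) : NL (F1 ∪ F2) := by
  have key : ∀ F1 F2 : Finset (Sym2 V), (∀ e ∈ F1, e ∉ F2) → Join x y F1 → Join x y F2 →
      ∀ e ∈ F1, ∀ v ∈ e, ∃ e' ∈ F1 ∪ F2, e' ≠ e ∧ v ∈ e' := by
    intro F1 F2 hd j1 j2 e he v hv
    by_cases hx : v = x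
    · obtain ⟨e', he', hv'⟩ := mem_sp.1 j2.1
      refine ⟨e', Finset.mem_union_right _ he', ?_, hx ▸ hv'⟩
      rintro rfl; exact hd _ he he'
    · by_cases hy : v = y
      · obtain ⟨e', he', hv'⟩ := mem_sp.1 j2.2.1
        refine ⟨e', Finset.mem_union_right _ he', ?_, hy ▸ hv'⟩
        rintro rfl; exact hd _ he he'
      · obtain ⟨e', he', hne, hv'⟩ := j1.2.2 e he v hv hx hy
        exact ⟨e', Finset.mem_union_left _ he', hne, hv'⟩
  intro e he v hv
  rcases Finset.mem_union.1 he with he | he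
  · exact key F1 F2 (fun e a b => hd e (h1 a) (h2 b)) j1 j2 e he v hv
  · rw [Finset.union_comm]
    exact key F2 F1 (fun e a b => hd e (h1 b) (h2 a)) j2 j1 e he v hv

open Classical in
lemma join_of_nl {E1 F : Finset (Sym2 V)} {x y : V} (hF : F ⊆ insert s(x, y) E1) (hnl : NL F)
    (he : s(x, y) ∈ F) : F.erase s(x, y) ⊆ E1 ∧ Join x y (F.erase s(x, y)) := by
  refine ⟨?_, ?_, ?_, ?_⟩
  · intro e h
    rw [Finset.mem_erase] at h
    exact (Finset.mem_insert.1 (hF h.2)).resolve_left h.1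
  · obtain ⟨e', h1, h2, h3⟩ := hnl _ he x (by simp)
    exact mem_sp.2 ⟨e', Finset.mem_erase.2 ⟨h2, h1⟩, h3⟩
  · obtain ⟨e', h1, h2, h3⟩ := hnl _ he y (by simp)
    exact mem_sp.2 ⟨e', Finset.mem_erase.2 ⟨h2, h1⟩, h3⟩
  · intro e h v hv hx hy
    rw [Finset.mem_erase] at h
    obtain ⟨e', h1, h2, h3⟩ := hnl e h.2 v hv
    refine ⟨e', Finset.mem_erase.2 ⟨?_, h1⟩, h2, h3⟩
    rintro rfl
    rw [Sym2.mem_iff] at h3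
    exact h3.elim hx hy

open Classical in
lemma join_part {E E1 E2 : Finset (Sym2 V)} (hnl : NL E) (hs : Spl E E1 E2) {x y : V}
    (hC : sp E1 ∩ sp E2 = {x, y}) : Join x y E2 := by
  have hxC : x ∈ sp E1 ∩ sp E2 := by rw [hC]; simp
  have hyC : y ∈ sp E1 ∩ sp E2 := by rw [hC]; simp
  rw [Finset.mem_inter] at hxC hyC
  refine ⟨hxC.2, hyC.2, ?_⟩
  intro e he v hv hx hy
  obtain ⟨e', h1, h2, h3⟩ := hnl e ((hs.mem e).2 (Or.inr he)) v hv
  refine ⟨e', ?_, h2, h3⟩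
  rcases (hs.mem e').1 h1 with h | h
  · exfalso
    have : v ∈ sp E1 ∩ sp E2 := Finset.mem_inter.2 ⟨mem_sp.2 ⟨e', h, h3⟩, mem_sp.2 ⟨e, he, hv⟩⟩
    rw [hC] at this
    simp [hx, hy] at this
  · exact h

open Classical in
lemma sp_insert_virtual {E1 : Finset (Sym2 V)} {x y : V} (hx : x ∈ sp E1) (hy : y ∈ sp E1) :
    sp (insert s(x, y) E1) = sp E1 := by
  ext v
  simp only [mem_sp, Finset.mem_insert]
  constructor
  · rintro ⟨e, rfl | he, hv⟩
    · rw [Sym2.mem_iff] at hv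
      rcases hv with rfl | rfl
      · exact mem_sp.1 hx
      · exact mem_sp.1 hy
    · exact ⟨e, he, hv⟩
  · rintro ⟨e, he, hv⟩; exact ⟨e, Or.inr he, hv⟩

lemma two_edges {E E1 E2 : Finset (Sym2 V)} (hnl : NL E) (hs : Spl E E1 E2) {q : V}
    (hq : q ∈ sp E1) (hq' : q ∉ sp E2) : 2 ≤ E1.card := by
  obtain ⟨e, he, hqe⟩ := mem_sp.1 hq
  obtain ⟨e', h1, h2, h3⟩ := hnl e (hs.sub1 he) q hqe
  refine Finset.one_lt_card.2 ⟨e, he, e', ?_, h2.symm⟩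
  rcases (hs.mem e').1 h1 with h | h
  · exact h
  · exact absurd (mem_sp.2 ⟨e', h, h3⟩) hq'

open Classical in
lemma red_sep2_edge {E E1 E2 : Finset (Sym2 V)} {ℓ : Sym2 V → ℤ} {g : ℤ} (hg : 0 ≤ g)
    (h : Good E ℓ g) (hnl : NL E)
    (ih : IHyp V g E.card) (hmn : (sp E).card ≤ E.card) (hs : Spl E E1 E2) {x y : V} (hxy : x ≠ y)
    (hC : sp E1 ∩ sp E2 = {x, y}) {q1 q2 : V} (hq1 : q1 ∈ sp E1) (hq1' : q1 ∉ sp E2)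
    (hq2 : q2 ∈ sp E2) (hq2' : q2 ∉ sp E1) (he : s(x, y) ∈ E2)
    (hlight : ∀ e ∈ E, 2 * ℓ e < g) : EUL E ℓ g := by
  have c1 := hs.card
  have c2 := hs.spcard
  have k1 := two_edges hnl hs hq1 hq1'
  have k2 := two_edges hnl hs.symm hq2 hq2'
  have hxC : x ∈ sp E1 ∩ sp E2 := by rw [hC]; simp
  have hyC : y ∈ sp E1 ∩ sp E2 := by rw [hC]; simp
  rw [hC, Finset.card_pair hxy] at c2
  rw [Finset.mem_inter] at hxC hyC
  have hnot : s(x, y) ∉ E1 := fun h => hs.disj _ h he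
  have c3 : (insert s(x, y) E1).card = E1.card + 1 := Finset.card_insert_of_notMem hnot
  have c4 : sp (insert s(x, y) E1) = sp E1 := sp_insert_virtual hxC.1 hyC.1
  have hsub : insert s(x, y) E1 ⊆ E := Finset.insert_subset (hs.symm.sub1 he) hs.sub1
  by_cases h1 : (sp E1).card ≤ E1.card + 1
  · by_cases h2 : (sp E2).card ≤ E2.card
    · have i1 := ih (insert s(x, y) E1) ℓ (by omega) (h.sub hsub) (by rw [c4]; omega) (by omega)
      have i2 := ih E2 ℓ (by omega) (h.sub hs.symm.sub1) h2 (by omega)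
      unfold EUL at *
      rw [Finset.sum_insert hnot, c4, c3] at i1
      rw [hs.sum ℓ]
      have := hlight _ (hs.symm.sub1 he)
      have h3 : ((E.card : ℤ) - (sp E).card + 2) + 1 = (((E1.card + 1 : ℕ) : ℤ) - (sp E1).card + 2) +
          ((E2.card : ℤ) - (sp E2).card + 2) := by omega
      have h4 : g * ((E.card : ℤ) - (sp E).card + 2) + g =
          g * (((E1.card + 1 : ℕ) : ℤ) - (sp E1).card + 2) +
          g * ((E2.card : ℤ) - (sp E2).card + 2) := by
        rw [← mul_add, ← h3]; ring
      linarith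
    · exact use_sub hg h hsub (by omega) ih (by omega) hmn (by rw [c4]; omega)
  · exact use_sub hg h hs.symm.sub1 (by omega) ih (by omega) hmn (by omega)

open Classical in
lemma red_sep2_virt {E E1 E2 : Finset (Sym2 V)} {ℓ : Sym2 V → ℤ} {g : ℤ} (hg : 0 ≤ g)
    (h : Good E ℓ g) (hnl : NL E)
    (ih : IHyp V g E.card) (hmn : (sp E).card ≤ E.card) (hs : Spl E E1 E2) {x y : V} (hxy : x ≠ y)
    (hC : sp E1 ∩ sp E2 = {x, y}) {q1 q2 : V} (hq1 : q1 ∈ sp E1) (hq1' : q1 ∉ sp E2)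
    (hq2 : q2 ∈ sp E2) (hq2' : q2 ∉ sp E1) (he : s(x, y) ∉ E)
    (hno : ∀ A B, Spl E A B → 2 ≤ (sp A ∩ sp B).card) : EUL E ℓ g := by
  have c1 := hs.card
  have c2 := hs.spcard
  have k1 := two_edges hnl hs hq1 hq1'
  have k2 := two_edges hnl hs.symm hq2 hq2'
  have hC' : sp E2 ∩ sp E1 = {x, y} := by rw [Finset.inter_comm]; exact hC
  have pl1 := virt_planar h.nd h.pl hs x y hxy hC q2 hq2 hq2' hno
  have pl2 := virt_planar h.nd h.pl hs.symm x y hxy hC' q1 hq1 hq1' hno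
  have hxC : x ∈ sp E1 ∩ sp E2 := by rw [hC]; simp
  have hyC : y ∈ sp E1 ∩ sp E2 := by rw [hC]; simp
  rw [hC, Finset.card_pair hxy] at c2
  rw [Finset.mem_inter] at hxC hyC
  have hn1 : s(x, y) ∉ E1 := fun h => he (hs.sub1 h)
  have hn2 : s(x, y) ∉ E2 := fun h => he (hs.symm.sub1 h)
  have d1 : (insert s(x, y) E1).card = E1.card + 1 := Finset.card_insert_of_notMem hn1
  have d2 : (insert s(x, y) E2).card = E2.card + 1 := Finset.card_insert_of_notMem hn2
  have f1 : sp (insert s(x, y) E1) = sp E1 := sp_insert_virtual hxC.1 hyC.1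
  have f2 : sp (insert s(x, y) E2) = sp E2 := sp_insert_virtual hxC.2 hyC.2
  by_cases h1 : (sp E1).card ≤ E1.card + 1
  swap
  · exact use_sub hg h hs.symm.sub1 (by omega) ih (by omega) hmn (by omega)
  by_cases h2 : (sp E2).card ≤ E2.card + 1
  swap
  · exact use_sub hg h hs.sub1 (by omega) ih (by omega) hmn (by omega)
  obtain ⟨Pj, hPj, hmin⟩ := Finset.exists_min_image (E2.powerset.filter (fun F => Join x y F))
    (fun F => ∑ e ∈ F, ℓ e) ⟨E2, Finset.mem_filter.2 ⟨Finset.mem_powerset_self _,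
      join_part hnl hs hC⟩⟩
  rw [Finset.mem_filter, Finset.mem_powerset] at hPj
  obtain ⟨a, ha1, ha2, ha3, ha4⟩ : ∃ a : ℤ, 0 ≤ a ∧ a ≤ g ∧ a ≤ ∑ e ∈ Pj, ℓ e ∧
      (a = g ∨ a = ∑ e ∈ Pj, ℓ e) := by
    have hnn : 0 ≤ ∑ e ∈ Pj, ℓ e := Finset.sum_nonneg (fun e _ => h.nn e)
    rcases le_total g (∑ e ∈ Pj, ℓ e) with hle | hle
    · exact ⟨g, hg, le_rfl, hle, Or.inl rfl⟩
    · exact ⟨_, hnn, hle, le_rfl, Or.inr rfl⟩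
  have updsum : ∀ (b : ℤ) (F : Finset (Sym2 V)), s(x, y) ∉ F →
      ∑ e ∈ F, Function.update ℓ s(x, y) b e = ∑ e ∈ F, ℓ e := by
    intro b F hF
    apply Finset.sum_congr rfl
    intro e hef
    rw [Function.update_of_ne]
    rintro rfl; exact hF hef
  have updnn : ∀ b : ℤ, 0 ≤ b → ∀ e, 0 ≤ Function.update ℓ s(x, y) b e := by
    intro b hb e
    by_cases hh : e = s(x, y)
    · subst hh; simpa using hb
    · rw [Function.update_of_ne hh]; exact h.nn e
  have hnd : ∀ A ⊆ E, ∀ e ∈ insert s(x, y) A, ¬ e.IsDiag := by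
    intro A hA e hh
    rcases Finset.mem_insert.1 hh with rfl | hh
    · simpa using hxy
    · exact h.nd e (hA hh)
  have g1 : Good (insert s(x, y) E1) (Function.update ℓ s(x, y) a) g := by
    refine ⟨hnd E1 hs.sub1, pl1, updnn a ha1, ?_⟩
    intro F hF hFne hFnl
    by_cases heF : s(x, y) ∈ F
    · obtain ⟨j1, j2⟩ := join_of_nl hF hFnl heF
      rw [← Finset.add_sum_erase F _ heF, updsum _ _ (Finset.notMem_erase _ _),
        Function.update_self]
      have hnn : 0 ≤ ∑ e ∈ F.erase s(x, y), ℓ e := Finset.sum_nonneg (fun e _ => h.nn e)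
      rcases ha4 with rfl | rfl
      · linarith
      · have hu := join_union hs.disj j1 hPj.1 j2 hPj.2
        have := h.met _ (Finset.union_subset (j1.trans hs.sub1) (hPj.1.trans hs.symm.sub1)) ?_ hu
        · rw [Finset.sum_union] at this
          · linarith
          · exact Finset.disjoint_left.2 (fun e ha hb => hs.disj e (j1 ha) (hPj.1 hb))
        · obtain ⟨e, hee, -⟩ := mem_sp.1 hPj.2.1
          exact ⟨e, Finset.mem_union_right _ hee⟩
    · rw [updsum _ _ heF]
      refine h.met F ?_ hFne hFnl
      intro e hh
      rcases Finset.mem_insert.1 (hF hh) with rfl | hh'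
      · exact absurd hh heF
      · exact hs.sub1 hh'
  have g2 : Good (insert s(x, y) E2) (Function.update ℓ s(x, y) (g - a)) g := by
    refine ⟨hnd E2 hs.symm.sub1, pl2, updnn _ (by linarith), ?_⟩
    intro F hF hFne hFnl
    by_cases heF : s(x, y) ∈ F
    · obtain ⟨j1, j2⟩ := join_of_nl hF hFnl heF
      rw [← Finset.add_sum_erase F _ heF, updsum _ _ (Finset.notMem_erase _ _),
        Function.update_self]
      have := hmin _ (Finset.mem_filter.2 ⟨Finset.mem_powerset.2 j1, j2⟩)
      linarith
    · rw [updsum _ _ heF]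
      refine h.met F ?_ hFne hFnl
      intro e hh
      rcases Finset.mem_insert.1 (hF hh) with rfl | hh'
      · exact absurd hh heF
      · exact hs.symm.sub1 hh'
  have i1 := ih _ _ (by omega) g1 (by rw [f1]; omega) (by omega)
  have i2 := ih _ _ (by omega) g2 (by rw [f2]; omega) (by omega)
  unfold EUL at *
  rw [Finset.sum_insert hn1, f1, d1, updsum _ _ hn1, Function.update_self] at i1
  rw [Finset.sum_insert hn2, f2, d2, updsum _ _ hn2, Function.update_self] at i2
  rw [hs.sum ℓ]
  have h3 : ((E.card : ℤ) - (sp E).card + 2) + 2 = (((E1.card + 1 : ℕ) : ℤ) - (sp E1).card + 2) +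
      (((E2.card + 1 : ℕ) : ℤ) - (sp E2).card + 2) := by omega
  have h4 : g * ((E.card : ℤ) - (sp E).card + 2) + 2 * g =
      g * (((E1.card + 1 : ℕ) : ℤ) - (sp E1).card + 2) +
      g * (((E2.card + 1 : ℕ) : ℤ) - (sp E2).card + 2) := by
    rw [← mul_add, ← h3]; ring
  linarith

open Classical in
/-- all separations of order at most two reduce -/
lemma red_sep {E : Finset (Sym2 V)} {ℓ : Sym2 V → ℤ} {g : ℤ} (hg : 0 ≤ g)
    (h : Good E ℓ g) (hnl : NL E) (ih : IHyp V g E.card) (hmn : (sp E).card ≤ E.card)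
    (hlight : ∀ e ∈ E, 2 * ℓ e < g)
    (X : Set V) (p : V) (hp : p ∈ X) (hX : ∀ v ∈ X, v ∈ sp E) (y0 : V) (hy0 : y0 ∈ sp E)
    (hy0X : y0 ∉ X) (hy0a : ∀ v ∈ X, s(v, y0) ∉ E) (s t : V)
    (hst : ∀ v ∈ X, ∀ n ∉ X, s(v, n) ∈ E → n = s ∨ n = t) : EUL E ℓ g := by
  by_cases hno : ∀ A B, Spl E A B → 2 ≤ (sp A ∩ sp B).card
  swap
  · push Not at hno
    obtain ⟨A, B, hAB, hc⟩ := hno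
    exact red_sep1 hg h ih hmn hAB (by omega)
  have hy0e : ∀ e ∈ E, y0 ∈ e → ¬ ∃ v ∈ e, v ∈ X := by
    rintro e he hye ⟨v, hv, hvX⟩
    have hne : v ≠ y0 := by rintro rfl; exact hy0X hvX
    apply hy0a v hvX
    rw [← (Sym2.mem_and_mem_iff hne).1 ⟨hv, hye⟩]; exact he
  have hs : Spl E (E.filter (fun e => ∃ v ∈ e, v ∈ X)) (E.filter (fun e => ¬ ∃ v ∈ e, v ∈ X)) := by
    refine ⟨?_, ?_, ?_, ?_⟩
    · intro e
      rw [Finset.mem_filter, Finset.mem_filter, ← and_or_left, and_iff_left (Classical.em _)]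
    · intro e h1 h2
      exact (Finset.mem_filter.1 h2).2 (Finset.mem_filter.1 h1).2
    · obtain ⟨e, he, hqe⟩ := mem_sp.1 (hX p hp)
      exact ⟨e, Finset.mem_filter.2 ⟨he, p, hqe, hp⟩⟩
    · obtain ⟨e, he, hye⟩ := mem_sp.1 hy0
      exact ⟨e, Finset.mem_filter.2 ⟨he, hy0e e he hye⟩⟩
  have hsub : sp (E.filter (fun e => ∃ v ∈ e, v ∈ X)) ∩ sp (E.filter (fun e => ¬ ∃ v ∈ e, v ∈ X))
      ⊆ {s, t} := by
    intro v hv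
    rw [Finset.mem_inter, mem_sp, mem_sp] at hv
    obtain ⟨⟨e1, he1, hv1⟩, ⟨e2, he2, hv2⟩⟩ := hv
    rw [Finset.mem_filter] at he1 he2
    have hvQ : v ∉ X := fun hvQ => he2.2 ⟨v, hv2, hvQ⟩
    obtain ⟨he1, w, hw, hwX⟩ := he1
    have hwv : w ≠ v := by rintro rfl; exact hvQ hwX
    rw [(Sym2.mem_and_mem_iff hwv).1 ⟨hw, hv1⟩] at he1
    simpa using hst w hwX v hvQ he1
  have hge := hno _ _ hs
  have hst2 : s ≠ t := by
    rintro rfl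
    have := Finset.card_le_card hsub
    rw [Finset.pair_eq_singleton, Finset.card_singleton] at this; omega
  have hC := Finset.eq_of_subset_of_card_le hsub (by rw [Finset.card_pair hst2]; exact hge)
  have q1 : p ∈ sp (E.filter (fun e => ∃ v ∈ e, v ∈ X)) := by
    obtain ⟨e, he, hqe⟩ := mem_sp.1 (hX p hp)
    exact mem_sp.2 ⟨e, Finset.mem_filter.2 ⟨he, p, hqe, hp⟩, hqe⟩
  have q1' : p ∉ sp (E.filter (fun e => ¬ ∃ v ∈ e, v ∈ X)) := by
    intro hh
    obtain ⟨e, he, hpe⟩ := mem_sp.1 hh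
    exact (Finset.mem_filter.1 he).2 ⟨p, hpe, hp⟩
  have q2 : y0 ∈ sp (E.filter (fun e => ¬ ∃ v ∈ e, v ∈ X)) := by
    obtain ⟨e, he, hye⟩ := mem_sp.1 hy0
    exact mem_sp.2 ⟨e, Finset.mem_filter.2 ⟨he, hy0e e he hye⟩, hye⟩
  have q2' : y0 ∉ sp (E.filter (fun e => ∃ v ∈ e, v ∈ X)) := by
    intro hh
    obtain ⟨e, he, hpe⟩ := mem_sp.1 hh
    rw [Finset.mem_filter] at he
    exact hy0e e he.1 hpe he.2
  by_cases hstE : s(s, t) ∈ E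
  · rcases (hs.mem _).1 hstE with h1 | h1
    · exact red_sep2_edge hg h hnl ih hmn hs.symm hst2 (by rw [Finset.inter_comm]; exact hC)
        q2 q2' q1 q1' h1 hlight
    · exact red_sep2_edge hg h hnl ih hmn hs hst2 hC q1 q1' q2 q2' h1 hlight
  · exact red_sep2_virt hg h hnl ih hmn hs hst2 hC q1 q1' q2 q2' hstE hno

/-- Theorem S: weighted Euler inequality. -/
theorem euler_all (g : ℤ) (hg : 0 ≤ g) (m : ℕ) : IHyp V g m := by
  classical
  induction m with
  | zero => intro E ℓ h; omega
  | succ m ihm =>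
  intro E ℓ hlt h hmn hpos
  have ih : IHyp V g E.card := fun E' ℓ' h' => ihm E' ℓ' (by omega)
  by_cases hnl : NL E
  swap
  · exact red_leaf hg h ih hmn hpos hnl
  by_cases hmn2 : (sp E).card = E.card
  · have := h.met E le_rfl (Finset.card_pos.1 hpos) hnl
    unfold EUL
    rw [hmn2]; linarith
  have hlt2 : (sp E).card < E.card := by omega
  by_cases hlight : ∀ e ∈ E, 2 * ℓ e < g
  swap
  · push Not at hlight
    obtain ⟨e, he, hh⟩ := hlight
    exact red_heavy hg h ih hlt2 e he hh
  have hadj : ∀ u v, (fromEdgeSet (E : Set (Sym2 V))).Adj u v ↔ s(u, v) ∈ E := by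
    intro u v
    rw [mem_or_other]
    refine ⟨fun h => h.1, fun hh => ⟨hh, ?_⟩⟩
    rintro rfl
    exact h.nd _ hh (by simp)
  by_cases hT : TC (fromEdgeSet (E : Set (Sym2 V))) (sp E : Set V)
  · have hE : ∀ e, e ∈ E ↔ e ∈ (fromEdgeSet (E : Set (Sym2 V))).edgeSet := by
      intro e
      induction e with
      | _ u v => rw [mem_edgeSet, hadj]
    have hne : (sp E : Set V).Nonempty := by
      obtain ⟨e, he⟩ := Finset.card_pos.1 hpos
      exact ⟨_, mem_sp.2 ⟨e, he, Sym2.out_fst_mem e⟩⟩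
    have := euler3 hE hT h.pl hne (by rw [Set.ncard_coe_finset]; exact hmn) ℓ h.nn g hg h.met
    rw [Set.ncard_coe_finset] at this
    exact this
  by_contra hcon
  apply hT
  have hsub : ∀ u v, s(u, v) ∈ E → u ∈ sp E := fun u v huv => mem_sp.2 ⟨_, huv, by simp⟩
  refine ⟨fun u v huv => hsub u v ((hadj u v).1 huv), ?_, ?_⟩
  · rintro X hXW ⟨p, hp⟩ ⟨y0, hy0, hy0X, hy0a⟩ s t
    by_contra hno
    push Not at hno
    apply hcon
    refine red_sep hg h hnl ih hmn hlight X p hp (fun v hv => hXW hv) y0 hy0 hy0X ?_ s t ?_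
    · intro v hv hh; exact hy0a v hv ((hadj _ _).2 hh)
    · intro v hv n hn hvn
      by_contra hst
      push Not at hst
      refine hno n ?_ hn hst.1 hst.2 v hv ((hadj _ _).2 hvn)
      exact hsub n v (by rw [Sym2.eq_swap]; exact hvn)
  · intro v hv s t
    by_contra hno
    push Not at hno
    have hno' : ∀ n, s(v, n) ∈ E → n = s ∨ n = t := by
      intro n hn
      by_cases hs : n = s
      · exact Or.inl hs
      · exact Or.inr (hno n ((hadj _ _).2 hn) hs)
    obtain ⟨y0, hy0, hy1⟩ : ∃ y0 ∈ sp E, y0 ∉ ({v, s, t} : Finset V) := by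
      by_contra hall
      push Not at hall
      have hsubs : sp E ⊆ {v, s, t} := hall
      have hEs : E ⊆ {s(v, s), s(v, t), s(s, t)} := by
        intro e he
        induction e with
        | _ a b =>
        have ha := hsubs (hsub a b he)
        have hb := hsubs (hsub b a (by rw [Sym2.eq_swap]; exact he))
        have hab : a ≠ b := by rintro rfl; exact h.nd _ he (by simp)
        simp only [Finset.mem_insert, Finset.mem_singleton] at ha hb ⊢
        simp only [Sym2.eq_iff]
        rcases ha with rfl | rfl | rfl <;> rcases hb with rfl | rfl | rfl <;> simp at hab ⊢
      have hE3 := (Finset.card_le_card hEs).trans Finset.card_le_three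
      obtain ⟨e, he, hve⟩ := mem_sp.1 hv
      obtain ⟨e', he', hne, hve'⟩ := hnl e he v hve
      obtain ⟨a, hav, rfl⟩ := other_end (h.nd e he) hve
      obtain ⟨b, hbv, rfl⟩ := other_end (h.nd e' he') hve'
      have hab : a ≠ b := by rintro rfl; exact hne rfl
      have : 2 < (sp E).card := Finset.two_lt_card.2
        ⟨v, hv, a, mem_sp.2 ⟨_, he, by simp⟩, b, mem_sp.2 ⟨_, he', by simp⟩, hav.symm, hbv.symm, hab⟩
      omega
    simp only [Finset.mem_insert, Finset.mem_singleton, not_or] at hy1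
    apply hcon
    refine red_sep hg h hnl ih hmn hlight {v} v rfl ?_ y0 hy0 (by simpa using hy1.1) ?_ s t ?_
    · rintro _ rfl; exact hv
    · rintro _ rfl hh
      rcases hno' _ hh with h | h
      · exact hy1.2.1 h
      · exact hy1.2.2 h
    · rintro _ rfl n - hn; exact hno' n hn

end SCx

open SimpleGraph

namespace SCx
variable {V : Type*}

lemma acyc_end [Fintype V] {H : SimpleGraph V} (hac : H.IsAcyclic) {a b : V} (hab : H.Adj a b)
    (hd : ∀ a b, H.Adj a b → ∃ c, H.Adj b c ∧ c ≠ a) : False := by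
  classical
  have key : ∀ n : ℕ, ∃ (u v : V) (p : H.Walk u v), p.IsPath ∧ p.length = n + 1 := by
    intro n
    induction n with
    | zero =>
      refine ⟨a, b, Walk.cons hab Walk.nil, ?_, by simp⟩
      simp [hab.ne]
    | succ n ih =>
      obtain ⟨u, v, p, hp, hl⟩ := ih
      have hnn : ¬ p.Nil := by
        intro h
        have := Walk.nil_iff_length_eq.1 h; omega
      have hadj := p.adj_penultimate hnn
      obtain ⟨c, hc, hne⟩ := hd _ _ hadj
      have hcs : c ∉ p.support := by
        intro hcs
        exact hne (hac.eq_penultimate_of_adj_end hp hc hcs)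
      exact ⟨u, c, p.concat hc, hp.concat hcs hc, by simp [hl]⟩
  obtain ⟨u, v, p, hp, hl⟩ := key (Fintype.card V)
  have := hp.length_lt
  omega

lemma nl_card [Fintype V] {G : SimpleGraph V} {g : ℕ} (hg : (g : ℕ∞) ≤ G.egirth) {F : Finset (Sym2 V)}
    (hF : ∀ e ∈ F, e ∈ G.edgeSet) (hne : F.Nonempty) (hnl : NL F) : g ≤ F.card := by
  classical
  have hadj : ∀ u v, (fromEdgeSet (F : Set (Sym2 V))).Adj u v ↔ s(u, v) ∈ F := by
    intro u v
    rw [mem_or_other]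
    refine ⟨fun h => h.1, fun hh => ⟨hh, ?_⟩⟩
    exact (mem_edgeSet G).1 (hF _ hh) |>.ne
  have hnac : ¬ (fromEdgeSet (F : Set (Sym2 V))).IsAcyclic := by
    intro hac
    obtain ⟨e, he⟩ := hne
    induction e with
    | _ a b =>
    refine acyc_end hac ((hadj a b).2 he) ?_
    intro a b hab
    rw [hadj] at hab
    obtain ⟨e', he', hne', hb⟩ := hnl _ hab b (by simp)
    obtain ⟨c, rfl⟩ := Sym2.mem_iff_exists.1 hb
    refine ⟨c, (hadj _ _).2 he', ?_⟩
    rintro rfl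
    exact hne' (Sym2.eq_swap)
  have hle : fromEdgeSet (F : Set (Sym2 V)) ≤ G := by
    intro u v huv
    exact hF _ ((hadj u v).1 huv)
  unfold IsAcyclic at hnac
  push Not at hnac
  obtain ⟨a, w, hw⟩ := hnac
  have h1 : (g : ℕ∞) ≤ w.length := hg.trans ((egirth_anti hle).trans (egirth_le_length hw))
  have h1' : g ≤ w.length := by exact_mod_cast h1
  have h2 : w.edges.toFinset ⊆ F := by
    intro e he
    have := w.edges_subset_edgeSet (List.mem_toFinset.1 he)
    induction e with
    | _ u v => exact (hadj u v).1 this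
  have h3 := Finset.card_le_card h2
  rw [List.toFinset_card_of_nodup hw.edges_nodup, Walk.length_edges] at h3
  omega

open Classical in
/-- Part B: a long thread. -/
theorem exists_thread [Fintype V] {H : SimpleGraph V} (hP : IsPlanar H) {g l : ℕ}
    (hg : (g : ℕ∞) ≤ H.egirth) (hgl : 6 * l ≤ g) (hg0 : 0 < g)
    (hdeg : ∀ a b, H.Adj a b → ∃ c, H.Adj b c ∧ c ≠ a) (hne : ∃ a b, H.Adj a b) :
    ∃ v : ℕ → V, (∀ i ≤ l, H.Adj (v i) (v (i + 1))) ∧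
      ∀ i < l, v (i + 2) ≠ v i ∧ ∀ w, H.Adj (v (i + 1)) w → w = v i ∨ w = v (i + 2) := by
  by_contra hcon
  have hex : ∀ p : V × V, ∃ c, H.Adj p.1 p.2 → H.Adj p.1 c ∧ c ≠ p.2 := by
    rintro ⟨a, b⟩
    by_cases h : H.Adj a b
    · obtain ⟨c, h1, h2⟩ := hdeg b a h.symm
      exact ⟨c, fun _ => ⟨h1, h2⟩⟩
    · exact ⟨a, fun h' => absurd h' h⟩
  choose o ho using hex
  let pr : V × V → V × V := fun p => (o p, p.1)
  let two : V → Prop := fun v => H.degree v = 2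
  have hdg : ∀ a b, H.Adj a b → 2 ≤ H.degree a := by
    intro a b hab
    obtain ⟨c, h1, h2⟩ := hdeg b a hab.symm
    rw [← card_neighborFinset_eq_degree]
    exact Finset.one_lt_card.2 ⟨b, by simpa using hab, c, by simpa using h1, h2.symm⟩
  have htwo : ∀ a b c, two a → H.Adj a b → H.Adj a c → b ≠ c → ∀ w, H.Adj a w → w = b ∨ w = c := by
    intro a b c h2 hb hc hbc w hw
    by_contra hno
    push Not at hno
    have : 2 < (H.neighborFinset a).card := Finset.two_lt_card.2 ⟨w, by simpa using hw, b,
      by simpa using hb, c, by simpa using hc, hno.1, hno.2, hbc⟩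
    rw [card_neighborFinset_eq_degree] at this
    have h2' : H.degree a = 2 := h2
    omega
  let dt : Finset (V × V) := Finset.univ.filter (fun p => H.Adj p.1 p.2)
  have mdt : ∀ p, p ∈ dt ↔ H.Adj p.1 p.2 := fun p => by simp [dt]
  have prd : ∀ p ∈ dt, pr p ∈ dt := by
    intro p hp
    rw [mdt] at hp ⊢
    exact (ho p hp).1.symm
  have prdi : ∀ i, ∀ p ∈ dt, pr^[i] p ∈ dt := by
    intro i
    induction i with
    | zero => intro p hp; exact hp
    | succ i ih => intro p hp; rw [Function.iterate_succ_apply]; exact ih _ (prd p hp)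
  let A : ℕ → Finset (V × V) := fun j =>
    dt.filter (fun p => (∀ i < j, two ((pr^[i] p).1)) ∧ ¬ two ((pr^[j] p).1))
  have hA : ∀ j, (A (j + 1)).card ≤ (A j).card := by
    intro j
    apply Finset.card_le_card_of_injOn pr
    · intro p hp
      have hp' := Finset.mem_filter.1 (Finset.mem_coe.1 hp)
      apply Finset.mem_coe.2
      refine Finset.mem_filter.2 ⟨prd p hp'.1, ?_, hp'.2.2⟩
      intro i hi
      exact hp'.2.1 (i + 1) (by omega)
    · intro p hp q hq hpq
      have hp' := Finset.mem_filter.1 (Finset.mem_coe.1 hp)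
      have hq' := Finset.mem_filter.1 (Finset.mem_coe.1 hq)
      have e1 : o p = o q := congrArg Prod.fst hpq
      have e2 : p.1 = q.1 := congrArg Prod.snd hpq
      have hpd := (mdt p).1 hp'.1
      have hqd := (mdt q).1 hq'.1
      have ht : two p.1 := hp'.2.1 0 (by omega)
      have := htwo p.1 p.2 (o p) ht hpd (ho p hpd).1 (ho p hpd).2.symm q.2 (e2 ▸ hqd)
      rcases this with h | h
      · exact Prod.ext e2 h.symm
      · exact absurd (h.trans e1).symm (ho q hqd).2
  have hA0 : ∀ j, (A j).card ≤ (A 0).card := by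
    intro j
    induction j with
    | zero => exact le_rfl
    | succ j ih => exact (hA j).trans ih
  have hcov : dt ⊆ (Finset.range l).biUnion A := by
    intro p hp
    by_contra hno
    have hno' : ∀ j < l, p ∉ A j := by
      intro j hj hpj
      exact hno (Finset.mem_biUnion.2 ⟨j, Finset.mem_range.2 hj, hpj⟩)
    have hall : ∀ j < l, two ((pr^[j] p).1) := by
      intro j
      induction j using Nat.strong_induction_on with
      | _ j ih =>
      intro hj
      by_contra h
      exact hno' j hj (Finset.mem_filter.2 ⟨hp, fun i hi => ih i hi (by omega), h⟩)
    apply hcon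
    have hsucc : ∀ i, pr^[i + 1] p = pr (pr^[i] p) := fun i => Function.iterate_succ_apply' _ _ _
    have hs2 : ∀ i, (pr^[i + 1] p).2 = (pr^[i] p).1 := by
      intro i; rw [hsucc]
    have hs1 : ∀ i, (pr^[i + 1] p).1 = o (pr^[i] p) := by
      intro i; rw [hsucc]
    refine ⟨fun i => (pr^[i] p).2, ?_, ?_⟩
    · intro i hi
      show H.Adj (pr^[i] p).2 (pr^[i + 1] p).2
      rw [hs2]
      exact ((mdt _).1 (prdi i p hp)).symm
    · intro i hi
      show (pr^[i + 2] p).2 ≠ (pr^[i] p).2 ∧ ∀ w, H.Adj (pr^[i + 1] p).2 w →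
        w = (pr^[i] p).2 ∨ w = (pr^[i + 2] p).2
      rw [hs2 (i + 1), hs1 i, hs2 i]
      have hd := (mdt _).1 (prdi i p hp)
      have hoo := ho _ hd
      exact ⟨hoo.2, htwo _ _ _ (hall i hi) hd hoo.1 hoo.2.symm⟩
  have hcard1 : dt.card ≤ l * (A 0).card := by
    calc dt.card ≤ _ := Finset.card_le_card hcov
      _ ≤ ∑ j ∈ Finset.range l, (A j).card := Finset.card_biUnion_le
      _ ≤ ∑ j ∈ Finset.range l, (A 0).card := Finset.sum_le_sum (fun j _ => hA0 j)
      _ = _ := by simp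
  have sumdt : ∀ Q : V → Prop, (dt.filter (fun p => Q p.1)).card =
      ∑ v, if Q v then H.degree v else 0 := by
    intro Q
    rw [Finset.card_eq_sum_card_fiberwise (f := Prod.fst) (t := Finset.univ) (by simp)]
    apply Finset.sum_congr rfl
    intro v _
    by_cases hv : Q v
    · rw [if_pos hv, ← card_neighborFinset_eq_degree]
      refine Finset.card_bij (fun p _ => p.2) ?_ ?_ ?_
      · rintro ⟨a, b⟩ h
        simp only [Finset.mem_filter, mdt] at h
        obtain ⟨⟨h1, h2⟩, rfl⟩ := h
        simpa using h1
      · rintro ⟨a, b⟩ h ⟨a', b'⟩ h' hh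
        simp only [Finset.mem_filter, mdt] at h h'
        exact Prod.ext (h.2.trans h'.2.symm) hh
      · intro b hb
        refine ⟨(v, b), ?_, rfl⟩
        simp only [Finset.mem_filter, mdt]
        exact ⟨⟨by simpa using hb, hv⟩, trivial⟩
    · rw [if_neg hv, Finset.card_eq_zero, Finset.filter_eq_empty_iff]
      rintro ⟨a, b⟩ h rfl
      exact hv (Finset.mem_filter.1 h).2
  have hdt : dt.card = 2 * H.edgeFinset.card := by
    rw [← sum_degrees_eq_twice_card_edges]
    have := sumdt (fun _ => True)
    simpa using this
  have hA0c : (A 0).card = ∑ v, if ¬ two v then H.degree v else 0 := by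
    have h := sumdt (fun v => ¬ two v)
    have e : A 0 = dt.filter (fun p => ¬ two p.1) := by ext p; simp [A]
    rw [e]; convert h
  have hsp : ∀ v, v ∈ sp H.edgeFinset ↔ H.degree v ≠ 0 := by
    intro v
    rw [mem_sp, ← Nat.pos_iff_ne_zero, degree_pos_iff_exists_adj]
    constructor
    · rintro ⟨e, he, hv⟩
      obtain ⟨w, rfl⟩ := Sym2.mem_iff_exists.1 hv
      exact ⟨w, by simpa using he⟩
    · rintro ⟨w, hw⟩
      exact ⟨s(v, w), by simpa using hw, by simp⟩
  have hspc : (sp H.edgeFinset).card = ∑ v, if H.degree v ≠ 0 then 1 else 0 := by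
    rw [Finset.sum_boole]
    simp only [Nat.cast_id]
    congr 1
    ext v; simp [hsp]
  have hineq : (A 0).card + 6 * (sp H.edgeFinset).card ≤ 6 * H.edgeFinset.card := by
    have e := sum_degrees_eq_twice_card_edges H
    have : 6 * H.edgeFinset.card = ∑ v, 3 * H.degree v := by rw [← Finset.mul_sum, e]; ring
    rw [this, hA0c, hspc, Finset.mul_sum, ← Finset.sum_add_distrib]
    apply Finset.sum_le_sum
    intro v _
    have h1 : H.degree v ≠ 0 → 2 ≤ H.degree v := by
      intro h
      obtain ⟨w, hw⟩ := (degree_pos_iff_exists_adj (G := H) v).1 (Nat.pos_of_ne_zero h)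
      exact hdg v w hw
    by_cases h0 : H.degree v = 0
    · simp [h0]
    · have := h1 h0
      by_cases h2 : H.degree v = 2
      · have : two v := h2
        simp [this, h2]
      · have : ¬ two v := h2
        rw [if_pos this, if_pos h0]; omega
  have hpos : 0 < H.edgeFinset.card := by
    obtain ⟨a, b, hab⟩ := hne
    exact Finset.card_pos.2 ⟨s(a, b), by simpa using hab⟩
  have hgood : Good H.edgeFinset (fun _ => 1) (g : ℤ) := by
    refine ⟨?_, ?_, fun _ => by norm_num, ?_⟩
    · intro e he
      exact H.not_isDiag_of_mem_edgeSet (by simpa using he)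
    · simpa using hP
    · intro F hF hFne hnl
      have := nl_card hg (fun e he => by simpa using hF he) hFne hnl
      simpa using this
  have hE := euler_all (V := V) (g : ℤ) (by positivity) (H.edgeFinset.card + 1) H.edgeFinset _
    (by omega) hgood (by omega) hpos
  unfold EUL at hE
  simp only [Finset.sum_const, nsmul_eq_mul, mul_one] at hE
  generalize H.edgeFinset.card = m at *
  generalize (sp H.edgeFinset).card = n at *
  have k1 : (2 * m : ℤ) ≤ l * (A 0).card := by
    have : 2 * m ≤ l * (A 0).card := by omega
    exact_mod_cast this
  have k2 : ((A 0).card : ℤ) + 6 * n ≤ 6 * m := by exact_mod_cast hineq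
  have k3 : (6 * l : ℤ) ≤ g := by exact_mod_cast hgl
  have k4 : (0 : ℤ) < g := by exact_mod_cast hg0
  have k5 : (0 : ℤ) ≤ (A 0).card := by positivity
  have k6 : (n : ℤ) ≤ m := by linarith
  nlinarith [mul_le_mul_of_nonneg_right k3 (sub_nonneg.2 k6), mul_le_mul_of_nonneg_left
    (by linarith : ((A 0).card : ℤ) ≤ 6 * (m - n)) (by positivity : (0 : ℤ) ≤ l)]

end SCx

open SimpleGraph

/-- a walk of length at most `m` -/
def WL {V : Type*} (G : SimpleGraph V) (m : ℕ) (a y : V) : Prop := ∃ p : G.Walk a y, p.length ≤ m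

namespace SCx
variable {V : Type*} {G : SimpleGraph V}

lemma _root_.WL.refl (m : ℕ) (a : V) : WL G m a a := ⟨Walk.nil, by simp⟩

lemma _root_.WL.mono {m m' : ℕ} {a y : V} (h : WL G m a y) (hm : m ≤ m') : WL G m' a y := by
  obtain ⟨p, hp⟩ := h
  exact ⟨p, hp.trans hm⟩

lemma _root_.WL.symm {m : ℕ} {a y : V} (h : WL G m a y) : WL G m y a := by
  obtain ⟨p, hp⟩ := h
  exact ⟨p.reverse, by simpa using hp⟩

lemma _root_.WL.cons {m : ℕ} {a b y : V} (hab : G.Adj a b) (h : WL G m b y) : WL G (m + 1) a y := by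
  obtain ⟨p, hp⟩ := h
  exact ⟨Walk.cons hab p, by simpa using hp⟩

lemma _root_.WL.zero {a y : V} (h : WL G 0 a y) : a = y := by
  obtain ⟨p, hp⟩ := h
  exact Walk.eq_of_length_eq_zero (p := p) (by omega)

lemma _root_.WL.succ {m : ℕ} {a y : V} (h : WL G (m + 1) a y) : a = y ∨ ∃ c, G.Adj a c ∧ WL G m c y := by
  obtain ⟨p, hp⟩ := h
  cases p with
  | nil => exact Or.inl rfl
  | cons hac q => exact Or.inr ⟨_, hac, q, by simpa using hp⟩

section
variable [Fintype V]

open Classical in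
/-- neighbours -/
noncomputable def nb (G : SimpleGraph V) (a : V) : Finset V := Finset.univ.filter (fun c => G.Adj a c)

lemma mem_nb {a c : V} : c ∈ nb G a ↔ G.Adj a c := by simp [nb]

open Classical in
/-- directed balls -/
noncomputable def Rb (G : SimpleGraph V) : ℕ → V → V → Finset V
  | 0, a, _ => {a}
  | m + 1, a, b => insert a (((nb G a).erase b).biUnion (fun c => Rb G m c a))

lemma Rb_self (m : ℕ) (a b : V) : a ∈ Rb G m a b := by
  cases m <;> simp [Rb]

lemma Rb_mono {m m' : ℕ} (h : m ≤ m') (a b : V) : Rb G m a b ⊆ Rb G m' a b := by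
  classical
  induction m generalizing m' a b with
  | zero =>
    intro y hy
    rw [Rb, Finset.mem_singleton] at hy
    rw [hy]; exact Rb_self _ _ _
  | succ m ih =>
    obtain ⟨m', rfl⟩ : ∃ q, m' = q + 1 := ⟨m' - 1, by omega⟩
    intro y hy
    simp only [Rb, Finset.mem_insert, Finset.mem_biUnion] at hy ⊢
    rcases hy with hy | ⟨c, hc, hy⟩
    · exact Or.inl hy
    · exact Or.inr ⟨c, hc, ih (by omega) c a hy⟩

lemma Rb_card {d : ℕ} (hd : ∀ a, (nb G a).card ≤ d + 1) (m : ℕ) (a b : V) (hab : G.Adj a b) :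
    (Rb G m a b).card ≤ ∑ i ∈ Finset.range (m + 1), d ^ i := by
  classical
  induction m generalizing a b with
  | zero => simp [Rb]
  | succ m ih =>
    rw [Rb]
    refine (Finset.card_insert_le _ _).trans ?_
    have h1 : ((nb G a).erase b).card ≤ d := by
      have := Finset.card_erase_add_one (mem_nb.2 hab)
      have := hd a
      omega
    have h2 := Finset.card_biUnion_le_card_mul ((nb G a).erase b) (fun c => Rb G m c a) _
      (fun c hc => ih c a (mem_nb.1 (Finset.mem_of_mem_erase hc)).symm)
    rw [Finset.sum_range_succ' (fun i => d ^ i) (m + 1)]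
    have h3 : ∑ i ∈ Finset.range (m + 1), d ^ (i + 1) = d * ∑ i ∈ Finset.range (m + 1), d ^ i := by
      rw [Finset.mul_sum]; exact Finset.sum_congr rfl (fun i _ => by ring)
    rw [h3]
    have := Nat.mul_le_mul_right (∑ i ∈ Finset.range (m + 1), d ^ i) h1
    simp only [pow_zero]
    omega

/-- either stay in the directed ball or pass through `b` -/
lemma Rb_or {a y b : V} (m : ℕ) (h : WL G m a y) :
    y ∈ Rb G m a b ∨ ∃ m', m' + 1 ≤ m ∧ WL G m' b y := by
  classical
  induction m using Nat.strong_induction_on generalizing a b with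
  | _ m ih =>
  cases m with
  | zero =>
    left; rw [h.zero]; exact Rb_self _ _ _
  | succ m =>
    rcases h.succ with rfl | ⟨c, hac, hc⟩
    · left; exact Rb_self _ _ _
    · by_cases hcb : c = b
      · right; exact ⟨m, le_rfl, hcb ▸ hc⟩
      · rcases ih m (by omega) (a := c) (b := a) hc with h1 | ⟨m', hm', h1⟩
        · left
          simp only [Rb, Finset.mem_insert, Finset.mem_biUnion, Finset.mem_erase]
          exact Or.inr ⟨c, ⟨hcb, mem_nb.2 hac⟩, h1⟩
        · rcases ih m' (by omega) (a := a) (b := b) h1 with h2 | ⟨m2, hm2, h2⟩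
          · left; exact Rb_mono (by omega) _ _ h2
          · right; exact ⟨m2, by omega, h2⟩

open Classical in
lemma ball_card {r : ℕ} (hd : ∀ a, (nb G a).card ≤ r + 1) (k : ℕ) (p : V) :
    (Finset.univ.filter (fun y => WL G (k + 1) p y)).card ≤
      1 + (r + 1) * ∑ i ∈ Finset.range (k + 1), r ^ i := by
  have hsub : Finset.univ.filter (fun y => WL G (k + 1) p y) ⊆
      insert p ((nb G p).biUnion (fun c => Rb G k c p)) := by
    have key : ∀ m ≤ k + 1, ∀ y, WL G m p y → y ∈ insert p ((nb G p).biUnion (fun c => Rb G k c p)) := by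
      intro m
      induction m using Nat.strong_induction_on with
      | _ m ih =>
      intro hm y hy
      cases m with
      | zero => rw [hy.zero]; exact Finset.mem_insert_self _ _
      | succ m =>
        rcases hy.succ with rfl | ⟨c, hac, hc⟩
        · exact Finset.mem_insert_self _ _
        · rcases Rb_or (b := p) m hc with h1 | ⟨m', hm', h1⟩
          · exact Finset.mem_insert_of_mem (Finset.mem_biUnion.2 ⟨c, mem_nb.2 hac,
              Rb_mono (by omega) _ _ h1⟩)
          · exact ih m' (by omega) (by omega) y h1
    intro y hy
    exact key _ le_rfl y (Finset.mem_filter.1 hy).2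
  refine (Finset.card_le_card hsub).trans ((Finset.card_insert_le _ _).trans ?_)
  have h2 := Finset.card_biUnion_le_card_mul (nb G p) (fun c => Rb G k c p) _
      (fun c hc => Rb_card hd k c p (mem_nb.1 hc).symm)
  have := Nat.mul_le_mul_right (∑ i ∈ Finset.range (k + 1), r ^ i) (hd p)
  omega

open Classical in
/-- greedy extension -/
lemma greedy {n : ℕ} (cf : V → V → Prop) (hsym : ∀ u v, cf u v → cf v u) (X : Finset V) (ρ : V → ℕ)
    (hc : ∀ x ∈ X, (Finset.univ.filter (fun y => cf x y ∧ y ≠ x ∧ (y ∈ X → ρ y ≤ ρ x))).card < n)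
    (c0 : V → Fin n) (h0 : ∀ u v, u ∉ X → v ∉ X → u ≠ v → cf u v → c0 u ≠ c0 v) :
    ∃ c : V → Fin n, ∀ u v, u ≠ v → cf u v → c u ≠ c v := by
  have key : ∀ m : ℕ, ∀ U ⊆ X, U.card = m → (∀ x ∈ U, ∀ y ∈ X, y ∉ U → ρ y ≤ ρ x) →
      ∀ c0 : V → Fin n, (∀ u v, u ∉ U → v ∉ U → u ≠ v → cf u v → c0 u ≠ c0 v) →
      ∃ c : V → Fin n, ∀ u v, u ≠ v → cf u v → c u ≠ c v := by
    intro m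
    induction m with
    | zero =>
      intro U _ hU _ c0 h0
      rw [Finset.card_eq_zero] at hU
      subst hU
      exact ⟨c0, fun u v => h0 u v (by simp) (by simp)⟩
    | succ m ih =>
      intro U hUX hU hρ c0 h0
      obtain ⟨x, hxU, hxmin⟩ := Finset.exists_min_image U ρ (Finset.card_pos.1 (by omega))
      obtain ⟨q, hq⟩ : ∃ q : Fin n, ∀ y, y ∉ U → cf x y → c0 y ≠ q := by
        by_contra hno
        push Not at hno
        have hsub : (Finset.univ : Finset (Fin n)) ⊆
            (Finset.univ.filter (fun y => cf x y ∧ y ≠ x ∧ (y ∈ X → ρ y ≤ ρ x))).image c0 := by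
          intro q _
          obtain ⟨y, hyU, hxy, hyq⟩ := hno q
          refine Finset.mem_image.2 ⟨y, Finset.mem_filter.2 ⟨Finset.mem_univ _, hxy, ?_, ?_⟩, hyq⟩
          · rintro rfl; exact hyU hxU
          · intro hyX; exact hρ x hxU y hyX hyU
        have h1 := (Finset.card_le_card hsub).trans Finset.card_image_le
        have h2 := hc x (hUX hxU)
        simp only [Finset.card_univ, Fintype.card_fin] at h1
        omega
      refine ih (U.erase x) ((Finset.erase_subset _ _).trans hUX)
        (by rw [Finset.card_erase_of_mem hxU]; omega) ?_ (Function.update c0 x q) ?_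
      · intro y hy z hz hzU
        rw [Finset.mem_erase] at hy
        by_cases hzU' : z ∈ U
        · have : z = x := by
            by_contra hne
            exact hzU (Finset.mem_erase.2 ⟨hne, hzU'⟩)
          rw [this]; exact hxmin y hy.2
        · exact hρ y hy.2 z hz hzU'
      · intro u v hu hv huv hcf
        have cs : ∀ w, w ∉ U.erase x → w ≠ x → w ∉ U := by
          intro w hw hwx hwU
          exact hw (Finset.mem_erase.2 ⟨hwx, hwU⟩)
        by_cases hux : u = x
        · subst hux
          rw [Function.update_self, Function.update_of_ne huv.symm]
          exact (hq v (cs v hv huv.symm) hcf).symm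
        · by_cases hvx : v = x
          · subst hvx
            rw [Function.update_self, Function.update_of_ne huv]
            exact hq u (cs u hu huv) (hsym _ _ hcf)
          · rw [Function.update_of_ne hux, Function.update_of_ne hvx]
            exact h0 u v (cs u hu hux) (cs v hv hvx) huv hcf
  exact key _ X le_rfl rfl (fun x hx y hy hn => absurd hy hn) c0 h0

end

/-- remove the edges at `X` -/
def del (G : SimpleGraph V) (X : Set V) : SimpleGraph V where
  Adj u v := G.Adj u v ∧ u ∉ X ∧ v ∉ X
  symm := ⟨fun u v h => ⟨h.1.symm, h.2.2, h.2.1⟩⟩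
  loopless := ⟨fun u h => G.loopless.irrefl u h.1⟩

lemma del_le (G : SimpleGraph V) (X : Set V) : del G X ≤ G := fun _ _ h => h.1

/-- level functions (heights of pendant trees, capped at `K`) -/
structure Lv (G : SimpleGraph V) (K : ℕ) (lev : V → ℕ) : Prop where
  le : ∀ v, lev v ≤ K
  up : ∀ v a b, lev v < K → G.Adj v a → G.Adj v b → lev v ≤ lev a → lev v ≤ lev b → a = b

/-- descendants at relative depth `m` -/
def Ds (G : SimpleGraph V) (lev : V → ℕ) : ℕ → V → Set V
  | 0, x => {x}
  | m + 1, x => {w | ∃ u ∈ Ds G lev m x, G.Adj u w ∧ lev w < lev u}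

variable {K : ℕ} {lev : V → ℕ}

lemma Ds_lev {m : ℕ} {x w : V} (h : w ∈ Ds G lev m x) : lev w + m ≤ lev x := by
  induction m generalizing w with
  | zero => have : w = x := h; subst this; omega
  | succ m ih =>
    obtain ⟨u, hu, _, hlt⟩ := h
    have := ih hu; omega

lemma Ds_add {m m' : ℕ} {x u w : V} (hu : u ∈ Ds G lev m x) (hw : w ∈ Ds G lev m' u) :
    w ∈ Ds G lev (m + m') x := by
  induction m' generalizing w with
  | zero => have : w = u := hw; subst this; exact hu
  | succ m' ih =>
    obtain ⟨a, ha, h1, h2⟩ := hw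
    exact ⟨a, ih ha, h1, h2⟩

lemma Ds_WL {m : ℕ} {x w : V} (h : w ∈ Ds G lev m x) : WL G m w x := by
  induction m generalizing w with
  | zero => have : w = x := h; subst this; exact WL.refl _ _
  | succ m ih =>
    obtain ⟨u, hu, h1, _⟩ := h
    exact WL.cons h1.symm (ih hu)

/-- neighbours of a proper descendant -/
lemma Ds_nbr (hL : Lv G K lev) {m : ℕ} {x w y : V} (h : w ∈ Ds G lev (m + 1) x) (hy : G.Adj w y) :
    y ∈ Ds G lev m x ∨ y ∈ Ds G lev (m + 2) x := by
  obtain ⟨u, hu, h1, h2⟩ := id h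
  by_cases hlt : lev y < lev w
  · right; exact ⟨w, h, hy, hlt⟩
  · left
    have := hL.le u
    rw [hL.up w y u (by omega) hy h1.symm (by omega) (by omega)]
    exact hu

/-- leaving a pendant tree -/
lemma exit_tree (hL : Lv G K lev) {z : V} {P : V → Prop}
    (hz : ∀ y, G.Adj z y → lev y < lev z ∨ P y) (n m : ℕ) {w y : V} (hw : w ∈ Ds G lev m z)
    (h : WL G n w y) : (∃ m', y ∈ Ds G lev m' z) ∨ ∃ p q, P p ∧ G.Adj z p ∧ q + m + 1 ≤ n ∧ WL G q p y := by
  induction n generalizing m w with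
  | zero => left; exact ⟨m, h.zero ▸ hw⟩
  | succ n ih =>
    rcases h.succ with rfl | ⟨c, hac, hc⟩
    · left; exact ⟨m, hw⟩
    · cases m with
      | zero =>
        have : w = z := hw
        subst this
        rcases hz c hac with h1 | h1
        · rcases ih 1 ⟨w, rfl, hac, h1⟩ hc with h2 | ⟨p, q, h2, h3, h4, h5⟩
          · exact Or.inl h2
          · exact Or.inr ⟨p, q, h2, h3, by omega, h5⟩
        · exact Or.inr ⟨c, n, h1, hac, by omega, hc⟩
      | succ m =>
        rcases Ds_nbr hL hw hac with h1 | h1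
        · rcases ih m h1 hc with h2 | ⟨p, q, h2, h3, h4, h5⟩
          · exact Or.inl h2
          · exact Or.inr ⟨p, q, h2, h3, by omega, h5⟩
        · rcases ih (m + 2) h1 hc with h2 | ⟨p, q, h2, h3, h4, h5⟩
          · exact Or.inl h2
          · exact Or.inr ⟨p, q, h2, h3, by omega, h5⟩

/-- threads in the top level -/
structure Thr (G : SimpleGraph V) (K : ℕ) (lev : V → ℕ) (l : ℕ) (v : ℕ → V) : Prop where
  top : ∀ i ≤ l + 1, lev (v i) = K
  adj : ∀ i ≤ l, G.Adj (v i) (v (i + 1))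
  nbr : ∀ i < l, ∀ w, G.Adj (v (i + 1)) w → lev w < K ∨ w = v i ∨ w = v (i + 2)

/-- leaving a window `[a,b]` of a thread -/
lemma exit_win (hL : Lv G K lev) {l : ℕ} {v : ℕ → V} (hT : Thr G K lev l v) {a b : ℕ} (ha : 1 ≤ a)
    (hb : b ≤ l) (n m j : ℕ) (hj : a ≤ j) (hj' : j ≤ b) {w y : V} (hw : w ∈ Ds G lev m (v j))
    (h : WL G n w y) : (∃ m' j', a ≤ j' ∧ j' ≤ b ∧ y ∈ Ds G lev m' (v j')) ∨
      (∃ q, q + m + (b + 1 - j) ≤ n ∧ WL G q (v (b + 1)) y) ∨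
      (∃ q, q + m + (j + 1 - a) ≤ n ∧ WL G q (v (a - 1)) y) := by
  induction n generalizing m j w with
  | zero => left; exact ⟨m, j, hj, hj', h.zero ▸ hw⟩
  | succ n ih =>
    rcases h.succ with rfl | ⟨c, hac, hc⟩
    · left; exact ⟨m, j, hj, hj', hw⟩
    · cases m with
      | zero =>
        have : w = v j := hw
        subst this
        have htop := hT.top j (by omega)
        have hn := hT.nbr (j - 1) (by omega) c (by rw [Nat.sub_add_cancel (by omega)]; exact hac)
        rw [show j - 1 + 2 = j + 1 by omega] at hn
        rcases hn with h1 | h1 | h1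
        · rcases ih 1 j hj hj' ⟨v j, rfl, hac, by omega⟩ hc with h2 | ⟨q, h2, h3⟩ | ⟨q, h2, h3⟩
          · exact Or.inl h2
          · exact Or.inr (Or.inl ⟨q, by omega, h3⟩)
          · exact Or.inr (Or.inr ⟨q, by omega, h3⟩)
        · by_cases hja : j = a
          · right; right
            exact ⟨n, by omega, by rw [← hja, ← h1]; exact hc⟩
          · rcases ih 0 (j - 1) (by omega) (by omega) h1 hc with h2 | ⟨q, h2, h3⟩ | ⟨q, h2, h3⟩
            · exact Or.inl h2
            · exact Or.inr (Or.inl ⟨q, by omega, h3⟩)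
            · exact Or.inr (Or.inr ⟨q, by omega, h3⟩)
        · by_cases hjb : j = b
          · right; left
            exact ⟨n, by omega, by rw [← hjb, ← h1]; exact hc⟩
          · rcases ih 0 (j + 1) (by omega) (by omega) h1 hc with h2 | ⟨q, h2, h3⟩ | ⟨q, h2, h3⟩
            · exact Or.inl h2
            · exact Or.inr (Or.inl ⟨q, by omega, h3⟩)
            · exact Or.inr (Or.inr ⟨q, by omega, h3⟩)
      | succ m =>
        rcases Ds_nbr hL hw hac with h1 | h1
        · rcases ih m j hj hj' h1 hc with h2 | ⟨q, h2, h3⟩ | ⟨q, h2, h3⟩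
          · exact Or.inl h2
          · exact Or.inr (Or.inl ⟨q, by omega, h3⟩)
          · exact Or.inr (Or.inr ⟨q, by omega, h3⟩)
        · rcases ih (m + 2) j hj hj' h1 hc with h2 | ⟨q, h2, h3⟩ | ⟨q, h2, h3⟩
          · exact Or.inl h2
          · exact Or.inr (Or.inl ⟨q, by omega, h3⟩)
          · exact Or.inr (Or.inr ⟨q, by omega, h3⟩)

/-- strong form of the window lemma -/
lemma win_strong [Fintype V] (hL : Lv G K lev) {l : ℕ} {v : ℕ → V} (hT : Thr G K lev l v) {a b s : ℕ}
    (ha : 1 ≤ a) (hb : b ≤ l) (n m j : ℕ) (hj : a ≤ j) (hj' : j ≤ b) {w y : V}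
    (hw : w ∈ Ds G lev m (v j)) (h : WL G n w y) (hn1 : n ≤ m + s + (b + 1 - j))
    (hn2 : n ≤ m + s + (j + 1 - a)) :
    (∃ m' j', a ≤ j' ∧ j' ≤ b ∧ y ∈ Ds G lev m' (v j')) ∨
      y ∈ Rb G s (v (b + 1)) (v b) ∨ y ∈ Rb G s (v (a - 1)) (v a) := by
  induction n using Nat.strong_induction_on generalizing m j w with
  | _ n ih =>
  rcases exit_win hL hT ha hb n m j hj hj' hw h with h1 | ⟨q, h1, h2⟩ | ⟨q, h1, h2⟩
  · exact Or.inl h1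
  · rcases Rb_or (b := v b) q h2 with h3 | ⟨q', hq', h3⟩
    · right; left; exact Rb_mono (by omega) _ _ h3
    · exact ih q' (by omega) 0 b (by omega) (by omega) rfl h3 (by omega) (by omega)
  · rcases Rb_or (b := v a) q h2 with h3 | ⟨q', hq', h3⟩
    · right; right; exact Rb_mono (by omega) _ _ h3
    · exact ih q' (by omega) 0 a (by omega) (by omega) rfl h3 (by omega) (by omega)

/-- depth is well defined -/
lemma Ds_depth (hL : Lv G K lev) {s s' : ℕ} {a b w : V} (ha : lev a = K) (hb : lev b = K)
    (h : w ∈ Ds G lev s a) (h' : w ∈ Ds G lev s' b) : s = s' := by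
  induction s generalizing s' w with
  | zero =>
    have : w = a := h
    subst this
    have := Ds_lev h'
    omega
  | succ s ih =>
    cases s' with
    | zero =>
      have : w = b := h'
      subst this
      have := Ds_lev h
      omega
    | succ s' =>
      obtain ⟨u, hu, h1, h2⟩ := h
      obtain ⟨u', hu', h1', h2'⟩ := h'
      have := hL.le u
      have e := hL.up w u u' (by omega) h1.symm h1'.symm (by omega) (by omega)
      subst e
      rw [ih hu hu']

end SCx

open SimpleGraph

namespace SCx
variable {V : Type*} {G : SimpleGraph V} {K : ℕ} {lev : V → ℕ}

/-- iterated pruning -/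
def Sg (G : SimpleGraph V) : ℕ → Set V
  | 0 => Set.univ
  | j + 1 => {v | v ∈ Sg G j ∧ ∃ a b, a ≠ b ∧ G.Adj v a ∧ G.Adj v b ∧ a ∈ Sg G j ∧ b ∈ Sg G j}

lemma Sg_anti {i j : ℕ} (h : i ≤ j) : Sg G j ⊆ Sg G i := by
  induction j, h using Nat.le_induction with
  | base => exact le_rfl
  | succ j _ ih => exact fun v hv => ih hv.1

lemma exists_lev (G : SimpleGraph V) (K : ℕ) : ∃ lev : V → ℕ, Lv G K lev ∧
    ∀ v, 0 < lev v → ∃ a b, a ≠ b ∧ G.Adj v a ∧ G.Adj v b ∧ lev v ≤ lev a + 1 ∧ lev v ≤ lev b + 1 := by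
  classical
  set lev : V → ℕ := fun v => Nat.findGreatest (fun j => v ∈ Sg G j) K with hlev
  have hle : ∀ v, lev v ≤ K := fun v => Nat.findGreatest_le _
  have hmem : ∀ v, v ∈ Sg G (lev v) := fun v =>
    Nat.findGreatest_spec (P := fun j => v ∈ Sg G j) (Nat.zero_le K) (Set.mem_univ v)
  have hge : ∀ v j, j ≤ K → v ∈ Sg G j → j ≤ lev v := fun v j hj hv =>
    Nat.le_findGreatest (P := fun j => v ∈ Sg G j) hj hv
  refine ⟨lev, ⟨hle, ?_⟩, ?_⟩
  · intro v a b hv ha hb hla hlb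
    by_contra hab
    have := hge v (lev v + 1) hv ⟨hmem v, a, b, hab, ha, hb, Sg_anti hla (hmem a), Sg_anti hlb (hmem b)⟩
    omega
  · intro v hv
    obtain ⟨j, hj⟩ : ∃ j, lev v = j + 1 := ⟨lev v - 1, by omega⟩
    have h1 := hmem v
    rw [hj] at h1
    obtain ⟨_, a, b, hab, ha, hb, h2, h3⟩ := h1
    have hK := hle v
    have h4 := hge a j (by omega) h2
    have h5 := hge b j (by omega) h3
    exact ⟨a, b, hab, ha, hb, by omega, by omega⟩

lemma descend (hL : Lv G K lev)
    (F2 : ∀ v, 0 < lev v → ∃ a b, a ≠ b ∧ G.Adj v a ∧ G.Adj v b ∧ lev v ≤ lev a + 1 ∧ lev v ≤ lev b + 1)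
    {z : V} (hz : ∀ a b, G.Adj z a → G.Adj z b → lev z ≤ lev a → lev z ≤ lev b → a = b) (m : ℕ)
    (hm : m ≤ lev z) : ∃ w ∈ Ds G lev m z, lev w + m = lev z ∧
      ∀ a b, G.Adj w a → G.Adj w b → lev w ≤ lev a → lev w ≤ lev b → a = b := by
  induction m with
  | zero => exact ⟨z, rfl, rfl, hz⟩
  | succ m ih =>
    obtain ⟨w, hw, hlw, hww⟩ := ih (by omega)
    obtain ⟨a, b, hab, ha, hb, h1, h2⟩ := F2 w (by omega)
    obtain ⟨c, hc, hc1, hc2⟩ : ∃ c, G.Adj w c ∧ lev c + 1 = lev w ∧ lev c < K := by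
      have hK := hL.le w
      by_cases hla : lev w ≤ lev a
      · by_cases hlb : lev w ≤ lev b
        · exact absurd (hww a b ha hb hla hlb) hab
        · exact ⟨b, hb, by omega, by omega⟩
      · exact ⟨a, ha, by omega, by omega⟩
    exact ⟨c, ⟨w, hw, hc, by omega⟩, by omega, fun a b => hL.up c a b hc2⟩

/-- Case I: a removable leaf -/
lemma caseI (hL : Lv G K lev)
    (F2 : ∀ v, 0 < lev v → ∃ a b, a ≠ b ∧ G.Adj v a ∧ G.Adj v b ∧ lev v ≤ lev a + 1 ∧ lev v ≤ lev b + 1)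
    {z : V} (hz : ∀ a b, G.Adj z a → G.Adj z b → lev z ≤ lev a → lev z ≤ lev b → a = b)
    (hiso : ∃ a, G.Adj z a) (hmax : ∀ a b, G.Adj a b → lev a ≤ lev z) :
    ∃ z0 p, (∃ a, G.Adj z0 a) ∧ (∀ a b, G.Adj z0 a → G.Adj z0 b → a = b) ∧
      ∀ y, WL G (2 * (K + 1)) z0 y → WL G (K + 1) p y := by
  obtain ⟨z0, hz0, hlev0, hup0⟩ := descend hL F2 hz (lev z) le_rfl
  have hl0 : lev z0 = 0 := by omega
  have hzK := hL.le z
  have hiso0 : ∃ a, G.Adj z0 a := by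
    rcases Nat.eq_zero_or_pos (lev z) with h0 | h0
    · rw [h0] at hz0
      have : z0 = z := hz0
      rw [this]; exact hiso
    · obtain ⟨m, hm⟩ : ∃ m, lev z = m + 1 := ⟨lev z - 1, by omega⟩
      rw [hm] at hz0
      obtain ⟨u, _, h1, _⟩ := hz0
      exact ⟨u, h1.symm⟩
  have hdeg0 : ∀ a b, G.Adj z0 a → G.Adj z0 b → a = b := fun a b ha hb =>
    hup0 a b ha hb (by omega) (by omega)
  suffices h : ∃ p, ∀ y, WL G (2 * (K + 1)) z0 y → WL G (K + 1) p y by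
    obtain ⟨p, hp⟩ := h
    exact ⟨z0, p, hiso0, hdeg0, hp⟩
  have ht : ∀ y, G.Adj z y → lev y < lev z ∨ lev z ≤ lev y := fun y _ => by omega
  by_cases hp : ∃ p, G.Adj z p ∧ lev z ≤ lev p
  swap
  · refine ⟨z, fun y hy => ?_⟩
    rcases exit_tree hL ht _ _ hz0 hy with ⟨m', h1⟩ | ⟨p, q, h1, h2, _⟩
    · have := Ds_lev h1
      exact (Ds_WL h1).symm.mono (by omega)
    · exact absurd ⟨p, h2, h1⟩ hp
  obtain ⟨p, hp1, hp2⟩ := hp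
  by_cases hK : lev z = K
  · refine ⟨p, fun y hy => ?_⟩
    rcases exit_tree hL ht _ _ hz0 hy with ⟨m', h1⟩ | ⟨p', q, h1, h2, h3, h4⟩
    · have := Ds_lev h1
      exact (WL.cons hp1.symm (Ds_WL h1).symm).mono (by omega)
    · have := hz p' p h2 hp1 h1 hp2
      subst this
      exact h4.mono (by omega)
  · have hlp : lev p = lev z := le_antisymm (hmax p z hp1.symm) hp2
    have ht' : ∀ y, G.Adj p y → lev y < lev p ∨ y = z := by
      intro y hy
      by_cases h : lev y < lev p
      · exact Or.inl h
      · right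
        exact hL.up p y z (by omega) hy hp1.symm (by omega) (by omega)
    have key : ∀ n y, WL G n z y → WL G (K + 1) z y := by
      intro n
      induction n using Nat.strong_induction_on with
      | _ n ih =>
      intro y hy
      rcases exit_tree hL ht n 0 rfl hy with ⟨m', h1⟩ | ⟨p', q, h1, h2, h3, h4⟩
      · have := Ds_lev h1
        exact (Ds_WL h1).symm.mono (by omega)
      · have := hz p' p h2 hp1 h1 hp2
        subst this
        rcases exit_tree hL ht' q 0 rfl h4 with ⟨m', h1⟩ | ⟨p2, q', h5, h6, h7, h8⟩
        · have := Ds_lev h1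
          exact (WL.cons hp1 (Ds_WL h1).symm).mono (by omega)
        · subst h5
          exact ih q' (by omega) y h8
    refine ⟨z, fun y hy => ?_⟩
    obtain ⟨w1, hw1⟩ := (Ds_WL hz0).symm
    obtain ⟨w2, hw2⟩ := hy
    exact key (lev z + 2 * (K + 1)) y ⟨w1.append w2, by rw [Walk.length_append]; omega⟩

lemma leaf_pres {z0 : V} (hz : ∀ a b, G.Adj z0 a → G.Adj z0 b → a = b) (n : ℕ) {u w : V}
    (hu : u ≠ z0) (hw : w ≠ z0) (h : WL G n u w) : WL (del G {z0}) n u w := by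
  induction n using Nat.strong_induction_on generalizing u with
  | _ n ih =>
  cases n with
  | zero => rw [h.zero]; exact WL.refl _ _
  | succ n =>
    rcases h.succ with rfl | ⟨c, hac, hc⟩
    · exact WL.refl _ _
    · by_cases hcz : c = z0
      · subst hcz
        cases n with
        | zero => exact absurd hc.zero hw.symm
        | succ n =>
          rcases hc.succ with h1 | ⟨c', h1, h2⟩
          · exact absurd h1 hw.symm
          · have := hz c' u h1 hac.symm
            subst this
            exact (ih n (by omega) hu h2).mono (by omega)
      · exact WL.cons ⟨hac, hu, hcz⟩ (ih n (by omega) hcz hc)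

/-- zones -/
structure Zn (K l : ℕ) (A B : ℕ → ℕ) : Prop where
  stepA : ∀ s < K, A (s + 1) + (2 * (K - s) + 1) ≤ A s
  stepB : ∀ s < K, B s + (2 * (K - s) + 1) ≤ B (s + 1)
  lo : ∀ s ≤ K, 1 + (2 * (K - s) + 1) ≤ A s
  hi : ∀ s ≤ K, B s + (2 * (K - s) + 1) ≤ l
  len : A 0 + 2 * (K + 1) ≤ B 0 + 1

lemma Zn.mono {l : ℕ} {A B : ℕ → ℕ} (hZ : Zn K l A B) {s s' : ℕ} (h : s ≤ s') (h' : s' ≤ K) :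
    A s' ≤ A s ∧ B s ≤ B s' := by
  induction s', h using Nat.le_induction with
  | base => exact ⟨le_rfl, le_rfl⟩
  | succ j _ ih =>
    have h1 := ih (by omega)
    have h2 := hZ.stepA j (by omega)
    have h3 := hZ.stepB j (by omega)
    constructor <;> omega

lemma exists_Zn (K : ℕ) : ∃ A B, Zn K (4 * (K + 1) ^ 2) A B := by
  refine ⟨fun s => 2 * (K + 1) * (K + 1 - s), fun s => 2 * (K + 1) ^ 2 + 2 * (K + 1) - 1 + 2 * (K + 1) * s,
    ?_, ?_, ?_, ?_, ?_⟩
  · intro s hs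
    obtain ⟨j, rfl⟩ : ∃ j, K = s + 1 + j := ⟨K - (s + 1), by omega⟩
    rw [show s + 1 + j + 1 - (s + 1) = j + 1 by omega, show s + 1 + j + 1 - s = j + 2 by omega,
      show s + 1 + j - s = j + 1 by omega]
    nlinarith
  · intro s hs
    have : 2 * (K + 1) * (s + 1) = 2 * (K + 1) * s + 2 * (K + 1) := by ring
    omega
  · intro s hs
    obtain ⟨j, rfl⟩ : ∃ j, K = s + j := ⟨K - s, by omega⟩
    rw [show s + j + 1 - s = j + 1 by omega, show s + j - s = j by omega]
    nlinarith
  · intro s hs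
    obtain ⟨j, rfl⟩ : ∃ j, K = s + j := ⟨K - s, by omega⟩
    rw [show s + j - s = j by omega]
    have : 2 * (s + j + 1) ^ 2 + 2 * (s + j + 1) + 2 * (s + j + 1) * s + 2 * j ≤ 4 * (s + j + 1) ^ 2 := by
      nlinarith
    omega
  · skip
    have : 2 * (K + 1) * (K + 1 - 0) = 2 * (K + 1) ^ 2 := by rw [Nat.sub_zero]; ring
    omega

/-- the set to be deleted -/
def XS (G : SimpleGraph V) (lev : V → ℕ) (K : ℕ) (A B : ℕ → ℕ) (v : ℕ → V) : Set V :=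
  {x | ∃ s ≤ K, ∃ i, A s ≤ i ∧ i ≤ B s ∧ x ∈ Ds G lev s (v i)}

section
variable {l : ℕ} {A B : ℕ → ℕ} {v : ℕ → V}

lemma mem_XS (hT : Thr G K lev l v) (hZ : Zn K l A B) {s m i : ℕ} {x : V}
    (hs : s ≤ m) (h1 : A s ≤ i) (h2 : i ≤ B s) (hx : x ∈ Ds G lev m (v i)) (hsK : s ≤ K) :
    x ∈ XS G lev K A B v := by
  have h3 := Ds_lev hx
  have h4 := hZ.hi s hsK
  have h5 := hT.top i (by omega)
  have h6 := hZ.mono hs (by omega)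
  exact ⟨m, by omega, i, by omega, by omega, hx⟩

lemma XS_pres (hL : Lv G K lev) (hT : Thr G K lev l v) (hZ : Zn K l A B) (n : ℕ)
    (hn : n ≤ 2 * (K + 1)) {u w : V} (hu : u ∉ XS G lev K A B v) (hw : w ∉ XS G lev K A B v)
    (h : WL G n u w) : WL (del G (XS G lev K A B v)) n u w := by
  induction n using Nat.strong_induction_on generalizing u with
  | _ n ih =>
  cases n with
  | zero => rw [h.zero]; exact WL.refl _ _
  | succ n =>
  rcases h.succ with rfl | ⟨c, hac, hc⟩
  · exact WL.refl _ _
  by_cases hcX : c ∈ XS G lev K A B v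
  swap
  · exact WL.cons ⟨hac, hu, hcX⟩ (ih n (by omega) (by omega) hcX hc)
  obtain ⟨s, hs, i, hi1, hi2, hci⟩ := id hcX
  have hlo := hZ.lo s hs
  have hhi := hZ.hi s hs
  have htop := hT.top i (by omega)
  cases s with
  | succ s =>
    obtain ⟨u', hu', h1, h2⟩ := id hci
    have hK := hL.le u'
    have huu : u = u' := by
      by_contra hne
      have hlt : lev u < lev c := by
        by_contra hge
        exact hne (hL.up c u u' (by omega) hac.symm h1.symm (by omega) (by omega))
      exact hu (mem_XS hT hZ (s := s + 1) (m := s + 2) (by omega) hi1 hi2 ⟨c, hci, hac.symm, hlt⟩ hs)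
    subst huu
    have hz : ∀ y, G.Adj c y → lev y < lev c ∨ y = u := by
      intro y hy
      by_cases hlt : lev y < lev c
      · exact Or.inl hlt
      · exact Or.inr (hL.up c y u (by omega) hy h1.symm (by omega) (by omega))
    rcases exit_tree hL hz n 0 rfl hc with ⟨m', h3⟩ | ⟨p, q, h3, h4, h5, h6⟩
    · exact absurd (mem_XS hT hZ (s := s + 1) (by omega) hi1 hi2 (Ds_add hci h3) hs) hw
    · subst h3
      exact (ih q (by omega) (by omega) hu h6).mono (by omega)
  | zero =>
    have : c = v i := hci
    subst this
    have hlen := hZ.len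
    have hn1 := hT.nbr (i - 1) (by omega) u (by rw [Nat.sub_add_cancel (by omega)]; exact hac.symm)
    rw [show i - 1 + 2 = i + 1 by omega] at hn1
    have hex := exit_win hL hT (a := A 0) (b := B 0) (by omega) (by omega) n 0 i hi1 hi2 rfl hc
    rcases hn1 with h1 | h1 | h1
    · exact absurd (mem_XS hT hZ (s := 0) (m := 1) (by omega) hi1 hi2
        ⟨v i, rfl, hac.symm, by omega⟩ hs) hu
    · have hiA : i = A 0 := by
        by_contra hne
        exact hu (mem_XS hT hZ (s := 0) (m := 0) (i := i - 1) (by omega) (by omega) (by omega) h1 hs)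
      rcases hex with ⟨m', j', h2, h3, h4⟩ | ⟨q, h2, h3⟩ | ⟨q, h2, h3⟩
      · exact absurd (mem_XS hT hZ (s := 0) (by omega) h2 h3 h4 hs) hw
      · omega
      · rw [← hiA, ← h1] at h3
        exact (ih q (by omega) (by omega) hu h3).mono (by omega)
    · have hiB : i = B 0 := by
        by_contra hne
        exact hu (mem_XS hT hZ (s := 0) (m := 0) (i := i + 1) (by omega) (by omega) (by omega) h1 hs)
      rcases hex with ⟨m', j', h2, h3, h4⟩ | ⟨q, h2, h3⟩ | ⟨q, h2, h3⟩
      · exact absurd (mem_XS hT hZ (s := 0) (by omega) h2 h3 h4 hs) hw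
      · rw [← hiB, ← h1] at h3
        exact (ih q (by omega) (by omega) hu h3).mono (by omega)
      · omega

lemma Ds_first {m : ℕ} {x w : V} (h : w ∈ Ds G lev (m + 1) x) :
    ∃ c, G.Adj x c ∧ lev c < lev x ∧ w ∈ Ds G lev m c := by
  induction m generalizing w with
  | zero =>
    obtain ⟨u, hu, h1, h2⟩ := h
    have : u = x := hu
    subst this
    exact ⟨w, h1, h2, rfl⟩
  | succ m ih =>
    obtain ⟨u, hu, h1, h2⟩ := h
    obtain ⟨c, h3, h4, h5⟩ := ih hu
    exact ⟨c, h3, h4, u, h5, h1, h2⟩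

variable [Fintype V]

lemma Ds_Rb {m : ℕ} {z c w : V} (hlt : lev c < lev z) (h : w ∈ Ds G lev m c) : w ∈ Rb G m c z := by
  classical
  induction m generalizing z c with
  | zero => have : w = c := h; subst this; exact Rb_self _ _ _
  | succ m ih =>
    obtain ⟨c', h1, h2, h3⟩ := Ds_first h
    simp only [Rb, Finset.mem_insert, Finset.mem_biUnion, Finset.mem_erase]
    exact Or.inr ⟨c', ⟨by rintro rfl; omega, mem_nb.2 h1⟩, ih h2 h3⟩

open Classical in
/-- a hair truncated at depth `s` -/
noncomputable def hair (G : SimpleGraph V) (lev : V → ℕ) (s : ℕ) (z : V) : Finset V :=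
  Finset.univ.filter (fun y => ∃ m ≤ s, y ∈ Ds G lev m z)

lemma hair_card {r : ℕ} (hr : 1 ≤ r) (hd : ∀ a, (nb G a).card ≤ r + 1) (hT : Thr G K lev l v)
    (hne : ∀ i < l, v (i + 2) ≠ v i) (s j : ℕ) (hj : 1 ≤ j) (hjl : j ≤ l) :
    (hair G lev s (v j)).card ≤ r ^ s := by
  classical
  cases s with
  | zero =>
    have : hair G lev 0 (v j) ⊆ {v j} := by
      intro y hy
      obtain ⟨m, hm, h1⟩ := (Finset.mem_filter.1 hy).2
      obtain rfl : m = 0 := by omega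
      exact Finset.mem_singleton.2 h1
    simpa using Finset.card_le_card this
  | succ s =>
    obtain ⟨i, rfl⟩ : ∃ i, j = i + 1 := ⟨j - 1, by omega⟩
    have htop := hT.top (i + 1) (by omega)
    set C := ((nb G (v (i + 1))).erase (v i)).erase (v (i + 2)) with hC
    have hCc : C.card ≤ r - 1 := by
      have h1 := Finset.card_erase_add_one (mem_nb.2 (hT.adj i (by omega)).symm)
      have h2 := Finset.card_erase_add_one (s := (nb G (v (i + 1))).erase (v i)) (a := v (i + 2))
        (Finset.mem_erase.2 ⟨hne i (by omega), mem_nb.2 (hT.adj (i + 1) (by omega))⟩)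
      rw [← hC] at h2
      have h3 := hd (v (i + 1))
      omega
    have hsub : hair G lev (s + 1) (v (i + 1)) ⊆
        insert (v (i + 1)) (C.biUnion (fun c => Rb G s c (v (i + 1)))) := by
      intro y hy
      obtain ⟨m, hm, h1⟩ := (Finset.mem_filter.1 hy).2
      cases m with
      | zero => exact Finset.mem_insert.2 (Or.inl h1)
      | succ m =>
        obtain ⟨c, h2, h3, h4⟩ := Ds_first h1
        refine Finset.mem_insert_of_mem (Finset.mem_biUnion.2 ⟨c, ?_, Rb_mono (by omega) _ _ (Ds_Rb h3 h4)⟩)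
        refine Finset.mem_erase.2 ⟨?_, Finset.mem_erase.2 ⟨?_, mem_nb.2 h2⟩⟩
        · rintro rfl
          have := hT.top (i + 2) (by omega)
          omega
        · rintro rfl
          have := hT.top i (by omega)
          omega
    refine (Finset.card_le_card hsub).trans ((Finset.card_insert_le _ _).trans ?_)
    have h2 := Finset.card_biUnion_le_card_mul C (fun c => Rb G s c (v (i + 1))) _
      (fun c hc => Rb_card hd s c _
        (mem_nb.1 (Finset.mem_of_mem_erase (Finset.mem_of_mem_erase hc))).symm)
    have h3 := Nat.mul_le_mul_right (∑ i ∈ Finset.range (s + 1), r ^ i) hCc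
    have h4 : (r - 1) * ∑ i ∈ Finset.range (s + 1), r ^ i + 1 = r ^ (s + 1) := by
      obtain ⟨q, rfl⟩ : ∃ q, r = q + 1 := ⟨r - 1, by omega⟩
      have := mul_geom_sum (q + 1 : ℤ) (s + 1)
      have h5 : ((q : ℤ)) * ∑ i ∈ Finset.range (s + 1), (q + 1 : ℤ) ^ i + 1 = (q + 1) ^ (s + 1) := by
        linear_combination this
      rw [Nat.add_sub_cancel]
      exact_mod_cast h5
    omega

lemma pow_bound {r : ℕ} (hr : 3 ≤ r) (j : ℕ) : 4 * j + 3 ≤ r ^ (j + 1) := by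
  induction j with
  | zero => simpa using hr
  | succ j ih =>
    rw [pow_succ]
    nlinarith

open Classical in
lemma XS_count {r : ℕ} (hr : 3 ≤ r) (hd : ∀ a, (nb G a).card ≤ r + 1) (hL : Lv G K lev)
    (hT : Thr G K lev l v) (hne : ∀ i < l, v (i + 2) ≠ v i) (hZ : Zn K l A B) (ρ : V → ℕ)
    (hρ : ∀ s i x, i ≤ l → x ∈ Ds G lev s (v i) → ρ x = s) {x : V} (hx : x ∈ XS G lev K A B v) :
    (Finset.univ.filter (fun y => WL G (2 * (K + 1)) x y ∧ y ≠ x ∧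
      (y ∈ XS G lev K A B v → ρ y ≤ ρ x))).card < 1 + (r + 1) * ∑ i ∈ Finset.range (K + 1), r ^ i := by
  obtain ⟨s, hs, i, hi1, hi2, hxi⟩ := hx
  have hlo := hZ.lo s hs
  have hhi := hZ.hi s hs
  have hρx := hρ s i x (by omega) hxi
  obtain ⟨a, ha⟩ : ∃ a, a = i - (2 * (K - s) + 1) := ⟨_, rfl⟩
  obtain ⟨b, hb⟩ : ∃ b, b = i + (2 * (K - s) + 1) := ⟨_, rfl⟩
  set U := (Finset.Icc a b).biUnion (fun j => hair G lev s (v j)) ∪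
    (Rb G s (v (b + 1)) (v b) ∪ Rb G s (v (a - 1)) (v a)) with hU
  have hsub : Finset.univ.filter (fun y => WL G (2 * (K + 1)) x y ∧ y ≠ x ∧
      (y ∈ XS G lev K A B v → ρ y ≤ ρ x)) ⊆ U.erase x := by
    intro y hy
    obtain ⟨h1, h2, h3⟩ := (Finset.mem_filter.1 hy).2
    refine Finset.mem_erase.2 ⟨h2, ?_⟩
    rcases win_strong hL hT (a := a) (b := b) (s := s) (by omega) (by omega) _ s i (by omega) (by omega)
      hxi h1 (by omega) (by omega) with ⟨m', j', h4, h5, h6⟩ | h4 | h4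
    · refine Finset.mem_union_left _ (Finset.mem_biUnion.2 ⟨j', Finset.mem_Icc.2 ⟨h4, h5⟩, ?_⟩)
      refine Finset.mem_filter.2 ⟨Finset.mem_univ _, m', ?_, h6⟩
      by_contra hlt
      have h7 := Ds_lev h6
      have h8 := hT.top j' (by omega)
      have h9 := hZ.stepA s (by omega)
      have h10 := hZ.stepB s (by omega)
      have h11 := h3 (mem_XS hT hZ (s := s + 1) (by omega) (by omega) (by omega) h6 (by omega))
      have h12 := hρ m' j' y (by omega) h6
      omega
    · exact Finset.mem_union_right _ (Finset.mem_union_left _ h4)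
    · exact Finset.mem_union_right _ (Finset.mem_union_right _ h4)
  have hxU : x ∈ U := by
    refine Finset.mem_union_left _ (Finset.mem_biUnion.2 ⟨i, Finset.mem_Icc.2 ⟨by omega, by omega⟩, ?_⟩)
    exact Finset.mem_filter.2 ⟨Finset.mem_univ _, s, le_rfl, hxi⟩
  have hc1 := Finset.card_le_card hsub
  have hc2 := Finset.card_erase_add_one hxU
  have hc3 : U.card ≤ (4 * (K - s) + 3) * r ^ s + 2 * ∑ i ∈ Finset.range (s + 1), r ^ i := by
    refine (Finset.card_union_le _ _).trans ?_
    have e1 := Finset.card_union_le (Rb G s (v (b + 1)) (v b)) (Rb G s (v (a - 1)) (v a))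
    have e2 := Rb_card hd s (v (b + 1)) (v b) (hT.adj b (by omega)).symm
    have e3 := Rb_card hd s (v (a - 1)) (v a) (by
      have := hT.adj (a - 1) (by omega)
      rwa [Nat.sub_add_cancel (by omega)] at this)
    have e4 := Finset.card_biUnion_le_card_mul (Finset.Icc a b) (fun j => hair G lev s (v j)) (r ^ s)
      (fun j hj => hair_card (by omega) hd hT hne s j
        (by have := Finset.mem_Icc.1 hj; omega) (by have := Finset.mem_Icc.1 hj; omega))
    rw [Nat.card_Icc, show b + 1 - a = 4 * (K - s) + 3 by omega] at e4
    omega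
  have hc4 : (4 * (K - s) + 3) * r ^ s + 2 * ∑ i ∈ Finset.range (s + 1), r ^ i ≤
      1 + (r + 1) * ∑ i ∈ Finset.range (K + 1), r ^ i := by
    have f1 : 1 + (r + 1) * ∑ i ∈ Finset.range (K + 1), r ^ i =
        r ^ (K + 1) + 2 * ∑ i ∈ Finset.range (K + 1), r ^ i := by
      have g1 := Finset.sum_range_succ (fun i => r ^ i) (K + 1)
      have g2 := Finset.sum_range_succ' (fun i => r ^ i) (K + 1)
      have g3 : ∑ i ∈ Finset.range (K + 1), r ^ (i + 1) = r * ∑ i ∈ Finset.range (K + 1), r ^ i := by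
        rw [Finset.mul_sum]; exact Finset.sum_congr rfl (fun i _ => by ring)
      rw [g3, pow_zero] at g2
      rw [add_mul, one_mul]
      omega
    have f2 : ∑ i ∈ Finset.range (s + 1), r ^ i ≤ ∑ i ∈ Finset.range (K + 1), r ^ i :=
      Finset.sum_le_sum_of_subset (Finset.range_mono (by omega))
    have f3 := Nat.mul_le_mul_right (r ^ s) (pow_bound hr (K - s))
    rw [← pow_add, show K - s + 1 + s = K + 1 by omega] at f3
    omega
  omega

end
end SCx

open SimpleGraph

namespace SCx
variable {V : Type*}

theorem main_col [Fintype V] {K r g : ℕ} (hr : 3 ≤ r) (hg0 : 0 < g) (hgl : 6 * (4 * (K + 1) ^ 2) ≤ g)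
    (G : SimpleGraph V) (hP : IsPlanar G) (hg : (g : ℕ∞) ≤ G.egirth) (hd : ∀ a, (nb G a).card ≤ r + 1) :
    ∃ c : V → Fin (1 + (r + 1) * ∑ i ∈ Finset.range (K + 1), r ^ i),
      ∀ u v, u ≠ v → WL G (2 * (K + 1)) u v → c u ≠ c v := by
  classical
  induction G using WellFoundedLT.induction with
  | _ G ih =>
  have hdel : ∀ X : Set V, (∃ x ∈ X, ∃ y, G.Adj x y) →
      ∃ c : V → Fin (1 + (r + 1) * ∑ i ∈ Finset.range (K + 1), r ^ i),
      ∀ u v, u ≠ v → WL (del G X) (2 * (K + 1)) u v → c u ≠ c v := by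
    rintro X ⟨x, hx, y, hxy⟩
    have hle := del_le G X
    refine ih (del G X) (lt_of_le_of_ne hle ?_) (planar_mono hle hP) (hg.trans (egirth_anti hle)) ?_
    · intro he
      rw [← he] at hxy
      exact hxy.2.1 hx
    · intro a
      exact (Finset.card_le_card (fun y hy => mem_nb.2 (hle (mem_nb.1 hy)))).trans (hd a)
  by_cases hE : ∃ a b, G.Adj a b
  swap
  · refine ⟨fun _ => ⟨0, by omega⟩, fun u v huv h => ?_⟩
    rcases h.succ with h1 | ⟨c, h1, _⟩
    · exact absurd h1 huv
    · exact absurd ⟨_, _, h1⟩ hE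
  obtain ⟨lev, hL, F2⟩ := exists_lev G K
  have hI : ∀ z : V, (∀ a b, G.Adj z a → G.Adj z b → lev z ≤ lev a → lev z ≤ lev b → a = b) →
      (∃ a, G.Adj z a) → (∀ a b, G.Adj a b → lev a ≤ lev z) →
      ∃ c : V → Fin (1 + (r + 1) * ∑ i ∈ Finset.range (K + 1), r ^ i),
      ∀ u v, u ≠ v → WL G (2 * (K + 1)) u v → c u ≠ c v := by
    intro z hz hiso hmax
    obtain ⟨z0, p, ⟨a, ha⟩, h2, h3⟩ := caseI hL F2 hz hiso hmax
    obtain ⟨c0, hc0⟩ := hdel {z0} ⟨z0, rfl, a, ha⟩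
    refine greedy (WL G (2 * (K + 1))) (fun u v h => h.symm) {z0} (fun _ => 0) ?_ c0 ?_
    · intro x hx
      obtain rfl := Finset.mem_singleton.1 hx
      have hb := ball_card hd K p
      have hm : x ∈ Finset.univ.filter (fun y => WL G (K + 1) p y) :=
        Finset.mem_filter.2 ⟨Finset.mem_univ _, h3 x (WL.refl _ _)⟩
      refine lt_of_lt_of_le ?_ hb
      refine Finset.card_lt_card ⟨?_, ?_⟩
      · intro y hy
        exact Finset.mem_filter.2 ⟨Finset.mem_univ _, h3 y (Finset.mem_filter.1 hy).2.1⟩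
      · intro hsub
        exact (Finset.mem_filter.1 (hsub hm)).2.2.1 rfl
    · intro u v hu hv huv hcf
      rw [Finset.mem_singleton] at hu hv
      exact hc0 u v huv (leaf_pres h2 _ hu hv hcf)
  obtain ⟨z, hz, hzmax⟩ := Finset.exists_max_image (Finset.univ.filter (fun z => ∃ a, G.Adj z a)) lev
    (by obtain ⟨a, b, hab⟩ := hE
        exact ⟨a, Finset.mem_filter.2 ⟨Finset.mem_univ _, b, hab⟩⟩)
  have hziso := (Finset.mem_filter.1 hz).2
  have hmax : ∀ a b, G.Adj a b → lev a ≤ lev z := fun a b hab =>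
    hzmax a (Finset.mem_filter.2 ⟨Finset.mem_univ _, b, hab⟩)
  by_cases hzK : lev z < K
  · exact hI z (fun a b => hL.up z a b hzK) hziso hmax
  have hzK' : lev z = K := le_antisymm (hL.le z) (by omega)
  by_cases hex : ∃ z', (∃ a, G.Adj z' a) ∧ lev z' = K ∧
      ∀ a b, G.Adj z' a → G.Adj z' b → lev z' ≤ lev a → lev z' ≤ lev b → a = b
  · obtain ⟨z', h1, h2, h3⟩ := hex
    exact hI z' h3 h1 (fun a b _ => by rw [h2]; exact hL.le a)
  have htwo : ∀ z', (∃ a, G.Adj z' a) → lev z' = K →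
      ∃ a b, a ≠ b ∧ G.Adj z' a ∧ G.Adj z' b ∧ lev a = K ∧ lev b = K := by
    intro z' h1 h2
    by_contra hno
    refine hex ⟨z', h1, h2, fun a b ha hb hla hlb => ?_⟩
    by_contra hab
    exact hno ⟨a, b, hab, ha, hb, le_antisymm (hL.le a) (by omega), le_antisymm (hL.le b) (by omega)⟩
  let H : SimpleGraph V :=
    { Adj := fun u v => G.Adj u v ∧ lev u = K ∧ lev v = K
      symm := ⟨fun u v h => ⟨h.1.symm, h.2.2, h.2.1⟩⟩
      loopless := ⟨fun u h => G.loopless.irrefl u h.1⟩ }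
  have hHG : H ≤ G := fun _ _ h => h.1
  obtain ⟨v, hv1, hv2⟩ := exists_thread (planar_mono hHG hP) (hg.trans (egirth_anti hHG)) hgl hg0
    (by
      rintro a b ⟨h1, h2, h3⟩
      obtain ⟨c, e, hce, hc, he, hlc, hle⟩ := htwo b ⟨a, h1.symm⟩ h3
      by_cases hca : c = a
      · exact ⟨e, ⟨he, h3, hle⟩, fun hea => hce (hca.trans hea.symm)⟩
      · exact ⟨c, ⟨hc, h3, hlc⟩, hca⟩)
    (by
      obtain ⟨c, e, hce, hc, he, hlc, hle⟩ := htwo z hziso hzK'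
      exact ⟨z, c, hc, hzK', hlc⟩)
  have hT : Thr G K lev (4 * (K + 1) ^ 2) v := by
    refine ⟨?_, fun i hi => (hv1 i hi).1, ?_⟩
    · intro i hi
      rcases Nat.lt_or_ge i (4 * (K + 1) ^ 2 + 1) with h | h
      · exact (hv1 i (by omega)).2.1
      · obtain rfl : i = 4 * (K + 1) ^ 2 + 1 := by omega
        exact (hv1 _ le_rfl).2.2
    · intro i hi w hw
      by_cases hlw : lev w < K
      · exact Or.inl hlw
      · right
        exact (hv2 i hi).2 w ⟨hw, (hv1 i (by omega)).2.2, le_antisymm (hL.le w) (by omega)⟩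
  obtain ⟨A, B, hZ⟩ := exists_Zn K
  have hρ : ∃ ρ : V → ℕ, ∀ s i x, i ≤ 4 * (K + 1) ^ 2 → x ∈ Ds G lev s (v i) → ρ x = s := by
    refine ⟨fun x => sInf {s | ∃ i, i ≤ 4 * (K + 1) ^ 2 ∧ x ∈ Ds G lev s (v i)}, ?_⟩
    intro s i x hi hx
    have hmem : sInf {s | ∃ i, i ≤ 4 * (K + 1) ^ 2 ∧ x ∈ Ds G lev s (v i)} ∈
        {s | ∃ i, i ≤ 4 * (K + 1) ^ 2 ∧ x ∈ Ds G lev s (v i)} := Nat.sInf_mem ⟨s, i, hi, hx⟩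
    obtain ⟨i', hi', hx'⟩ := hmem
    exact Ds_depth hL (hT.top i' (by omega)) (hT.top i (by omega)) hx' hx
  obtain ⟨ρ, hρ⟩ := hρ
  obtain ⟨c0, hc0⟩ := hdel (XS G lev K A B v) ⟨v (A 0), ⟨0, Nat.zero_le _, A 0, le_rfl,
    by have := hZ.len; omega, rfl⟩, v (A 0 + 1), hT.adj _ (by
      have h1 := hZ.len
      have h2 := hZ.hi 0 (Nat.zero_le _)
      omega)⟩
  refine greedy (WL G (2 * (K + 1))) (fun u v h => h.symm)
    (Finset.univ.filter (fun x => x ∈ XS G lev K A B v)) ρ ?_ c0 ?_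
  · intro x hx
    have h1 := XS_count hr hd hL hT (fun i hi => (hv2 i hi).1) hZ ρ hρ (Finset.mem_filter.1 hx).2
    refine lt_of_le_of_lt (Finset.card_le_card ?_) h1
    intro y hy
    obtain ⟨h2, h3, h4⟩ := (Finset.mem_filter.1 hy).2
    exact Finset.mem_filter.2 ⟨Finset.mem_univ _, h2, h3,
      fun h => h4 (Finset.mem_filter.2 ⟨Finset.mem_univ _, h⟩)⟩
  · intro a b ha hb hab hcf
    exact hc0 a b hab (XS_pres hL hT hZ _ le_rfl
      (fun h => ha (Finset.mem_filter.2 ⟨Finset.mem_univ _, h⟩))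
      (fun h => hb (Finset.mem_filter.2 ⟨Finset.mem_univ _, h⟩)) hcf)

lemma taueven_eq (K r : ℕ) (hr : 3 ≤ r) :
    taueven (2 * (K + 1)) (r + 1) = 1 + (r + 1) * ∑ i ∈ Finset.range (K + 1), r ^ i := by
  obtain ⟨q, rfl⟩ : ∃ q, r = q + 1 := ⟨r - 1, by omega⟩
  have h5 : q * ∑ i ∈ Finset.range (K + 1), (q + 1) ^ i + 1 = (q + 1) ^ (K + 1) := by
    have := mul_geom_sum (q + 1 : ℤ) (K + 1)
    have h5 : ((q : ℤ)) * ∑ i ∈ Finset.range (K + 1), (q + 1 : ℤ) ^ i + 1 = (q + 1) ^ (K + 1) := by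
      linear_combination this
    exact_mod_cast h5
  unfold taueven
  rw [Nat.mul_div_cancel_left _ (by norm_num), show q + 1 + 1 - 1 = q + 1 by omega,
    show q + 1 + 1 - 2 = q by omega, ← h5]
  refine Nat.div_eq_of_eq_mul_right (by omega) ?_
  generalize ∑ i ∈ Finset.range (K + 1), (q + 1) ^ i = S
  have : (q + 1 + 1) * (q * S + 1) = q * (1 + (q + 1 + 1) * S) + 2 := by ring
  omega

end SCx

theorem stmt_18 {V : Type*} [Fintype V] (G : SimpleGraph V) [DecidableRel G.Adj]
    (t d : ℕ) (ht : Even t) (ht2 : 2 ≤ t) (hd : 4 ≤ d) (hplanar : IsPlanar G)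
    (hgirth : ((6 * (t ^ 2 + t - 2) : ℕ) : ℕ∞) ≤ G.egirth) (hdeg : ∀ v, G.degree v ≤ d) :
    DistVertexColorable G t (taueven t d) := by
  obtain ⟨k, hk⟩ := ht
  obtain ⟨K, rfl⟩ : ∃ K, t = 2 * (K + 1) := ⟨k - 1, by omega⟩
  obtain ⟨r, rfl⟩ : ∃ r, d = r + 1 := ⟨d - 1, by omega⟩
  rw [SCx.taueven_eq K r (by omega)]
  have h1 : 4 * (K + 1) ^ 2 ≤ (2 * (K + 1)) ^ 2 + 2 * (K + 1) - 2 := by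
    have : (2 * (K + 1)) ^ 2 = 4 * (K + 1) ^ 2 := by ring
    omega
  have h2 : 0 < (K + 1) ^ 2 := by positivity
  obtain ⟨c, hc⟩ := SCx.main_col (K := K) (r := r) (by omega) (by omega)
    (Nat.mul_le_mul_left 6 h1) G hplanar hgirth (by
      intro a
      refine le_trans (le_of_eq ?_) (hdeg a)
      rw [← G.card_neighborFinset_eq_degree]
      congr 1
      ext x
      rw [SCx.mem_nb, mem_neighborFinset])
  refine ⟨c, fun u v huv he => hc u v huv ?_⟩
  obtain ⟨p, hp⟩ := exists_walk_of_edist_ne_top (ne_top_of_le_ne_top (ENat.coe_ne_top _) he)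
  rw [← hp] at he
  exact ⟨p, by exact_mod_cast he⟩
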